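/- Let H > 0, let Ω ⊆ ℝ² be an open connected set, and let (u_n) be a sequence of solutions of (CMC) on Ω. If P ∈ Ω does not belong to the convergence domain B(u_n), then there exists a unit vector N ∈ ℝ² such that, with z₀ = P + N/(2H), the connected component C of {Q : |Q − z₀| = 1/(2H)} ∩ Ω containing P is a divergence line of (u_n). In particular, the complement Ω \ B(u_n) is a union of arcs of circles of radius 1/(2H). -/

import Mathlib

/-!
Throughout, `W = √(1 + |∇u|²)` and `X = ∇u / W`, so that the CMC equation reads `div X = 2H`, and
the horizontal part of the upward normal is `-X`. The theorem rests on two estimates that are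
uniform in the solution `u`, obtained from one adapted system of coordinates.

**Coordinates.** With `a = 1 + 2H (u - u(P))`, the CMC equation says exactly that the rows of
`m = (a + 1/W) I + ∇u ⊗ ∇u / W` are closed, so `m` is the Jacobian of a map `T` (`exists_T`).
Integrating `x' = m(x)⁻¹ ζ` from `P` inverts `T` on a disc whose radius depends only on `H` and the
distance from `P` to the boundary (`exists_chart`). In this chart the pairs `(∂_y u, Y₁)` and
`(∂_x u, -Y₂)`, where `Y = X - 2H (x - P)`, satisfy a weighted quasi-conformality condition
(`PairAt`, `Chart.pairs`).

**Modulus of continuity.** In logarithmic polar coordinates `∮ f dG` has derivative `∮ {f, G}`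
(`null_lagrangian`), which dominates the square of `∮ |∇f| / W` and hence that of `∮ f dG` itself.
A Riccati comparison (`exists_small_deriv`) therefore yields a circle, of radius bounded below, on
which `∮ |∇f| / W` is small (`exists_good_circle`), in the manner of Courant and Lebesgue. A maximum
principle (`max_polar`) carries the oscillation bound inside: near the centre of the chart, `∇u`
oscillates by at most `ε W(P)` and `Y` by at most `ε / W(P)` (`chart_osc`).

**Two uniform estimates.** First, if `W(Q) ≤ m` then `W ≤ 2m` on a ball about `Q` of controlled
radius (`bounded_near`). Secondly, through any point `P` there runs a curve of controlled length,
nearly orthogonal to `∇u(P)`, on which `W ≥ W(P) / 2` and `X - 2H (x - P)` equals `X(P)` up to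
`1 / W(P)` (`sheet`). Since `|X|² = 1 - 1/W²`, when `W(P)` is large this curve, the sheet through
`P`, is close to the circle `|X(P) + 2H (x - P)| = 1`.

**Propagation.** Let `E` be a unit vector close to `X(P)`, with `W(P)` large, and let `Q` be a point
near `P` of the circle `|E + 2H (x - P)| = 1`. Then `W(Q)` is large, for otherwise `bounded_near`
contradicts the steepness of the nearby sheet through `P` (`large_grad`). If `X(Q)` were at distance
exactly `δ` from the expected value `E + 2H (Q - P)`, the sheets through `P` and `Q` would meet
transversally (`sheets_cross`), and comparing the two expressions of `X` at the intersection would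
give `X(Q) ≈ E + 2H (Q - P)`, a contradiction (`local_prop`). By the intermediate value theorem along
the arc from `P` to `Q`, convergence of `X` to `E` at `P` forces convergence to the expected value at
`Q` (`propagate`). Finally, compactness gives a subsequence for which `X(P)` converges to a unit
vector (`exists_subseq`), and the points of the component at which convergence holds form a
relatively clopen set.
-/


open Real MeasureTheory Filter Set

noncomputable section

/-- Euclidean norm on `ℝ × ℝ`. -/
def enorm2 (p : ℝ × ℝ) : ℝ := Real.sqrt (p.1 ^ 2 + p.2 ^ 2)

/-- Partial derivative in the `x` direction. -/
def pdx (u : ℝ × ℝ → ℝ) (p : ℝ × ℝ) : ℝ := fderiv ℝ u p (1, 0)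

/-- Partial derivative in the `y` direction. -/
def pdy (u : ℝ × ℝ → ℝ) (p : ℝ × ℝ) : ℝ := fderiv ℝ u p (0, 1)

/-- The area element `W_u = √(1 + |∇u|²)`. -/
def Wgraph (u : ℝ × ℝ → ℝ) (p : ℝ × ℝ) : ℝ :=
  Real.sqrt (1 + (pdx u p) ^ 2 + (pdy u p) ^ 2)

/-- Upward unit normal of the graph of `u`. -/
def normalVec (u : ℝ × ℝ → ℝ) (p : ℝ × ℝ) : ℝ × ℝ × ℝ :=
  (-pdx u p / Wgraph u p, -pdy u p / Wgraph u p, 1 / Wgraph u p)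

/-- `u` is a (C²) solution of the constant mean curvature `H` equation on `Ω`. -/
def IsCMCSolution (H : ℝ) (Ω : Set (ℝ × ℝ)) (u : ℝ × ℝ → ℝ) : Prop :=
  ContDiffOn ℝ 2 u Ω ∧ ∀ p ∈ Ω,
    (1 + (pdy u p) ^ 2) * pdx (fun q => pdx u q) p
      - 2 * (pdx u p) * (pdy u p) * pdy (fun q => pdx u q) p
      + (1 + (pdx u p) ^ 2) * pdy (fun q => pdy u q) p
    = 2 * H * (1 + (pdx u p) ^ 2 + (pdy u p) ^ 2) ^ ((3 : ℝ) / 2)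

/-- `C` is a divergence line of the sequence `u` on `Ω`. -/
def IsDivergenceLine (H : ℝ) (Ω : Set (ℝ × ℝ)) (u : ℕ → ℝ × ℝ → ℝ)
    (C : Set (ℝ × ℝ)) : Prop :=
  ∃ z₁ : ℝ × ℝ, C ⊆ Ω ∧ (∀ q ∈ C, enorm2 (q - z₁) = 1 / (2 * H)) ∧
    IsConnected C ∧ C.Nontrivial ∧
    ∃ φ : ℕ → ℕ, StrictMono φ ∧ ∀ Q ∈ C,
      Tendsto (fun n => normalVec (u (φ n)) Q) atTop
        (nhds (2 * H * (z₁.1 - Q.1), 2 * H * (z₁.2 - Q.2), 0))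

/-! ### Gradient, area element and the second order equation -/

/-- The linear form `(x, y) ↦ a x + b y`. -/
def lin1 (a b : ℝ) : ℝ × ℝ →L[ℝ] ℝ :=
  a • ContinuousLinearMap.fst ℝ ℝ ℝ + b • ContinuousLinearMap.snd ℝ ℝ ℝ

@[simp] lemma lin1_apply (a b : ℝ) (v : ℝ × ℝ) : lin1 a b v = a * v.1 + b * v.2 := by
  simp [lin1]

lemma clm_eq_lin1 (L : ℝ × ℝ →L[ℝ] ℝ) : L = lin1 (L (1, 0)) (L (0, 1)) := by
  ext <;> simp

lemma pdx_of {f : ℝ × ℝ → ℝ} {a b : ℝ} {x : ℝ × ℝ} (h : HasFDerivAt f (lin1 a b) x) :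
    pdx f x = a := by simp [pdx, h.fderiv]

lemma pdy_of {f : ℝ × ℝ → ℝ} {a b : ℝ} {x : ℝ × ℝ} (h : HasFDerivAt f (lin1 a b) x) :
    pdy f x = b := by simp [pdy, h.fderiv]

lemma hasFDerivAt_pd {f : ℝ × ℝ → ℝ} {x : ℝ × ℝ} (h : DifferentiableAt ℝ f x) :
    HasFDerivAt f (lin1 (pdx f x) (pdy f x)) x := by
  have := h.hasFDerivAt
  rwa [clm_eq_lin1 (fderiv ℝ f x)] at this

lemma Wgraph_sq (u : ℝ × ℝ → ℝ) (x : ℝ × ℝ) :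
    Wgraph u x ^ 2 = 1 + pdx u x ^ 2 + pdy u x ^ 2 := by
  rw [Wgraph, Real.sq_sqrt (by positivity)]

lemma one_le_Wgraph (u : ℝ × ℝ → ℝ) (x : ℝ × ℝ) : 1 ≤ Wgraph u x := by
  rw [Wgraph]; apply Real.one_le_sqrt.2; nlinarith [sq_nonneg (pdx u x), sq_nonneg (pdy u x)]

lemma Wgraph_pos (u : ℝ × ℝ → ℝ) (x : ℝ × ℝ) : 0 < Wgraph u x :=
  lt_of_lt_of_le one_pos (one_le_Wgraph u x)

section cmc
variable {H : ℝ} {Ω : Set (ℝ × ℝ)} {u : ℝ × ℝ → ℝ}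

lemma IsCMCSolution.contDiffOn_pd (hΩ : IsOpen Ω) (hu : IsCMCSolution H Ω u) :
    ContDiffOn ℝ 1 (pdx u) Ω ∧ ContDiffOn ℝ 1 (pdy u) Ω := by
  have h := hu.1.fderiv_of_isOpen (m := 1) hΩ (by norm_num)
  exact ⟨h.clm_apply contDiffOn_const, h.clm_apply contDiffOn_const⟩

lemma IsCMCSolution.second (hΩ : IsOpen Ω) (hu : IsCMCSolution H Ω u) {x : ℝ × ℝ} (hx : x ∈ Ω) :
    HasFDerivAt u (lin1 (pdx u x) (pdy u x)) x ∧
    ∃ r s t : ℝ, HasFDerivAt (pdx u) (lin1 r s) x ∧ HasFDerivAt (pdy u) (lin1 s t) x ∧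
      (1 + pdy u x ^ 2) * r - 2 * pdx u x * pdy u x * s + (1 + pdx u x ^ 2) * t
        = 2 * H * Wgraph u x ^ 3 := by
  have hn := hΩ.mem_nhds hx
  have h2 : ContDiffAt ℝ 2 u x := hu.1.contDiffAt hn
  have hu1 : DifferentiableAt ℝ u x := h2.differentiableAt (by norm_num)
  obtain ⟨c1, c2⟩ := hu.contDiffOn_pd hΩ
  have d1 : DifferentiableAt ℝ (pdx u) x := (c1.contDiffAt hn).differentiableAt (by norm_num)
  have d2 : DifferentiableAt ℝ (pdy u) x := (c2.contDiffAt hn).differentiableAt (by norm_num)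
  have dd : DifferentiableAt ℝ (fderiv ℝ u) x :=
    (h2.fderiv_right (m := 1) (by norm_num)).differentiableAt (by norm_num)
  have hsymm : IsSymmSndFDerivAt ℝ u x := h2.isSymmSndFDerivAt (by simp)
  have e1 : ∀ w, fderiv ℝ (pdx u) x w = fderiv ℝ (fderiv ℝ u) x w (1, 0) := by
    intro w
    have := (dd.hasFDerivAt.clm_apply (hasFDerivAt_const ((1 : ℝ), (0 : ℝ)) x)).fderiv
    change fderiv ℝ (fun y => fderiv ℝ u y (1, 0)) x w = _
    rw [this]; simp
  have e2 : ∀ w, fderiv ℝ (pdy u) x w = fderiv ℝ (fderiv ℝ u) x w (0, 1) := by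
    intro w
    have := (dd.hasFDerivAt.clm_apply (hasFDerivAt_const ((0 : ℝ), (1 : ℝ)) x)).fderiv
    change fderiv ℝ (fun y => fderiv ℝ u y (0, 1)) x w = _
    rw [this]; simp
  have es : pdx (pdy u) x = pdy (pdx u) x := by
    change fderiv ℝ (pdy u) x (1, 0) = fderiv ℝ (pdx u) x (0, 1)
    rw [e2, e1]
    exact hsymm _ _
  refine ⟨hasFDerivAt_pd hu1, pdx (pdx u) x, pdy (pdx u) x, pdy (pdy u) x,
    hasFDerivAt_pd d1, ?_, ?_⟩
  · rw [← es]; exact hasFDerivAt_pd d2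
  · have := hu.2 x hx
    have hw : (1 + pdx u x ^ 2 + pdy u x ^ 2) ^ ((3 : ℝ) / 2) = Wgraph u x ^ 3 := by
      have h0 : 0 ≤ 1 + pdx u x ^ 2 + pdy u x ^ 2 := by positivity
      rw [Wgraph, Real.sqrt_eq_rpow]
      generalize 1 + pdx u x ^ 2 + pdy u x ^ 2 = z at h0
      rw [← Real.rpow_natCast _ 3, ← Real.rpow_mul h0]
      norm_num
    rw [hw] at this
    exact this

end cmc

/-! ### Calculus with explicit gradients, and the map `T` -/

lemma HasFDerivAt.lin1_congr {f : ℝ × ℝ → ℝ} {a b a' b' : ℝ} {x : ℝ × ℝ}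
    (h : HasFDerivAt f (lin1 a b) x) (ha : a = a') (hb : b = b') :
    HasFDerivAt f (lin1 a' b') x := ha ▸ hb ▸ h

section lincalc
variable {f g : ℝ × ℝ → ℝ} {a b c d : ℝ} {x : ℝ × ℝ}

lemma hl_const (k : ℝ) (x : ℝ × ℝ) : HasFDerivAt (fun _ : ℝ × ℝ => k) (lin1 0 0) x := by
  exact (hasFDerivAt_const k x).congr_fderiv (by ext <;> simp)

lemma hl_fst (x : ℝ × ℝ) : HasFDerivAt (fun y : ℝ × ℝ => y.1) (lin1 1 0) x := by
  exact (hasFDerivAt_fst (𝕜 := ℝ) (p := x)).congr_fderiv (by ext <;> simp)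

lemma hl_snd (x : ℝ × ℝ) : HasFDerivAt (fun y : ℝ × ℝ => y.2) (lin1 0 1) x := by
  exact (hasFDerivAt_snd (𝕜 := ℝ) (p := x)).congr_fderiv (by ext <;> simp)

lemma hl_add (hf : HasFDerivAt f (lin1 a b) x) (hg : HasFDerivAt g (lin1 c d) x) :
    HasFDerivAt (fun y => f y + g y) (lin1 (a + c) (b + d)) x := by
  exact (hf.add hg).congr_fderiv (by ext <;> simp)

lemma hl_sub (hf : HasFDerivAt f (lin1 a b) x) (hg : HasFDerivAt g (lin1 c d) x) :
    HasFDerivAt (fun y => f y - g y) (lin1 (a - c) (b - d)) x := by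
  exact (hf.sub hg).congr_fderiv (by ext <;> simp)

lemma hl_smul (k : ℝ) (hf : HasFDerivAt f (lin1 a b) x) :
    HasFDerivAt (fun y => k * f y) (lin1 (k * a) (k * b)) x := by
  exact (hf.const_mul k).congr_fderiv (by ext <;> simp)

lemma hl_mul (hf : HasFDerivAt f (lin1 a b) x) (hg : HasFDerivAt g (lin1 c d) x) :
    HasFDerivAt (fun y => f y * g y) (lin1 (f x * c + g x * a) (f x * d + g x * b)) x := by
  exact (hf.mul hg).congr_fderiv (by ext <;> simp)

lemma hl_scomp {φ : ℝ → ℝ} {φ' : ℝ} (hφ : HasDerivAt φ φ' (f x)) (hf : HasFDerivAt f (lin1 a b) x) :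
    HasFDerivAt (fun y => φ (f y)) (lin1 (φ' * a) (φ' * b)) x := by
  exact (hφ.comp_hasFDerivAt x hf).congr_fderiv (by ext <;> simp)

lemma hl_div (hf : HasFDerivAt f (lin1 a b) x) (hg : HasFDerivAt g (lin1 c d) x)
    (h0 : g x ≠ 0) :
    HasFDerivAt (fun y => f y / g y)
      (lin1 ((a * g x - f x * c) / g x ^ 2) ((b * g x - f x * d) / g x ^ 2)) x := by
  have h1 := hl_scomp (hasDerivAt_inv h0) hg
  have h2 := hl_mul hf h1
  simp only [div_eq_mul_inv]
  exact h2.lin1_congr (by field_simp; ring) (by field_simp; ring)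

lemma hl_sqrt (hf : HasFDerivAt f (lin1 a b) x) (h0 : f x ≠ 0) :
    HasFDerivAt (fun y => √(f y)) (lin1 (a / (2 * √(f x))) (b / (2 * √(f x)))) x := by
  exact (hf.sqrt h0).congr_fderiv (by ext <;> simp <;> ring)

/-- Chain rule through a map of the plane with explicit Jacobian. -/
lemma hl_comp {a' b' c' d' : ℝ} {S : ℝ × ℝ → ℝ × ℝ}
    (hf : HasFDerivAt f (lin1 a b) (S x))
    (hS : HasFDerivAt S ((lin1 a' b').prod (lin1 c' d')) x) :
    HasFDerivAt (fun y => f (S y)) (lin1 (a * a' + b * c') (a * b' + b * d')) x := by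
  exact (hf.comp x hS).congr_fderiv (by ext <;> simp)

end lincalc

/-- Poincaré lemma in the plane, in coordinates. -/
lemma exists_primitive {s : Set (ℝ × ℝ)} (hs : Convex ℝ s) (hso : IsOpen s) (A B : ℝ × ℝ → ℝ)
    (h : ∀ x ∈ s, ∃ a k b : ℝ, HasFDerivAt A (lin1 a k) x ∧ HasFDerivAt B (lin1 k b) x) :
    ∃ f : ℝ × ℝ → ℝ, ∀ x ∈ s, HasFDerivAt f (lin1 (A x) (B x)) x := by
  have key : ∀ x ∈ s, ∃ a k b : ℝ, HasFDerivAt (fun y => lin1 (A y) (B y))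
      ((lin1 a k).smulRight (ContinuousLinearMap.fst ℝ ℝ ℝ)
        + (lin1 k b).smulRight (ContinuousLinearMap.snd ℝ ℝ ℝ)) x := by
    intro x hx
    obtain ⟨a, k, b, h1, h2⟩ := h x hx
    refine ⟨a, k, b, ?_⟩
    exact (h1.smul_const (ContinuousLinearMap.fst ℝ ℝ ℝ)).add
      (h2.smul_const (ContinuousLinearMap.snd ℝ ℝ ℝ))
  refine hs.exists_forall_hasFDerivAt_of_fderiv_symmetric hso (fun x hx => ?_) ?_
  · obtain ⟨a, k, b, h1⟩ := key x hx
    exact h1.differentiableAt.differentiableWithinAt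
  · intro x hx v w
    obtain ⟨a, k, b, h1⟩ := key x hx
    rw [h1.fderiv]; simp; ring

section cmc
variable {H : ℝ} {Ω : Set (ℝ × ℝ)} {u : ℝ × ℝ → ℝ}

lemma hasFDerivAt_Wgraph {x : ℝ × ℝ} {r s t : ℝ} (h1 : HasFDerivAt (pdx u) (lin1 r s) x)
    (h2 : HasFDerivAt (pdy u) (lin1 s t) x) :
    HasFDerivAt (Wgraph u) (lin1 ((pdx u x * r + pdy u x * s) / Wgraph u x)
      ((pdx u x * s + pdy u x * t) / Wgraph u x)) x := by
  have h := hl_sqrt (hl_add (hl_add (hl_const 1 x) (hl_mul h1 h1)) (hl_mul h2 h2))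
    (by nlinarith [mul_self_nonneg (pdx u x), mul_self_nonneg (pdy u x)])
  have e : Wgraph u = fun y => √(1 + pdx u y * pdx u y + pdy u y * pdy u y) := by
    ext y; simp [Wgraph, sq]
  have e' : √(1 + pdx u x * pdx u x + pdy u x * pdy u x) = Wgraph u x := by rw [e]
  rw [e'] at h
  rw [e]
  have := Wgraph_pos u x
  refine h.lin1_congr ?_ ?_ <;> · rw [← e]; field_simp; ring

/-- The matrix field `m = a I + (I + ∇u ⊗ ∇u) / W`, with `a = 1 + 2H (u - c)`, is a Jacobian:
closedness of its two rows amounts to the CMC equation multiplied by `∂_y u` and by `-∂_x u`. -/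
lemma exists_T (hΩ : IsOpen Ω) (hu : IsCMCSolution H Ω u) {s : Set (ℝ × ℝ)} (hs : Convex ℝ s)
    (hso : IsOpen s) (hsΩ : s ⊆ Ω) (c : ℝ) :
    ∃ T : ℝ × ℝ → ℝ × ℝ, ∀ x ∈ s, HasFDerivAt T
      ((lin1 (1 + 2 * H * (u x - c) + (1 + pdx u x ^ 2) / Wgraph u x)
          (pdx u x * pdy u x / Wgraph u x)).prod
        (lin1 (pdx u x * pdy u x / Wgraph u x)
          (1 + 2 * H * (u x - c) + (1 + pdy u x ^ 2) / Wgraph u x))) x := by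
  obtain ⟨T1, hT1⟩ := exists_primitive hs hso
    (fun x => 1 + 2 * H * (u x - c) + (1 + pdx u x * pdx u x) / Wgraph u x)
    (fun x => pdx u x * pdy u x / Wgraph u x) (by
      intro x hx
      obtain ⟨h0, r, s, t, h1, h2, hE⟩ := hu.second hΩ (hsΩ hx)
      have hW := hasFDerivAt_Wgraph h1 h2
      have hW0 := (Wgraph_pos u x).ne'
      have hWs := Wgraph_sq u x
      have A := hl_add (hl_add (hl_const 1 x) (hl_smul (2 * H) (hl_sub h0 (hl_const c x))))
        (hl_div (hl_add (hl_const 1 x) (hl_mul h1 h1)) hW hW0)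
      have B := hl_div (hl_mul h1 h2) hW hW0
      refine ⟨_, _, _, A, B.lin1_congr ?_ rfl⟩
      field_simp
      linear_combination (pdy u x) * hE - (pdx u x * s - pdy u x * r) * hWs)
  obtain ⟨T2, hT2⟩ := exists_primitive hs hso
    (fun x => pdx u x * pdy u x / Wgraph u x)
    (fun x => 1 + 2 * H * (u x - c) + (1 + pdy u x * pdy u x) / Wgraph u x) (by
      intro x hx
      obtain ⟨h0, r, s, t, h1, h2, hE⟩ := hu.second hΩ (hsΩ hx)
      have hW := hasFDerivAt_Wgraph h1 h2
      have hW0 := (Wgraph_pos u x).ne'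
      have hWs := Wgraph_sq u x
      have A := hl_add (hl_add (hl_const 1 x) (hl_smul (2 * H) (hl_sub h0 (hl_const c x))))
        (hl_div (hl_add (hl_const 1 x) (hl_mul h2 h2)) hW hW0)
      have B := hl_div (hl_mul h1 h2) hW hW0
      refine ⟨_, _, _, B, A.lin1_congr ?_ rfl⟩
      field_simp
      linear_combination (-pdx u x) * hE + (pdy u x * s - pdx u x * t) * hWs)
  refine ⟨fun x => (T1 x, T2 x), fun x hx => ?_⟩
  have := (hT1 x hx).prodMk (hT2 x hx)
  simpa only [sq] using this

end cmc

/-! ### Flows depending on a parameter -/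

lemma lipschitzOn_of_contDiffOn {E F : Type*} [NormedAddCommGroup E] [NormedSpace ℝ E]
    [NormedAddCommGroup F] [NormedSpace ℝ F] {V : E → F} {U K : Set E} (hU : IsOpen U)
    (hV : ContDiffOn ℝ 1 V U) (hKU : K ⊆ U) (hK : IsCompact K) (hc : Convex ℝ K) :
    ∃ C : NNReal, LipschitzOnWith C V K := by
  have hcont : ContinuousOn (fun x => ‖fderiv ℝ V x‖₊) K :=
    ((hV.continuousOn_fderiv_of_isOpen hU le_rfl).mono hKU).nnnorm
  obtain ⟨C, hC⟩ := (hK.image_of_continuousOn hcont).bddAbove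
  refine ⟨C, hc.lipschitzOnWith_of_nnnorm_fderiv_le (𝕜 := ℝ) (fun x hx => ?_) (fun x hx => ?_)⟩
  · exact (hV.contDiffAt (hU.mem_nhds (hKU hx))).differentiableAt (by norm_num)
  · exact hC ⟨x, hx, rfl⟩

/-- Picard–Lindelöf on `[0, 1]`, keeping track of the ball containing the solution. -/
lemma exists_flow {E : Type*} [NormedAddCommGroup E] [NormedSpace ℝ E] [CompleteSpace E]
    {V : E → E} {x₀ : E} {R : ℝ} (hR : 0 ≤ R) {K : NNReal}
    (hL : LipschitzOnWith K V (Metric.closedBall x₀ R))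
    (hV : ∀ x ∈ Metric.closedBall x₀ R, ‖V x‖ ≤ R) :
    ∃ γ : ℝ → E, γ 0 = x₀ ∧ ∀ t ∈ Icc (0 : ℝ) 1, γ t ∈ Metric.closedBall x₀ R ∧
      HasDerivWithinAt γ (V (γ t)) (Icc 0 1) t := by
  lift R to NNReal using hR
  have hf : IsPicardLindelof (fun _ => V) (⟨0, by simp⟩ : Icc (0 : ℝ) 1) x₀ R 0 R K :=
    { lipschitzOnWith := fun _ _ => hL
      continuousOn := fun _ _ => continuousOn_const
      norm_le := fun _ _ x hx => hV x hx
      mul_max_le := by simp }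
  obtain ⟨α, hα⟩ := ODE.FunSpace.exists_isFixedPt_next hf (Metric.mem_closedBall_self le_rfl)
  refine ⟨α.compProj, ?_, fun t ht ↦ ⟨α.compProj_mem_closedBall hf.mul_max_le, ?_⟩⟩
  · have := ODE.FunSpace.compProj_val (α := α) (t := (⟨0, by simp⟩ : Icc (0 : ℝ) 1))
    rw [← hα, ODE.FunSpace.next_apply₀] at this
    rw [hα] at this
    exact this
  · apply ODE.hasDerivWithinAt_picard_Icc (t₀ := 0) (by simp) hf.continuousOn_uncurry
      α.continuous_compProj.continuousOn (fun _ ht' ↦ α.compProj_mem_closedBall hf.mul_max_le)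
      x₀ ht |>.congr_of_mem _ ht
    intro t' ht'
    nth_rw 1 [← hα]
    rw [ODE.FunSpace.compProj_of_mem ht', ODE.FunSpace.next_apply]

/-- A field `V x ζ` of size at most `R` has integral curves from `P` on `[0, 1]` inside the ball of
radius `R`, with endpoint depending continuously on the parameter `ζ`. -/
lemma exists_flow_param {V : ℝ × ℝ → ℝ × ℝ → ℝ × ℝ} {P : ℝ × ℝ} {U : Set ((ℝ × ℝ) × (ℝ × ℝ))}
    (hU : IsOpen U) {ρ R : ℝ} (hR : 0 ≤ R)
    (hVU : ContDiffOn ℝ 1 (fun z : (ℝ × ℝ) × (ℝ × ℝ) => V z.1 z.2) U)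
    (hsub : Metric.closedBall P R ×ˢ Metric.closedBall 0 ρ ⊆ U)
    (hV : ∀ x ∈ Metric.closedBall P R, ∀ ζ ∈ Metric.closedBall (0 : ℝ × ℝ) ρ, ‖V x ζ‖ ≤ R) :
    ∃ X : ℝ × ℝ → ℝ → ℝ × ℝ, (∀ ζ ∈ Metric.closedBall (0 : ℝ × ℝ) ρ, X ζ 0 = P ∧
      ∀ t ∈ Icc (0 : ℝ) 1, X ζ t ∈ Metric.closedBall P R ∧
        HasDerivWithinAt (X ζ) (V (X ζ t) ζ) (Icc 0 1) t) ∧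
      ContinuousOn (fun ζ => X ζ 1) (Metric.closedBall 0 ρ) := by
  obtain ⟨K, hK⟩ := lipschitzOn_of_contDiffOn hU hVU hsub
    ((isCompact_closedBall P R).prod (isCompact_closedBall 0 ρ))
    ((convex_closedBall P R).prod (convex_closedBall 0 ρ))
  have hL : ∀ ζ ∈ Metric.closedBall (0 : ℝ × ℝ) ρ,
      LipschitzOnWith K (fun x => V x ζ) (Metric.closedBall P R) := by
    intro ζ hζ
    refine LipschitzOnWith.of_dist_le_mul fun x hx y hy => ?_
    have := hK.dist_le_mul (x, ζ) ⟨hx, hζ⟩ (y, ζ) ⟨hy, hζ⟩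
    simpa [Prod.dist_eq] using this
  have hex : ∀ ζ : ℝ × ℝ, ∃ γ : ℝ → ℝ × ℝ, ζ ∈ Metric.closedBall (0 : ℝ × ℝ) ρ →
      γ 0 = P ∧ ∀ t ∈ Icc (0 : ℝ) 1, γ t ∈ Metric.closedBall P R ∧
      HasDerivWithinAt γ (V (γ t) ζ) (Icc 0 1) t := by
    intro ζ
    by_cases hζ : ζ ∈ Metric.closedBall (0 : ℝ × ℝ) ρ
    · obtain ⟨γ, h⟩ := exists_flow hR (hL ζ hζ) (fun x hx => hV x hx ζ hζ)
      exact ⟨γ, fun _ => h⟩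
    · exact ⟨0, fun h => absurd h hζ⟩
  choose X hX using hex
  refine ⟨X, hX, ?_⟩
  intro ζ hζ
  have hder : ∀ ζ ∈ Metric.closedBall (0 : ℝ × ℝ) ρ, ∀ t ∈ Ico (0 : ℝ) 1,
      HasDerivWithinAt (X ζ) (V (X ζ t) ζ) (Ici t) t := by
    intro ζ hζ t ht
    refine ((hX ζ hζ).2 t ⟨ht.1, ht.2.le⟩).2.mono_of_mem_nhdsWithin ?_
    exact mem_of_superset (Icc_mem_nhdsGE ht.2) (Icc_subset_Icc_left ht.1)
  have hbd : ∀ ζ' ∈ Metric.closedBall (0 : ℝ × ℝ) ρ,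
      dist (X ζ' 1) (X ζ 1) ≤ gronwallBound 0 K (K * dist ζ' ζ) 1 := by
    intro ζ' hζ'
    have := dist_le_of_approx_trajectories_ODE_of_mem (v := fun _ x => V x ζ) (K := K)
      (s := fun _ => Metric.closedBall P R) (f := X ζ') (g := X ζ)
      (f' := fun t => V (X ζ' t) ζ') (g' := fun t => V (X ζ t) ζ) (a := 0) (b := 1)
      (εf := K * dist ζ' ζ) (εg := 0) (δ := 0)
      (fun t _ => hL ζ hζ)
      (fun t ht => ((hX ζ' hζ').2 t ht).2.continuousWithinAt) (hder ζ' hζ')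
      (fun t ht => by
        have hm := ((hX ζ' hζ').2 t ⟨ht.1, ht.2.le⟩).1
        have := hK.dist_le_mul (X ζ' t, ζ') ⟨hm, hζ'⟩ (X ζ' t, ζ) ⟨hm, hζ⟩
        simpa [Prod.dist_eq] using this)
      (fun t ht => ((hX ζ' hζ').2 t ⟨ht.1, ht.2.le⟩).1)
      (fun t ht => ((hX ζ hζ).2 t ht).2.continuousWithinAt) (hder ζ hζ)
      (fun t ht => by simp)
      (fun t ht => ((hX ζ hζ).2 t ⟨ht.1, ht.2.le⟩).1)
      (by rw [(hX ζ' hζ').1, (hX ζ hζ).1, dist_self]) 1 (by simp)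
    simpa using this
  rw [ContinuousWithinAt, tendsto_iff_dist_tendsto_zero]
  have hlim : Tendsto (fun ζ' => gronwallBound 0 K (K * dist ζ' ζ) 1)
      (nhdsWithin ζ (Metric.closedBall 0 ρ)) (nhds 0) := by
    have hc : Continuous fun ζ' : ℝ × ℝ => gronwallBound 0 K (K * dist ζ' ζ) 1 :=
      (gronwallBound_continuous_ε 0 K 1).comp (by fun_prop)
    have := (hc.tendsto ζ).mono_left (nhdsWithin_le_nhds (s := Metric.closedBall 0 ρ))
    simpa [gronwallBound_ε0_δ0] using this
  refine squeeze_zero' (Eventually.of_forall fun _ => dist_nonneg) ?_ hlim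
  filter_upwards [self_mem_nhdsWithin] with ζ' hζ' using hbd ζ' hζ'

/-! ### The inverse Jacobian -/

/-- Smooth truncation from below: equal to the identity on `[3/4, ∞)` and at least `1/2`. -/
def trunc (a : ℝ) : ℝ := 1 / 2 + (a - 1 / 2) * Real.smoothTransition (4 * a - 2)

lemma trunc_contDiff : ContDiff ℝ 1 trunc := by
  unfold trunc
  have : ContDiff ℝ 1 Real.smoothTransition := Real.smoothTransition.contDiff (n := 1)
  fun_prop

lemma trunc_eq {a : ℝ} (h : 3 / 4 ≤ a) : trunc a = a := by
  rw [trunc, Real.smoothTransition.one_of_one_le (by linarith)]; ring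

lemma half_le_trunc (a : ℝ) : 1 / 2 ≤ trunc a := by
  rw [trunc]
  rcases le_total a (1 / 2) with h | h
  · rw [Real.smoothTransition.zero_of_nonpos (by linarith)]; simp
  · have := mul_nonneg (sub_nonneg.2 h) (Real.smoothTransition.nonneg (4 * a - 2))
    linarith

/-- The vector `m⁻¹ ζ`, where `m = (a + 1/W) I + (p, q) ⊗ (p, q) / W`. -/
def invField (a p q W : ℝ) (ζ : ℝ × ℝ) : ℝ × ℝ :=
  (((a + (1 + q ^ 2) / W) * ζ.1 - p * q / W * ζ.2) / ((a + W) * (a + 1 / W)),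
    (-(p * q / W) * ζ.1 + (a + (1 + p ^ 2) / W) * ζ.2) / ((a + W) * (a + 1 / W)))

section alg
variable {a p q W : ℝ}

lemma det_m (hW : W ^ 2 = 1 + p ^ 2 + q ^ 2) (hW1 : 1 ≤ W) :
    (a + (1 + p ^ 2) / W) * (a + (1 + q ^ 2) / W) - (p * q / W) * (p * q / W)
      = (a + W) * (a + 1 / W) := by
  have : W ≠ 0 := by positivity
  field_simp
  linear_combination (-a * W - 1) * hW

lemma invField_dot (hW1 : 1 ≤ W) (ha : 0 < a) (ζ : ℝ × ℝ) :
    p * (invField a p q W ζ).1 + q * (invField a p q W ζ).2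
      = (p * ζ.1 + q * ζ.2) / (a + W) := by
  have h0 : 0 < W := by linarith
  have h1 : 0 < a * W + 1 := by positivity
  simp only [invField]
  field_simp
  ring

lemma invField_eq (hW : W ^ 2 = 1 + p ^ 2 + q ^ 2) (hW1 : 1 ≤ W) (ha : 0 < a) (ζ : ℝ × ℝ) :
    invField a p q W ζ = ((ζ.1 - p * ((p * ζ.1 + q * ζ.2) / (W * (a + W)))) / (a + 1 / W),
      (ζ.2 - q * ((p * ζ.1 + q * ζ.2) / (W * (a + W)))) / (a + 1 / W)) := by
  have h0 : 0 < W := by linarith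
  have h1 : 0 < a * W + 1 := by positivity
  simp only [invField]
  ext
  · simp only; field_simp; linear_combination (-ζ.1) * hW
  · simp only; field_simp; linear_combination (-ζ.2) * hW

lemma invField_sq_le (hW : W ^ 2 = 1 + p ^ 2 + q ^ 2) (hW1 : 1 ≤ W) (ha : 1 / 2 ≤ a)
    (ζ : ℝ × ℝ) :
    (invField a p q W ζ).1 ^ 2 + (invField a p q W ζ).2 ^ 2 ≤ 4 * (ζ.1 ^ 2 + ζ.2 ^ 2) := by
  have h0 : 0 < W := by linarith
  rw [invField_eq hW hW1 (by linarith)]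
  simp only
  set k := 1 / (W * (a + W)) with hk
  set s := p * ζ.1 + q * ζ.2 with hs
  have hk0 : 0 < k := by positivity
  have hkW : (p ^ 2 + q ^ 2) * k ≤ 1 := by
    rw [hk, mul_one_div, div_le_one (by positivity)]; nlinarith
  have e : s / (W * (a + W)) = s * k := by rw [hk]; ring
  rw [e, div_pow, div_pow, ← add_div, div_le_iff₀ (by positivity)]
  have h1W : 0 < 1 / W := by positivity
  have hα : 1 ≤ 4 * (a + 1 / W) ^ 2 := by nlinarith
  have e2 : (ζ.1 - p * (s * k)) ^ 2 + (ζ.2 - q * (s * k)) ^ 2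
      = ζ.1 ^ 2 + ζ.2 ^ 2 - s ^ 2 * k - s ^ 2 * k * (1 - (p ^ 2 + q ^ 2) * k) := by
    rw [hs]; ring
  rw [e2]
  have h2 : 0 ≤ s ^ 2 * k := by positivity
  have h3 : 0 ≤ s ^ 2 * k * (1 - (p ^ 2 + q ^ 2) * k) := mul_nonneg h2 (by linarith)
  nlinarith [mul_nonneg (add_nonneg (sq_nonneg ζ.1) (sq_nonneg ζ.2)) (sub_nonneg.2 hα)]

lemma m_invField (hW : W ^ 2 = 1 + p ^ 2 + q ^ 2) (hW1 : 1 ≤ W) (ha : 0 < a) (ζ : ℝ × ℝ) :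
    ((a + (1 + p ^ 2) / W) * (invField a p q W ζ).1 + p * q / W * (invField a p q W ζ).2 = ζ.1) ∧
    (p * q / W * (invField a p q W ζ).1 + (a + (1 + q ^ 2) / W) * (invField a p q W ζ).2 = ζ.2) := by
  have h0 : 0 < W := by linarith
  have hD : 0 < (a + W) * (a + 1 / W) := by positivity
  have hd := det_m (a := a) hW hW1
  simp only [invField]
  constructor
  · rw [mul_div_assoc', mul_div_assoc', ← add_div, div_eq_iff hD.ne']
    linear_combination ζ.1 * hd
  · rw [mul_div_assoc', mul_div_assoc', ← add_div, div_eq_iff hD.ne']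
    linear_combination ζ.2 * hd

lemma invField_m (hW : W ^ 2 = 1 + p ^ 2 + q ^ 2) (hW1 : 1 ≤ W) (ha : 0 < a) (ζ : ℝ × ℝ) :
    invField a p q W ((a + (1 + p ^ 2) / W) * ζ.1 + p * q / W * ζ.2,
      p * q / W * ζ.1 + (a + (1 + q ^ 2) / W) * ζ.2) = ζ := by
  have h0 : 0 < W := by linarith
  have hD : 0 < (a + W) * (a + 1 / W) := by positivity
  have hd := det_m (a := a) hW hW1
  simp only [invField]
  ext
  · simp only; rw [div_eq_iff hD.ne']; linear_combination ζ.1 * hd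
  · simp only; rw [div_eq_iff hD.ne']; linear_combination ζ.2 * hd

end alg

lemma contDiffOn_one_of_lin1 {U : Set (ℝ × ℝ)} (hU : IsOpen U) {f A B : ℝ × ℝ → ℝ}
    (h : ∀ x ∈ U, HasFDerivAt f (lin1 (A x) (B x)) x) (hA : ContinuousOn A U)
    (hB : ContinuousOn B U) : ContDiffOn ℝ 1 f U := by
  have : ContDiffOn ℝ (0 + 1) f U := by
    rw [contDiffOn_succ_iff_fderiv_of_isOpen hU]
    refine ⟨fun x hx => (h x hx).differentiableAt.differentiableWithinAt, by simp, ?_⟩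
    rw [contDiffOn_zero]
    refine ContinuousOn.congr (f := fun x => lin1 (A x) (B x)) ?_ (fun x hx => (h x hx).fderiv)
    simp only [lin1]
    fun_prop
  simpa using this

/-! ### Charts -/

/-- The function `a = 1 + 2H (u - u(P))`. -/
def aux (H : ℝ) (u : ℝ × ℝ → ℝ) (P x : ℝ × ℝ) : ℝ := 1 + 2 * H * (u x - u P)

/-- A parametrization `S` of a neighbourhood of `P` by the disc of radius `ρ` (in the sup norm of
`ℝ × ℝ`), inverse to the map `T` of `exists_T`: its derivative is `m⁻¹`, in the form of `invField`.
The bound on `a` keeps `m` uniformly positive definite. -/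
structure Chart (H : ℝ) (Ω : Set (ℝ × ℝ)) (u : ℝ × ℝ → ℝ) (P : ℝ × ℝ) (ρ : ℝ)
    (S : ℝ × ℝ → ℝ × ℝ) : Prop where
  zero : S 0 = P
  mem : ∀ ζ ∈ Metric.ball (0 : ℝ × ℝ) ρ, S ζ ∈ Ω
  abs_le : ∀ ζ ∈ Metric.ball (0 : ℝ × ℝ) ρ, |aux H u P (S ζ) - 1| ≤ 1 / 4
  contDiffOn : ContDiffOn ℝ 1 S (Metric.ball 0 ρ)
  deriv : ∀ ζ ∈ Metric.ball (0 : ℝ × ℝ) ρ, ∃ L : ℝ × ℝ →L[ℝ] ℝ × ℝ, HasFDerivAt S L ζ ∧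
    ∀ ξ, L ξ = invField (aux H u P (S ζ)) (pdx u (S ζ)) (pdy u (S ζ)) (Wgraph u (S ζ)) ξ

lemma norm_le_of_sq {v : ℝ × ℝ} {R : ℝ} (hR : 0 ≤ R) (h : v.1 ^ 2 + v.2 ^ 2 ≤ R ^ 2) : ‖v‖ ≤ R := by
  rw [Prod.norm_def]
  refine max_le ?_ ?_
  · exact abs_le_of_sq_le_sq (by nlinarith [sq_nonneg v.2]) hR
  · exact abs_le_of_sq_le_sq (by nlinarith [sq_nonneg v.1]) hR

lemma sq_le_of_norm {v : ℝ × ℝ} {R : ℝ} (h : ‖v‖ ≤ R) : v.1 ^ 2 + v.2 ^ 2 ≤ 2 * R ^ 2 := by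
  have h1 : |v.1| ≤ R := (norm_fst_le v).trans h
  have h2 : |v.2| ≤ R := (norm_snd_le v).trans h
  have := sq_le_sq' (abs_le.1 h1).1 (abs_le.1 h1).2
  have := sq_le_sq' (abs_le.1 h2).1 (abs_le.1 h2).2
  linarith

section
variable {H : ℝ} {Ω : Set (ℝ × ℝ)} {u : ℝ × ℝ → ℝ}

lemma contDiffOn_Wgraph (hΩ : IsOpen Ω) (hu : IsCMCSolution H Ω u) :
    ContDiffOn ℝ 1 (Wgraph u) Ω := by
  obtain ⟨c1, c2⟩ := hu.contDiffOn_pd hΩ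
  unfold Wgraph
  refine ContDiffOn.sqrt (by fun_prop) fun x _ => ?_
  positivity

lemma contDiffOn_aux (hu : IsCMCSolution H Ω u) (P : ℝ × ℝ) :
    ContDiffOn ℝ 1 (aux H u P) Ω := by
  have : ContDiffOn ℝ 1 u Ω := hu.1.of_le (by norm_num)
  unfold aux
  fun_prop

/-- The radius of the chart depends only on `H` and on the distance to the boundary. The chart is
the time-one map of `x' = m(x)⁻¹ ζ`, along which `T` moves by `t ζ`. Along the flow
`∇u · m⁻¹ ζ = ∇u · ζ / (a + W)` is bounded by the size of `ζ`, which keeps `a` close to `1`; until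
this is known, the truncation of `a` keeps the field defined. -/
lemma exists_chart (hH : 0 < H) (hΩ : IsOpen Ω) (hu : IsCMCSolution H Ω u) {P : ℝ × ℝ} {r ρ : ℝ}
    (hρ : 0 < ρ) (hρr : 4 * ρ ≤ r) (hρH : 16 * H * ρ ≤ 1) (hr : Metric.ball P r ⊆ Ω) :
    ∃ S, Chart H Ω u P ρ S := by
  obtain ⟨T, hT⟩ := exists_T hΩ hu (convex_ball P r) Metric.isOpen_ball hr (u P)
  obtain ⟨c1, c2⟩ := hu.contDiffOn_pd hΩ
  have cW := contDiffOn_Wgraph hΩ hu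
  have ca := contDiffOn_aux hu P
  set V : ℝ × ℝ → ℝ × ℝ → ℝ × ℝ := fun x ζ =>
    invField (trunc (aux H u P x)) (pdx u x) (pdy u x) (Wgraph u x) ζ with hVdef
  have hVc : ContDiffOn ℝ 1 (fun z : (ℝ × ℝ) × (ℝ × ℝ) => V z.1 z.2) (Ω ×ˢ univ) := by
    have m1 : MapsTo (Prod.fst : (ℝ × ℝ) × (ℝ × ℝ) → ℝ × ℝ) (Ω ×ˢ univ) Ω := fun z hz => hz.1
    have d1 : ContDiffOn ℝ 1 (fun z : (ℝ × ℝ) × (ℝ × ℝ) => pdx u z.1) (Ω ×ˢ univ) :=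
      c1.comp contDiff_fst.contDiffOn m1
    have d2 : ContDiffOn ℝ 1 (fun z : (ℝ × ℝ) × (ℝ × ℝ) => pdy u z.1) (Ω ×ˢ univ) :=
      c2.comp contDiff_fst.contDiffOn m1
    have dW : ContDiffOn ℝ 1 (fun z : (ℝ × ℝ) × (ℝ × ℝ) => Wgraph u z.1) (Ω ×ˢ univ) :=
      cW.comp contDiff_fst.contDiffOn m1
    have da : ContDiffOn ℝ 1 (fun z : (ℝ × ℝ) × (ℝ × ℝ) => trunc (aux H u P z.1)) (Ω ×ˢ univ) :=
      trunc_contDiff.comp_contDiffOn (ca.comp contDiff_fst.contDiffOn m1)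
    have hW0 : ∀ z ∈ Ω ×ˢ (univ : Set (ℝ × ℝ)), Wgraph u z.1 ≠ 0 := fun z _ =>
      (Wgraph_pos u z.1).ne'
    have hD : ∀ z ∈ Ω ×ˢ (univ : Set (ℝ × ℝ)), (trunc (aux H u P z.1) + Wgraph u z.1) *
        (trunc (aux H u P z.1) + 1 / Wgraph u z.1) ≠ 0 := fun z _ => by
      have h1 := Wgraph_pos u z.1
      have h2 := half_le_trunc (aux H u P z.1)
      have h3 : 0 < trunc (aux H u P z.1) := by linarith
      positivity
    have f1 : ContDiffOn ℝ 1 (fun z : (ℝ × ℝ) × (ℝ × ℝ) => z.2.1) (Ω ×ˢ univ) := by fun_prop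
    have f2 : ContDiffOn ℝ 1 (fun z : (ℝ × ℝ) × (ℝ × ℝ) => z.2.2) (Ω ×ˢ univ) := by fun_prop
    have one : ContDiffOn ℝ 1 (fun _ : (ℝ × ℝ) × (ℝ × ℝ) => (1 : ℝ)) (Ω ×ˢ univ) := by fun_prop
    have dD := (da.add dW).mul (da.add (one.div dW hW0))
    have m12 := (d1.mul d2).div dW hW0
    exact ((((da.add ((one.add (d2.pow 2)).div dW hW0)).mul f1).sub (m12.mul f2)).div dD hD).prodMk
      (((m12.neg.mul f1).add ((da.add ((one.add (d1.pow 2)).div dW hW0)).mul f2)).div dD hD)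
  have hsub3 : Metric.closedBall P (3 * ρ) ⊆ Metric.ball P r :=
    Metric.closedBall_subset_ball (by linarith)
  have hVb : ∀ x ∈ Metric.closedBall P (3 * ρ), ∀ ζ ∈ Metric.closedBall (0 : ℝ × ℝ) ρ,
      ‖V x ζ‖ ≤ 3 * ρ := by
    intro x _ ζ hζ
    have h1 := sq_le_of_norm (mem_closedBall_zero_iff.1 hζ)
    have h2 := invField_sq_le (Wgraph_sq u x) (one_le_Wgraph u x)
      (half_le_trunc (aux H u P x)) ζ
    exact norm_le_of_sq (by positivity) (h2.trans (by nlinarith [sq_nonneg ρ]))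
  obtain ⟨X, hX, hXc⟩ := exists_flow_param (hΩ.prod isOpen_univ) (by positivity) hVc
    (prod_mono (hsub3.trans hr) (subset_univ _)) hVb
  -- the height stays small along the flow, so that the truncation is inactive
  have hheight : ∀ ζ ∈ Metric.closedBall (0 : ℝ × ℝ) ρ, ∀ t ∈ Icc (0 : ℝ) 1,
      |aux H u P (X ζ t) - 1| ≤ 1 / 4 := by
    intro ζ hζ
    obtain ⟨h0, hd⟩ := hX ζ hζ
    have hder : ∀ t ∈ Icc (0 : ℝ) 1, HasDerivWithinAt (fun t => u (X ζ t))
        (pdx u (X ζ t) * (V (X ζ t) ζ).1 + pdy u (X ζ t) * (V (X ζ t) ζ).2) (Icc 0 1) t := by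
      intro t ht
      have h1 := (hu.second hΩ (hr (hsub3 (hd t ht).1))).1
      exact (h1.comp_hasDerivWithinAt t (hd t ht).2).congr_deriv (by simp)
    have hbound : ∀ t ∈ Icc (0 : ℝ) 1,
        ‖pdx u (X ζ t) * (V (X ζ t) ζ).1 + pdy u (X ζ t) * (V (X ζ t) ζ).2‖ ≤ 2 * ρ := by
      intro t ht
      have ha := half_le_trunc (aux H u P (X ζ t))
      have hW := Wgraph_sq u (X ζ t)
      have hW1 := one_le_Wgraph u (X ζ t)
      rw [invField_dot hW1 (by linarith), Real.norm_eq_abs, abs_div]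
      have hpos : 0 < trunc (aux H u P (X ζ t)) + Wgraph u (X ζ t) := by linarith
      rw [abs_of_pos hpos, div_le_iff₀ hpos]
      apply abs_le_of_sq_le_sq _ (by positivity)
      have h1 := sq_le_of_norm (mem_closedBall_zero_iff.1 hζ)
      have hle : Wgraph u (X ζ t) ≤ trunc (aux H u P (X ζ t)) + Wgraph u (X ζ t) := by linarith
      have hsq : Wgraph u (X ζ t) ^ 2 ≤ (trunc (aux H u P (X ζ t)) + Wgraph u (X ζ t)) ^ 2 :=
        pow_le_pow_left₀ (by linarith) hle 2
      calc (pdx u (X ζ t) * ζ.1 + pdy u (X ζ t) * ζ.2) ^ 2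
          ≤ (pdx u (X ζ t) ^ 2 + pdy u (X ζ t) ^ 2) * (ζ.1 ^ 2 + ζ.2 ^ 2) := by
            nlinarith [sq_nonneg (pdx u (X ζ t) * ζ.2 - pdy u (X ζ t) * ζ.1)]
        _ ≤ Wgraph u (X ζ t) ^ 2 * (2 * ρ ^ 2) := by
            apply mul_le_mul (by linarith) h1 (by positivity) (by positivity)
        _ ≤ (2 * ρ * (trunc (aux H u P (X ζ t)) + Wgraph u (X ζ t))) ^ 2 := by
            nlinarith [mul_le_mul_of_nonneg_left hsq (sq_nonneg ρ), sq_nonneg ρ,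
              mul_nonneg (sq_nonneg ρ) (sq_nonneg (Wgraph u (X ζ t)))]
    intro t ht
    have := norm_image_sub_le_of_norm_deriv_le_segment' hder
      (fun t ht => hbound t ⟨ht.1, ht.2.le⟩) t ht
    rw [h0, Real.norm_eq_abs] at this
    have h3 : |u (X ζ t) - u P| ≤ 2 * ρ := this.trans (by
      have := ht.2; have := ht.1; nlinarith)
    rw [aux, show 1 + 2 * H * (u (X ζ t) - u P) - 1 = 2 * H * (u (X ζ t) - u P) by ring,
      abs_mul, abs_of_pos (by positivity)]
    nlinarith
  have hTX : ∀ ζ ∈ Metric.closedBall (0 : ℝ × ℝ) ρ, T (X ζ 1) - T P = ζ := by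
    intro ζ hζ
    obtain ⟨h0, hd⟩ := hX ζ hζ
    have hder : ∀ t ∈ Icc (0 : ℝ) 1, HasDerivWithinAt (fun t => T (X ζ t) - t • ζ)
        (0 : ℝ × ℝ) (Icc 0 1) t := by
      intro t ht
      have h1 := hT _ (hsub3 (hd t ht).1)
      have h2 := h1.comp_hasDerivWithinAt t (hd t ht).2
      have h3 : HasDerivWithinAt (fun t : ℝ => t • ζ) ((1 : ℝ) • ζ) (Icc 0 1) t :=
        (hasDerivWithinAt_id t _).smul_const ζ
      refine (h2.sub h3).congr_deriv ?_
      have ha := hheight ζ hζ t ht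
      have ha' : 3 / 4 ≤ aux H u P (X ζ t) := by have := (abs_le.1 ha).1; linarith
      have hm := m_invField (Wgraph_sq u (X ζ t)) (one_le_Wgraph u (X ζ t))
        (show 0 < aux H u P (X ζ t) by linarith) ζ
      simp only [hVdef, trunc_eq ha']
      simp only [aux] at hm ⊢
      ext
      · simp only [ContinuousLinearMap.prod_apply, lin1_apply, one_smul, Prod.fst_sub,
          Prod.fst_zero, hm.1, sub_self]
      · simp only [ContinuousLinearMap.prod_apply, lin1_apply, one_smul, Prod.snd_sub,
          Prod.snd_zero, hm.2, sub_self]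
    have := norm_image_sub_le_of_norm_deriv_le_segment' hder (C := 0)
      (fun t ht => by simp) 1 (by simp)
    simp only [zero_mul, norm_le_zero_iff, h0] at this
    simp only [one_smul, zero_smul, sub_zero] at this
    rw [sub_eq_zero] at this
    rw [← this]; abel
  have hball : ∀ ζ ∈ Metric.ball (0 : ℝ × ℝ) ρ, ζ ∈ Metric.closedBall (0 : ℝ × ℝ) ρ :=
    fun ζ h => Metric.ball_subset_closedBall h
  have one_mem : (1 : ℝ) ∈ Icc (0 : ℝ) 1 := by simp
  have hSmem : ∀ ζ ∈ Metric.ball (0 : ℝ × ℝ) ρ, X ζ 1 ∈ Metric.ball P r := fun ζ h =>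
    hsub3 ((hX ζ (hball ζ h)).2 1 one_mem).1
  have hSΩ : MapsTo (fun ζ => X ζ 1) (Metric.ball (0 : ℝ × ℝ) ρ) Ω := fun ζ h => hr (hSmem ζ h)
  have hSc : ContinuousOn (fun ζ => X ζ 1) (Metric.ball 0 ρ) :=
    hXc.mono Metric.ball_subset_closedBall
  have ha34 : ∀ ζ ∈ Metric.ball (0 : ℝ × ℝ) ρ, 3 / 4 ≤ aux H u P (X ζ 1) := by
    intro ζ h
    have := (abs_le.1 (hheight ζ (hball ζ h) 1 one_mem)).1
    linarith
  have hSd : ∀ ζ ∈ Metric.ball (0 : ℝ × ℝ) ρ, HasFDerivAt (fun ζ => X ζ 1)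
      ((lin1 ((aux H u P (X ζ 1) + (1 + pdy u (X ζ 1) ^ 2) / Wgraph u (X ζ 1)) /
          ((aux H u P (X ζ 1) + Wgraph u (X ζ 1)) * (aux H u P (X ζ 1) + 1 / Wgraph u (X ζ 1))))
        (-(pdx u (X ζ 1) * pdy u (X ζ 1) / Wgraph u (X ζ 1)) /
          ((aux H u P (X ζ 1) + Wgraph u (X ζ 1)) * (aux H u P (X ζ 1) + 1 / Wgraph u (X ζ 1))))).prod
      (lin1 (-(pdx u (X ζ 1) * pdy u (X ζ 1) / Wgraph u (X ζ 1)) /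
          ((aux H u P (X ζ 1) + Wgraph u (X ζ 1)) * (aux H u P (X ζ 1) + 1 / Wgraph u (X ζ 1))))
        ((aux H u P (X ζ 1) + (1 + pdx u (X ζ 1) ^ 2) / Wgraph u (X ζ 1)) /
          ((aux H u P (X ζ 1) + Wgraph u (X ζ 1)) * (aux H u P (X ζ 1) + 1 / Wgraph u (X ζ 1)))))) ζ := by
    intro ζ h
    have hn := Metric.isOpen_ball.mem_nhds h
    have h1 : HasFDerivAt (fun x => T x - T P) _ (X ζ 1) := (hT _ (hSmem ζ h)).sub_const (T P)
    suffices hs : HasFDerivAt (fun ζ => X ζ 1) (_ ∘L ContinuousLinearMap.id ℝ (ℝ × ℝ)) ζ from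
      hs.congr_fderiv (ContinuousLinearMap.comp_id _)
    refine h1.of_comp_of_leftInverse (hSc.continuousAt hn) (hasFDerivAt_id ζ) ?_ ?_
    · filter_upwards [hn] with ζ' h' using hTX ζ' (hball ζ' h')
    · intro v
      have ha := ha34 ζ h
      have := invField_m (Wgraph_sq u (X ζ 1)) (one_le_Wgraph u (X ζ 1))
        (show 0 < aux H u P (X ζ 1) by linarith) v
      refine Eq.trans ?_ this
      simp only [invField, aux, ContinuousLinearMap.prod_apply, lin1_apply]
      ext <;> simp only <;> ring
  refine ⟨fun ζ => X ζ 1, ?_, fun ζ h => hSΩ h, fun ζ h => hheight ζ (hball ζ h) 1 one_mem,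
    ?_, fun ζ h => ⟨_, hSd ζ h, fun ξ => ?_⟩⟩
  · have h0 : (0 : ℝ × ℝ) ∈ Metric.closedBall (0 : ℝ × ℝ) ρ := Metric.mem_closedBall_self hρ.le
    obtain ⟨h1, hd⟩ := hX 0 h0
    have hz : ∀ x, V x 0 = 0 := by intro x; simp [hVdef, invField]
    have := norm_image_sub_le_of_norm_deriv_le_segment' (f := X 0) (fun t ht => (hd t ht).2) (C := 0)
      (fun t ht => by simp [hz]) 1 (by simp)
    simp only [zero_mul, norm_le_zero_iff, h1, sub_eq_zero] at this
    exact this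
  · have e1 := c1.continuousOn.comp hSc hSΩ
    have e2 := c2.continuousOn.comp hSc hSΩ
    have eW := cW.continuousOn.comp hSc hSΩ
    have ea := ca.continuousOn.comp hSc hSΩ
    have hW0 : ∀ z ∈ Metric.ball (0 : ℝ × ℝ) ρ, Wgraph u (X z 1) ≠ 0 := fun z _ =>
      (Wgraph_pos u _).ne'
    have hD : ∀ z ∈ Metric.ball (0 : ℝ × ℝ) ρ, (aux H u P (X z 1) + Wgraph u (X z 1)) *
        (aux H u P (X z 1) + 1 / Wgraph u (X z 1)) ≠ 0 := fun z h => by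
      have h1 := Wgraph_pos u (X z 1)
      have h2 := ha34 z h
      have h3 : 0 < aux H u P (X z 1) := by linarith
      positivity
    have one : ContinuousOn (fun _ : ℝ × ℝ => (1 : ℝ)) (Metric.ball 0 ρ) := continuousOn_const
    have dD := (ea.add eW).mul (ea.add (one.div eW hW0))
    have m12 := ((e1.mul e2).div eW hW0).neg.div dD hD
    have m22 := (ea.add ((one.add (e2.pow 2)).div eW hW0)).div dD hD
    have m11 := (ea.add ((one.add (e1.pow 2)).div eW hW0)).div dD hD
    have s1 := contDiffOn_one_of_lin1 Metric.isOpen_ball (f := fun ζ => (X ζ 1).1)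
      (fun ζ h => (hasFDerivAt_fst.comp ζ (hSd ζ h)).congr_fderiv
        (ContinuousLinearMap.fst_comp_prod _ _)) m22 m12
    have s2 := contDiffOn_one_of_lin1 Metric.isOpen_ball (f := fun ζ => (X ζ 1).2)
      (fun ζ h => (hasFDerivAt_snd.comp ζ (hSd ζ h)).congr_fderiv
        (ContinuousLinearMap.snd_comp_prod _ _)) m12 m11
    exact s1.prodMk s2
  · simp only [invField, ContinuousLinearMap.prod_apply, lin1_apply]
    ext <;> simp only <;> ring

end

/-! ### Weighted quasi-conformality -/

section alg
variable {a p q W : ℝ}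

lemma pair_alg_w (hW : W ^ 2 = 1 + p ^ 2 + q ^ 2) (hW1 : 1 ≤ W)
    {f1 f2 w1 w2 x1 x2 : ℝ} (h1 : f1 = (a + (1 + p ^ 2) / W) * x1 + p * q / W * x2)
    (h2 : f2 = p * q / W * x1 + (a + (1 + q ^ 2) / W) * x2)
    (hw1 : w1 = ((1 + q ^ 2) * f1 - p * q * f2) / W ^ 3)
    (hw2 : w2 = (-(p * q) * f1 + (1 + p ^ 2) * f2) / W ^ 3) :
    w1 = ((a + 1 / W) * x1 - a / W ^ 2 * p * (p * x1 + q * x2)) / W ∧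
    w2 = ((a + 1 / W) * x2 - a / W ^ 2 * q * (p * x1 + q * x2)) / W := by
  have h0 : 0 < W := by linarith
  rw [hw1, hw2, h1, h2]
  constructor
  · field_simp
    linear_combination (-(a * W * x1 + x1)) * hW
  · field_simp
    linear_combination (-(a * W * x2 + x2)) * hW

lemma pair_alg_mw (hW : W ^ 2 = 1 + p ^ 2 + q ^ 2) (hW1 : 1 ≤ W)
    {w1 w2 x1 x2 : ℝ}
    (hw1 : w1 = ((a + 1 / W) * x1 - a / W ^ 2 * p * (p * x1 + q * x2)) / W)
    (hw2 : w2 = ((a + 1 / W) * x2 - a / W ^ 2 * q * (p * x1 + q * x2)) / W) :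
    (a + (1 + p ^ 2) / W) * w1 + p * q / W * w2
      = ((a + 1 / W) ^ 2 * x1 + (1 - a ^ 2) / W ^ 2 * p * (p * x1 + q * x2)) / W ∧
    p * q / W * w1 + (a + (1 + q ^ 2) / W) * w2
      = ((a + 1 / W) ^ 2 * x2 + (1 - a ^ 2) / W ^ 2 * q * (p * x1 + q * x2)) / W := by
  have h0 : 0 < W := by linarith
  rw [hw1, hw2]
  constructor
  · field_simp
    linear_combination (a * p * (p * x1 + q * x2)) * hW
  · field_simp
    linear_combination (a * q * (p * x1 + q * x2)) * hW

lemma pair_alg_low {a α N k : ℝ} (ha1 : 3 / 4 ≤ a) (hα : a ≤ α) (hk : 0 ≤ k) (hkN : k ≤ N) :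
    9 / 16 * N ≤ α ^ 2 * N + (1 - a ^ 2) * k := by
  have h1 : a ^ 2 ≤ α ^ 2 := pow_le_pow_left₀ (by linarith) hα 2
  have h2 : 9 / 16 ≤ a ^ 2 := by nlinarith
  have h3 : a ^ 2 * N ≤ α ^ 2 * N := mul_le_mul_of_nonneg_right h1 (hk.trans hkN)
  have h4 : 0 ≤ (a ^ 2 - 9 / 16) * (N - k) := mul_nonneg (by linarith) (by linarith)
  linarith

set_option maxHeartbeats 1000000 in
/-- The algebra behind `PairAt`: `(f1, f2)` is the gradient of a partial derivative of `u`,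
`(w1, w2)` its image under the derivative of `p ↦ p / √(1 + |p|²)`, and `(-w2, w1)` the gradient of
a component of `Y` as expressed by the CMC equation; `invField` pulls both back to the chart. -/
lemma pair_alg (hW : W ^ 2 = 1 + p ^ 2 + q ^ 2) (hW1 : 1 ≤ W) (ha : |a - 1| ≤ 1 / 4)
    {f1 f2 w1 w2 : ℝ}
    (hw1 : w1 = ((1 + q ^ 2) * f1 - p * q * f2) / W ^ 3)
    (hw2 : w2 = (-(p * q) * f1 + (1 + p ^ 2) * f2) / W ^ 3) :
    (invField a p q W (f1, f2)).1 ^ 2 + (invField a p q W (f1, f2)).2 ^ 2 ≤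
      9 * W ^ 2 * ((invField a p q W (f1, f2)).1 * (invField a p q W (-w2, w1)).2 -
        (invField a p q W (f1, f2)).2 * (invField a p q W (-w2, w1)).1) ∧
    W ^ 4 * ((invField a p q W (-w2, w1)).1 ^ 2 + (invField a p q W (-w2, w1)).2 ^ 2) ≤
      60 * ((invField a p q W (f1, f2)).1 ^ 2 + (invField a p q W (f1, f2)).2 ^ 2) := by
  have h0 : 0 < W := by linarith
  obtain ⟨ha1, ha2⟩ := abs_le.1 ha
  have ha0 : 0 < a := by linarith
  obtain ⟨m1, m2⟩ := m_invField hW hW1 ha0 (f1, f2)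
  set x1 := (invField a p q W (f1, f2)).1
  set x2 := (invField a p q W (f1, f2)).2
  obtain ⟨e1, e2⟩ := pair_alg_w hW hW1 m1.symm m2.symm hw1 hw2
  obtain ⟨d1, d2⟩ := pair_alg_mw hW hW1 e1 e2
  set D := (a + W) * (a + 1 / W) with hD
  have hiW : 1 / W ≤ 1 := by rw [div_le_one h0]; exact hW1
  have hiW0 : 0 < 1 / W := by positivity
  have hD0 : 0 < D := by positivity
  have hDu : D ≤ 81 / 16 * W := by
    rw [hD]
    calc (a + W) * (a + 1 / W) ≤ (9 / 4 * W) * (9 / 4) := by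
          apply mul_le_mul <;> nlinarith
      _ = _ := by ring
  have hDl : 3 / 4 * W ≤ D := by rw [hD]; nlinarith
  have g1 : (invField a p q W (-w2, w1)).1 =
      -(((a + 1 / W) ^ 2 * x2 + (1 - a ^ 2) / W ^ 2 * q * (p * x1 + q * x2)) / W) / D := by
    rw [← d2]; simp only [invField]; rw [← hD]; ring
  have g2 : (invField a p q W (-w2, w1)).2 =
      (((a + 1 / W) ^ 2 * x1 + (1 - a ^ 2) / W ^ 2 * p * (p * x1 + q * x2)) / W) / D := by
    rw [← d1]; simp only [invField]; rw [← hD]; ring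
  rw [g1, g2]
  clear_value x1 x2 D
  set α := a + 1 / W with hα
  have hα1 : a ≤ α := by linarith
  have hα2 : α ≤ 9 / 4 := by linarith
  set s := p * x1 + q * x2 with hs
  set N := x1 ^ 2 + x2 ^ 2 with hN
  have hN0 : 0 ≤ N := by positivity
  have hs2 : s ^ 2 ≤ (W ^ 2 - 1) * N := by
    have e : s ^ 2 = (p ^ 2 + q ^ 2) * N - (p * x2 - q * x1) ^ 2 := by rw [hs, hN]; ring
    rw [e, show W ^ 2 - 1 = p ^ 2 + q ^ 2 by linarith]
    linarith [sq_nonneg (p * x2 - q * x1)]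
  have hsW : s ^ 2 / W ^ 2 ≤ N := by
    rw [div_le_iff₀ (by positivity)]; linarith
  have hs0 : 0 ≤ s ^ 2 / W ^ 2 := by positivity
  set k := s ^ 2 / W ^ 2 with hk
  constructor
  · have e : x1 * ((α ^ 2 * x1 + (1 - a ^ 2) / W ^ 2 * p * s) / W / D) -
        x2 * (-((α ^ 2 * x2 + (1 - a ^ 2) / W ^ 2 * q * s) / W) / D)
        = (α ^ 2 * N + (1 - a ^ 2) * k) / (W * D) := by
      rw [hN, hk, hs]; field_simp; ring
    rw [e]
    have hlow := pair_alg_low (by linarith) hα1 hs0 hsW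
    rw [mul_div_assoc', le_div_iff₀ (by positivity)]
    calc N * (W * D) ≤ N * (W * (81 / 16 * W)) := by gcongr
      _ = 9 * W ^ 2 * (9 / 16 * N) := by ring
      _ ≤ _ := by gcongr
  · have e : (-((α ^ 2 * x2 + (1 - a ^ 2) / W ^ 2 * q * s) / W) / D) ^ 2 +
        ((α ^ 2 * x1 + (1 - a ^ 2) / W ^ 2 * p * s) / W / D) ^ 2
        = (α ^ 4 * N + 2 * α ^ 2 * (1 - a ^ 2) * k + (1 - a ^ 2) ^ 2 * (k * ((p ^ 2 + q ^ 2) / W ^ 2)))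
          / (W ^ 2 * D ^ 2) := by
      rw [hN, hk, hs]; field_simp; ring
    rw [e]
    have hpq : (p ^ 2 + q ^ 2) / W ^ 2 ≤ 1 := by
      rw [div_le_one (by positivity)]; linarith
    have hpq0 : 0 ≤ (p ^ 2 + q ^ 2) / W ^ 2 := by positivity
    have hα0 : 0 < α := by linarith
    have hα3 : α ^ 2 ≤ 81 / 16 := (pow_le_pow_left₀ hα0.le hα2 2).trans (by norm_num)
    have hup : α ^ 4 * N + 2 * α ^ 2 * (1 - a ^ 2) * k +
        (1 - a ^ 2) ^ 2 * (k * ((p ^ 2 + q ^ 2) / W ^ 2)) ≤ 2025 / 64 * N := by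
      have t1 : α ^ 4 * N ≤ (81 / 16) ^ 2 * N := by
        have : α ^ 4 ≤ (81 / 16) ^ 2 := by
          rw [show α ^ 4 = (α ^ 2) ^ 2 by ring]; exact pow_le_pow_left₀ (by positivity) hα3 2
        gcongr
      have ha3 : 1 - a ^ 2 ≤ 9 / 16 := by
        have := pow_le_pow_left₀ (by norm_num) (show 3 / 4 ≤ a by linarith) 2
        linarith
      have ha4 : -(9 / 16) ≤ 1 - a ^ 2 := by
        have := pow_le_pow_left₀ ha0.le (show a ≤ 5 / 4 by linarith) 2
        linarith
      have t2 : 2 * α ^ 2 * (1 - a ^ 2) * k ≤ 2 * (81 / 16) * (9 / 16) * N := by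
        have : 2 * α ^ 2 * (1 - a ^ 2) * k ≤ 2 * α ^ 2 * (9 / 16) * k := by gcongr
        refine this.trans ?_
        gcongr
      have t3 : (1 - a ^ 2) ^ 2 * (k * ((p ^ 2 + q ^ 2) / W ^ 2)) ≤ (9 / 16) ^ 2 * (N * 1) := by
        have : (1 - a ^ 2) ^ 2 ≤ (9 / 16) ^ 2 := sq_le_sq' ha4 ha3
        gcongr
      linarith
    rw [mul_div_assoc', div_le_iff₀ (by positivity)]
    have hD2 : 9 / 16 * W ^ 2 ≤ D ^ 2 := by
      have := pow_le_pow_left₀ (by positivity) hDl 2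
      linarith
    calc W ^ 4 * (α ^ 4 * N + 2 * α ^ 2 * (1 - a ^ 2) * k +
          (1 - a ^ 2) ^ 2 * (k * ((p ^ 2 + q ^ 2) / W ^ 2)))
        ≤ W ^ 4 * (2025 / 64 * N) := by gcongr
      _ ≤ 60 * N * (W ^ 2 * (9 / 16 * W ^ 2)) := by
          have : 0 ≤ W ^ 4 * N := by positivity
          linarith
      _ ≤ _ := by gcongr

end alg

/-- Quasi-conformality of `(f, G)` at `ζ` with weight `W`: `|∇f|² ≤ 9 W² {f, G}` and
`W⁴ |∇G|² ≤ 60 |∇f|²`. -/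
def PairAt (f G : ℝ × ℝ → ℝ) (W : ℝ) (ζ : ℝ × ℝ) : Prop :=
  ∃ a b c d : ℝ, HasFDerivAt f (lin1 a b) ζ ∧ HasFDerivAt G (lin1 c d) ζ ∧
    a ^ 2 + b ^ 2 ≤ 9 * W ^ 2 * (a * d - b * c) ∧ W ^ 4 * (c ^ 2 + d ^ 2) ≤ 60 * (a ^ 2 + b ^ 2)

/-- First component of `Y = ∇u / W - 2H (x - P)`. If `Y` is constant along a curve, then `∇u / W`
varies there like the normal of a circle of radius `1 / (2H)`. -/
def Yx (H : ℝ) (u : ℝ × ℝ → ℝ) (P x : ℝ × ℝ) : ℝ := pdx u x / Wgraph u x - 2 * H * (x.1 - P.1)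

/-- Second component of `Y = ∇u / W - 2H (x - P)`. -/
def Yy (H : ℝ) (u : ℝ × ℝ → ℝ) (P x : ℝ × ℝ) : ℝ := pdy u x / Wgraph u x - 2 * H * (x.2 - P.2)

section
variable {H : ℝ} {Ω : Set (ℝ × ℝ)} {u : ℝ × ℝ → ℝ} {P : ℝ × ℝ} {ρ : ℝ} {S : ℝ × ℝ → ℝ × ℝ}

lemma Chart.comp (hS : Chart H Ω u P ρ S) {ζ : ℝ × ℝ} (hζ : ζ ∈ Metric.ball 0 ρ) {f : ℝ × ℝ → ℝ}
    {a b : ℝ} (hf : HasFDerivAt f (lin1 a b) (S ζ)) :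
    HasFDerivAt (fun ζ => f (S ζ))
      (lin1 (invField (aux H u P (S ζ)) (pdx u (S ζ)) (pdy u (S ζ)) (Wgraph u (S ζ)) (a, b)).1
        (invField (aux H u P (S ζ)) (pdx u (S ζ)) (pdy u (S ζ)) (Wgraph u (S ζ)) (a, b)).2) ζ := by
  obtain ⟨L, hL, hL'⟩ := hS.deriv ζ hζ
  refine (hf.comp ζ hL).congr_fderiv ?_
  ext <;> simp [hL', invField] <;> ring

/-- The CMC equation makes the gradient of `Y₁` (of `-Y₂`) a rotation of a linear image of the
gradient of `∂_y u` (of `∂_x u`), whence the pair condition in the chart. -/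
lemma Chart.pairs (hS : Chart H Ω u P ρ S) (hΩ : IsOpen Ω) (hu : IsCMCSolution H Ω u)
    {ζ : ℝ × ℝ} (hζ : ζ ∈ Metric.ball 0 ρ) :
    PairAt (fun ζ => pdy u (S ζ)) (fun ζ => Yx H u P (S ζ)) (Wgraph u (S ζ)) ζ ∧
    PairAt (fun ζ => pdx u (S ζ)) (fun ζ => -Yy H u P (S ζ)) (Wgraph u (S ζ)) ζ := by
  have hx := hS.mem ζ hζ
  obtain ⟨-, r, s, t, hp, hq, hcmc⟩ := hu.second hΩ hx
  have hWd := hasFDerivAt_Wgraph hp hq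
  have hW := Wgraph_sq u (S ζ)
  have hW1 := one_le_Wgraph u (S ζ)
  have hW0 : Wgraph u (S ζ) ≠ 0 := (Wgraph_pos u _).ne'
  have hX1 := hl_div hp hWd hW0
  have hX2 := hl_div hq hWd hW0
  have hY1 := hl_sub hX1 (hl_smul (2 * H) (hl_sub (hl_fst (S ζ)) (hl_const P.1 (S ζ))))
  have hY2 := hl_smul (-1) (hl_sub hX2 (hl_smul (2 * H) (hl_sub (hl_snd (S ζ)) (hl_const P.2 (S ζ)))))
  have ha := hS.abs_le ζ hζ
  set p := pdx u (S ζ)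
  set q := pdy u (S ζ)
  set W := Wgraph u (S ζ)
  constructor
  · have h1 := pair_alg hW hW1 ha (f1 := s) (f2 := t) rfl rfl
    refine ⟨_, _, _, _, hS.comp hζ hq, hS.comp hζ (f := Yx H u P)
      (hY1.lin1_congr ?_ ?_), h1.1, h1.2⟩
    · field_simp
      linear_combination r * hW + hcmc
    · field_simp
      linear_combination s * hW
  · have h1 := pair_alg hW hW1 ha (f1 := r) (f2 := s) rfl rfl
    refine ⟨_, _, _, _, hS.comp hζ hp, hS.comp hζ (f := fun x => -Yy H u P x) (HasFDerivAt.congr_of_eventuallyEq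
      (hY2.lin1_congr ?_ ?_) (.of_forall fun x => ?_)), h1.1, h1.2⟩
    · field_simp
      linear_combination -s * hW
    · field_simp
      linear_combination -t * hW - hcmc
    · simp [Yy]

end

/-! ### The null Lagrangian identity -/

lemma cd_pd {F : ℝ × ℝ → ℝ} (hF : ContDiff ℝ 1 F) : Continuous (pdx F) ∧ Continuous (pdy F) ∧
    ∀ z, HasFDerivAt F (lin1 (pdx F z) (pdy F z)) z := by
  refine ⟨(hF.continuous_fderiv one_ne_zero).clm_apply continuous_const,
    (hF.continuous_fderiv one_ne_zero).clm_apply continuous_const, fun z => ?_⟩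
  exact hasFDerivAt_pd (hF.differentiable one_ne_zero z)

lemma hd_fst {F : ℝ × ℝ → ℝ} {a b s θ : ℝ} (h : HasFDerivAt F (lin1 a b) (s, θ)) :
    HasDerivAt (fun s => F (s, θ)) a s := by
  have h1 : HasDerivAt (fun s : ℝ => (s, θ)) ((1 : ℝ), (0 : ℝ)) s :=
    (hasDerivAt_id s).prodMk (hasDerivAt_const s θ)
  exact (h.comp_hasDerivAt s h1).congr_deriv (by simp)

lemma hd_snd {F : ℝ × ℝ → ℝ} {a b s θ : ℝ} (h : HasFDerivAt F (lin1 a b) (s, θ)) :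
    HasDerivAt (fun θ => F (s, θ)) b θ := by
  have h1 : HasDerivAt (fun θ : ℝ => (s, θ)) ((0 : ℝ), (1 : ℝ)) θ :=
    (hasDerivAt_const θ s).prodMk (hasDerivAt_id θ)
  exact (h.comp_hasDerivAt θ h1).congr_deriv (by simp)

lemma cont_param {X : Type*} [TopologicalSpace X] {k : X → ℝ → ℝ}
    (hk : Continuous (fun z : X × ℝ => k z.1 z.2)) (a b : ℝ) :
    Continuous fun x => ∫ t in a..b, k x t :=
  intervalIntegral.continuous_parametric_intervalIntegral_of_continuous' hk a b

/-- Differentiation under the integral sign for jointly continuous data. -/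
lemma hasDerivAt_param {k k' : ℝ × ℝ → ℝ} (hk : Continuous k) (hk' : Continuous k')
    (h : ∀ s θ, HasDerivAt (fun s => k (s, θ)) (k' (s, θ)) s) {a b : ℝ} (hab : a ≤ b) (s : ℝ) :
    HasDerivAt (fun s => ∫ θ in a..b, k (s, θ)) (∫ θ in a..b, k' (s, θ)) s := by
  obtain ⟨C, hC⟩ := ((isCompact_closedBall s 1).prod (isCompact_Icc (a := a) (b := b))).exists_bound_of_continuousOn
    hk'.continuousOn
  refine (intervalIntegral.hasDerivAt_integral_of_dominated_loc_of_deriv_le (bound := fun _ => C)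
    (F := fun s θ => k (s, θ)) (F' := fun s θ => k' (s, θ))
    (Metric.closedBall_mem_nhds s one_pos) (.of_forall fun x => ?_) ?_ ?_ ?_ ?_ ?_).2
  · exact (hk.comp (by fun_prop : Continuous fun θ : ℝ => (x, θ))).aestronglyMeasurable
  · exact (hk.comp (by fun_prop : Continuous fun θ : ℝ => (s, θ))).intervalIntegrable _ _
  · exact (hk'.comp (by fun_prop : Continuous fun θ : ℝ => (s, θ))).aestronglyMeasurable
  · refine .of_forall fun t ht x hx => hC (x, t) ⟨hx, ?_⟩
    rw [uIoc_of_le hab] at ht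
    exact ⟨ht.1.le, ht.2⟩
  · exact intervalIntegrable_const
  · exact .of_forall fun t _ x _ => h x t

/-- The derivative of `∮ F dG` over the circles `s = const` is `∮ {F, G}`. Formally this is an
integration by parts in `θ`; as `F` and `G` are only `C¹`, the angular derivative is replaced by
difference quotients of step `h`, and `h` tends to `0`. -/
lemma null_lagrangian {F G : ℝ × ℝ → ℝ} (hF : ContDiff ℝ 1 F) (hG : ContDiff ℝ 1 G)
    (pF : ∀ s θ, F (s, θ + 2 * π) = F (s, θ)) (pG : ∀ s θ, G (s, θ + 2 * π) = G (s, θ)) (s : ℝ) :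
    HasDerivAt (fun s => ∫ θ in (0)..(2 * π), F (s, θ) * pdy G (s, θ))
      (∫ θ in (0)..(2 * π), (pdx F (s, θ) * pdy G (s, θ) - pdy F (s, θ) * pdx G (s, θ))) s := by
  obtain ⟨cFx, cFy, dF⟩ := cd_pd hF
  obtain ⟨cGx, cGy, dG⟩ := cd_pd hG
  have cF := hF.continuous
  have cG := hG.continuous
  -- averaged angular derivatives; for `h ≠ 0` these are difference quotients
  set At : (ℝ × ℝ → ℝ) → (ℝ × ℝ) × ℝ → ℝ := fun D z => ∫ t in (0 : ℝ)..1, D (z.1.2, z.2 + z.1.1 * t)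
    with hAt
  have cAt : ∀ D : ℝ × ℝ → ℝ, Continuous D → Continuous (At D) := by
    intro D hD
    exact cont_param (k := fun (z : (ℝ × ℝ) × ℝ) t => D (z.1.2, z.2 + z.1.1 * t))
      (by fun_prop) 0 1
  have hdiff : ∀ {D : ℝ × ℝ → ℝ} (_ : ContDiff ℝ 1 D) (h s θ : ℝ),
      D (s, θ + h) - D (s, θ) = h * At (pdy D) ((h, s), θ) := by
    intro D hD h s θ
    obtain ⟨_, cDy, dD⟩ := cd_pd hD
    have h1 : ∀ t ∈ uIcc (0 : ℝ) 1, HasDerivAt (fun t => D (s, θ + h * t))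
        (pdy D (s, θ + h * t) * h) t := by
      intro t _
      have hi : HasDerivAt (fun t => θ + h * t) h t := by
        simpa using ((hasDerivAt_id t).const_mul h).const_add θ
      exact (hd_snd (dD (s, θ + h * t))).comp t hi
    have h2 := intervalIntegral.integral_eq_sub_of_hasDerivAt h1
      ((by fun_prop : Continuous fun t => pdy D (s, θ + h * t) * h).intervalIntegrable _ _)
    simp only [mul_one, mul_zero, add_zero] at h2
    rw [← h2, hAt, intervalIntegral.integral_mul_const, mul_comm]
  have hshift : ∀ (h s : ℝ), ∫ θ in (0)..(2 * π), F (s, θ) * pdx G (s, θ + h)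
      = ∫ θ in (0)..(2 * π), F (s, θ - h) * pdx G (s, θ) := by
    intro h s
    have pGx : ∀ θ, pdx G (s, θ + 2 * π) = pdx G (s, θ) := by
      intro θ
      have h1 := hd_fst (dG (s, θ + 2 * π))
      have h2 := hd_fst (dG (s, θ))
      simp only [pG] at h1
      exact h1.unique h2
    have per : Function.Periodic (fun θ => F (s, θ - h) * pdx G (s, θ)) (2 * π) := by
      intro θ
      simp only
      rw [pGx, show θ + 2 * π - h = θ - h + 2 * π by ring, pF]
    have h1 := intervalIntegral.integral_comp_add_right (a := 0) (b := 2 * π)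
      (fun θ => F (s, θ - h) * pdx G (s, θ)) h
    simp only [add_sub_cancel_right, zero_add] at h1
    rw [h1, show 2 * π + h = h + 2 * π by ring, per.intervalIntegral_add_eq h 0, zero_add]
  set Φ : ℝ × ℝ → ℝ := fun z => ∫ θ in (0)..(2 * π), F (z.2, θ) * At (pdy G) (z, θ) with hΦ
  set Ψ : ℝ × ℝ → ℝ := fun z => ∫ θ in (0)..(2 * π),
    (pdx F (z.2, θ) * At (pdy G) (z, θ) - At (pdy F) ((-z.1, z.2), θ) * pdx G (z.2, θ)) with hΨ
  have cΦ : Continuous Φ := by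
    have := cAt _ cGy
    exact cont_param (k := fun z θ => F (z.2, θ) * At (pdy G) (z, θ)) (by fun_prop) _ _
  have cΨ : Continuous Ψ := by
    have := cAt _ cGy
    have := cAt _ cFy
    exact cont_param (k := fun z θ => pdx F (z.2, θ) * At (pdy G) (z, θ) -
      At (pdy F) ((-z.1, z.2), θ) * pdx G (z.2, θ)) (by fun_prop) _ _
  have hder : ∀ h : ℝ, h ≠ 0 → ∀ s, HasDerivAt (fun s => Φ (h, s)) (Ψ (h, s)) s := by
    intro h hh s
    have h1 := hasDerivAt_param (k := fun z => F z * (G (z.1, z.2 + h) - G z))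
      (k' := fun z => pdx F z * (G (z.1, z.2 + h) - G z) + F z * (pdx G (z.1, z.2 + h) - pdx G z))
      (by fun_prop) (by fun_prop)
      (fun s θ => (hd_fst (dF (s, θ))).mul ((hd_fst (dG (s, θ + h))).sub (hd_fst (dG (s, θ)))))
      (by positivity : (0 : ℝ) ≤ 2 * π) s
    have e1 : (fun s => ∫ θ in (0)..(2 * π), F (s, θ) * (G (s, θ + h) - G (s, θ)))
        = fun s => h * Φ (h, s) := by
      ext s
      rw [hΦ, ← intervalIntegral.integral_const_mul]
      congr 1; ext θ; rw [hdiff hG]; ring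
    have e2 : ∫ θ in (0)..(2 * π), (pdx F (s, θ) * (G (s, θ + h) - G (s, θ)) +
        F (s, θ) * (pdx G (s, θ + h) - pdx G (s, θ))) = h * Ψ (h, s) := by
      have i1 : ∫ θ in (0)..(2 * π), (pdx F (s, θ) * (G (s, θ + h) - G (s, θ)) +
          F (s, θ) * (pdx G (s, θ + h) - pdx G (s, θ)))
          = (∫ θ in (0)..(2 * π), pdx F (s, θ) * (G (s, θ + h) - G (s, θ))) +
            ((∫ θ in (0)..(2 * π), F (s, θ) * pdx G (s, θ + h)) -
            ∫ θ in (0)..(2 * π), F (s, θ) * pdx G (s, θ)) := by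
        rw [← intervalIntegral.integral_sub, ← intervalIntegral.integral_add]
        · congr 1; ext θ; ring
        all_goals exact Continuous.intervalIntegrable (by fun_prop) _ _
      rw [i1, hshift, ← intervalIntegral.integral_sub, ← intervalIntegral.integral_add, hΨ,
        ← intervalIntegral.integral_const_mul]
      · congr 1; ext θ
        have := hdiff hF (-h) s θ
        rw [hdiff hG, show θ - h = θ + -h by ring]
        linear_combination (pdx G (s, θ)) * this
      all_goals exact Continuous.intervalIntegrable (by fun_prop) _ _
    rw [e1] at h1
    have h3 := h1.const_mul h⁻¹
    refine (h3.congr_deriv ?_).congr_of_eventuallyEq (.of_forall fun s => ?_)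
    · rw [e2]; field_simp
    · simp only; field_simp
  have h_ftc : ∀ h s1 s2 : ℝ, Φ (h, s2) - Φ (h, s1) = ∫ s in s1..s2, Ψ (h, s) := by
    intro h s1 s2
    have hc1 : Continuous fun h => Φ (h, s2) - Φ (h, s1) := by fun_prop
    have hc2 : Continuous fun h => ∫ s in s1..s2, Ψ (h, s) :=
      cont_param (k := fun h s => Ψ (h, s)) (by fun_prop) _ _
    have : EqOn (fun h => Φ (h, s2) - Φ (h, s1)) (fun h => ∫ s in s1..s2, Ψ (h, s)) {0}ᶜ := by
      intro h hh
      exact (intervalIntegral.integral_eq_sub_of_hasDerivAt (fun s _ => hder h hh s)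
        ((by fun_prop : Continuous fun s => Ψ (h, s)).intervalIntegrable _ _)).symm
    exact congrFun (Continuous.ext_on (dense_compl_singleton 0) hc1 hc2 this) h
  have At0 : ∀ D s θ, At D ((0, s), θ) = D (s, θ) := by intro D s θ; simp [hAt]
  have hΦ0 : (fun s => ∫ θ in (0)..(2 * π), F (s, θ) * pdy G (s, θ)) = fun s => Φ (0, s) := by
    ext s; simp only [hΦ, At0]
  have hΨ0 : ∀ s, (∫ θ in (0)..(2 * π),
      (pdx F (s, θ) * pdy G (s, θ) - pdy F (s, θ) * pdx G (s, θ))) = Ψ (0, s) := by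
    intro s; simp only [hΨ, At0, neg_zero]
  rw [hΦ0, hΨ0]
  have h1 : HasDerivAt (fun t => ∫ x in s..t, Ψ (0, x)) (Ψ (0, s)) s :=
    intervalIntegral.integral_hasDerivAt_right
      ((by fun_prop : Continuous fun s => Ψ (0, s)).intervalIntegrable _ _)
      ((by fun_prop : Continuous fun s => Ψ (0, s)).stronglyMeasurableAtFilter volume (nhds s))
      (by fun_prop : Continuous fun s => Ψ (0, s)).continuousAt
  refine (h1.add_const (Φ (0, s))).congr_of_eventuallyEq (.of_forall fun t => ?_)
  simp only
  rw [← h_ftc 0 s t]; ring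

/-! ### Maximum principle and Riccati comparison -/

/-- The Jacobian determinant `{F, G}`. -/
def jac (F G : ℝ × ℝ → ℝ) (z : ℝ × ℝ) : ℝ := pdx F z * pdy G z - pdy F z * pdx G z

/-- Maximum principle on `{s ≤ s₀}` in log-polar coordinates, for `F` with `{F, G} ≥ 0`. For a
smooth nondecreasing `β` vanishing exactly on `(-∞, 0]`, the integral `∮ β(F - M) dG` is
nondecreasing in `s`, vanishes at `s₀` and tends to `0` at `-∞`; hence it is identically zero, and so
is the integrand of its derivative `∮ β'(F - M) {F, G}`. By `hJ0` the function `β(F - M)` does not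
depend on `s`, and it vanishes at `s₀`. -/
lemma max_polar {F G : ℝ × ℝ → ℝ} (hF : ContDiff ℝ 1 F) (hG : ContDiff ℝ 1 G)
    (pF : ∀ s θ, F (s, θ + 2 * π) = F (s, θ)) (pG : ∀ s θ, G (s, θ + 2 * π) = G (s, θ))
    {s₀ C M : ℝ} (hJ : ∀ s ≤ s₀, ∀ θ, 0 ≤ jac F G (s, θ))
    (hJ0 : ∀ s ≤ s₀, ∀ θ, jac F G (s, θ) = 0 → pdx F (s, θ) = 0)
    (bF : ∀ s ≤ s₀, ∀ θ, |F (s, θ)| ≤ C) (bG : ∀ s ≤ s₀, ∀ θ, |pdy G (s, θ)| ≤ C * exp s)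
    (hM : ∀ θ ∈ Icc 0 (2 * π), F (s₀, θ) ≤ M) :
    ∀ s ≤ s₀, ∀ θ ∈ Icc 0 (2 * π), F (s, θ) ≤ M := by
  have pi0 := Real.pi_pos
  obtain ⟨cFx, cFy, dF⟩ := cd_pd hF
  obtain ⟨cGx, cGy, dG⟩ := cd_pd hG
  have hβ : ContDiff ℝ 1 expNegInvGlue := expNegInvGlue.contDiff
  set β' := deriv expNegInvGlue with hβ'
  have cβ' : Continuous β' := hβ.continuous_deriv le_rfl
  have dβ : ∀ x, HasDerivAt expNegInvGlue (β' x) x := fun x =>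
    (hβ.differentiable one_ne_zero x).hasDerivAt
  have monβ : Monotone expNegInvGlue := expNegInvGlue.monotone
  have nβ' : ∀ x, 0 ≤ β' x := fun x => monβ.deriv_nonneg
  set B : ℝ × ℝ → ℝ := fun z => expNegInvGlue (F z - M) with hB
  have hBc : ContDiff ℝ 1 B := hβ.comp (hF.sub contDiff_const)
  have dB : ∀ z, HasFDerivAt B (lin1 (β' (F z - M) * pdx F z) (β' (F z - M) * pdy F z)) z := by
    intro z
    have h1 := hl_sub (dF z) (hl_const M z)
    exact (hl_scomp (dβ _) h1).lin1_congr (by ring) (by ring)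
  have pB : ∀ s θ, B (s, θ + 2 * π) = B (s, θ) := by intro s θ; simp only [hB, pF]
  set Φ : ℝ → ℝ := fun s => ∫ θ in (0)..(2 * π), B (s, θ) * pdy G (s, θ) with hΦ
  have hder : ∀ s, HasDerivAt Φ (∫ θ in (0)..(2 * π), β' (F (s, θ) - M) * jac F G (s, θ)) s := by
    intro s
    refine (null_lagrangian hBc hG pB pG s).congr_deriv ?_
    congr 1; ext θ
    rw [pdx_of (dB _), pdy_of (dB _), jac]; ring
  have cJ : Continuous (jac F G) := by unfold jac; fun_prop
  have cF := hF.continuous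
  have hmono : MonotoneOn Φ (Iic s₀) := by
    refine monotoneOn_of_deriv_nonneg (convex_Iic s₀)
      (fun s _ => (hder s).continuousAt.continuousWithinAt)
      (fun s _ => (hder s).differentiableAt.differentiableWithinAt) fun s hs => ?_
    rw [(hder s).deriv]
    rw [interior_Iic] at hs
    exact intervalIntegral.integral_nonneg (by positivity) fun θ _ =>
      mul_nonneg (nβ' _) (hJ s hs.le θ)
  have hΦ0 : Φ s₀ = 0 := by
    rw [hΦ]
    simp only
    rw [intervalIntegral.integral_congr (g := fun _ => (0 : ℝ))]
    · simp
    · intro θ hθ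
      rw [uIcc_of_le (by positivity)] at hθ
      simp only [hB]
      rw [expNegInvGlue.zero_of_nonpos (by linarith [hM θ hθ]), zero_mul]
  have hC0 : 0 ≤ C := (abs_nonneg _).trans (bF s₀ le_rfl 0)
  set K := expNegInvGlue (C - M) * C * (2 * π) with hK
  have hsmall : ∀ s ≤ s₀, |Φ s| ≤ K * exp s := by
    intro s hs
    have := intervalIntegral.norm_integral_le_of_norm_le_const (a := 0) (b := 2 * π)
      (f := fun θ => B (s, θ) * pdy G (s, θ)) (C := expNegInvGlue (C - M) * (C * exp s))
      (fun θ _ => by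
        rw [norm_mul, Real.norm_eq_abs, Real.norm_eq_abs]
        refine mul_le_mul ?_ (bG s hs θ) (abs_nonneg _) (expNegInvGlue.nonneg _)
        simp only [hB]
        rw [abs_of_nonneg (expNegInvGlue.nonneg _)]
        exact monβ (by linarith [(abs_le.1 (bF s hs θ)).2]))
    rw [sub_zero, abs_of_pos (by positivity : 0 < 2 * π)] at this
    refine this.trans (le_of_eq ?_)
    rw [hK]; ring
  have hzero : ∀ s ≤ s₀, Φ s = 0 := by
    intro s hs
    apply le_antisymm
    · rw [← hΦ0]; exact hmono hs self_mem_Iic hs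
    · have h1 : ∀ᶠ t in atBot, -(K * exp t) ≤ Φ s := by
        filter_upwards [eventually_le_atBot s] with t ht
        have h2 := hmono (mem_Iic.2 (ht.trans hs)) hs ht
        have h3 := (abs_le.1 (hsmall t (ht.trans hs))).1
        linarith
      have h2 : Tendsto (fun t => -(K * exp t)) atBot (nhds (-(K * 0))) :=
        (tendsto_exp_atBot.const_mul K).neg
      have h3 := le_of_tendsto h2 h1
      simpa using h3
  have hpt : ∀ s < s₀, ∀ θ ∈ Icc 0 (2 * π), β' (F (s, θ) - M) * jac F G (s, θ) = 0 := by
    intro s hs θ hθ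
    have h1 : (∫ θ in (0)..(2 * π), β' (F (s, θ) - M) * jac F G (s, θ)) = 0 := by
      refine (hder s).unique ((hasDerivAt_const s (0 : ℝ)).congr_of_eventuallyEq ?_)
      filter_upwards [Iio_mem_nhds hs] with t ht using hzero t ht.le
    by_contra hne
    have hpos : 0 < β' (F (s, θ) - M) * jac F G (s, θ) :=
      lt_of_le_of_ne (mul_nonneg (nβ' _) (hJ s hs.le θ)) (Ne.symm hne)
    have := intervalIntegral.integral_pos (a := 0) (b := 2 * π) (by positivity)
      (f := fun θ => β' (F (s, θ) - M) * jac F G (s, θ))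
      (by fun_prop) (fun θ _ => mul_nonneg (nβ' _) (hJ s hs.le θ)) ⟨θ, hθ, hpos⟩
    linarith
  intro s hs θ hθ
  have hconst := constant_of_has_deriv_right_zero (f := fun s => B (s, θ)) (a := s) (b := s₀)
    (by have := hBc.continuous; fun_prop) (fun t ht => by
      refine ((hd_fst (dB (t, θ))).congr_deriv ?_).hasDerivWithinAt
      rcases mul_eq_zero.1 (hpt t ht.2 θ hθ) with h | h
      · rw [h, zero_mul]
      · rw [hJ0 t ht.2.le θ h, mul_zero]) s₀ ⟨hs, le_rfl⟩
  have h0 : B (s₀, θ) = 0 := by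
    simp only [hB]; exact expNegInvGlue.zero_of_nonpos (by linarith [hM θ hθ])
  by_contra hlt
  have : 0 < B (s, θ) := by
    simp only [hB]; exact expNegInvGlue.pos_of_pos (by linarith)
  linarith

lemma cauchy_schwarz_circle {k : ℝ → ℝ} (hk : Continuous k) :
    (∫ θ in (0)..(2 * π), k θ) ^ 2 ≤ 2 * π * ∫ θ in (0)..(2 * π), k θ ^ 2 := by
  have pi0 := Real.pi_pos
  set I := ∫ θ in (0)..(2 * π), k θ with hI
  have h1 : 0 ≤ ∫ θ in (0)..(2 * π), (2 * π * k θ - I) ^ 2 :=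
    intervalIntegral.integral_nonneg (by positivity) fun θ _ => sq_nonneg _
  have h2 : ∫ θ in (0)..(2 * π), (2 * π * k θ - I) ^ 2
      = (2 * π) ^ 2 * (∫ θ in (0)..(2 * π), k θ ^ 2) - 2 * π * I ^ 2 := by
    have : ∀ θ, (2 * π * k θ - I) ^ 2 = (2 * π) ^ 2 * k θ ^ 2 - (4 * π * I) * k θ + I ^ 2 := by
      intro θ; ring
    simp only [this]
    rw [intervalIntegral.integral_add, intervalIntegral.integral_sub,
      intervalIntegral.integral_const_mul, intervalIntegral.integral_const_mul, ← hI,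
      intervalIntegral.integral_const]
    · simp only [sub_zero, smul_eq_mul]; ring
    all_goals exact Continuous.intervalIntegrable (by fun_prop) _ _
  rw [h2] at h1
  have h3 : 0 ≤ (2 * π) * (2 * π * (∫ θ in (0)..(2 * π), k θ ^ 2) - I ^ 2) := by linarith
  have := nonneg_of_mul_nonneg_right h3 (by positivity)
  linarith

/-- Riccati comparison: `Φ' ≥ Φ² / C` cannot hold with `Φ'` large on a long interval, because
`-1 / Φ` grows at rate at least `1 / C`. -/
lemma exists_small_deriv {Φ e : ℝ → ℝ} {C L : ℝ} (hC : 0 < C) (hL : 0 < L)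
    (hd : ∀ s ∈ Icc (-L) 0, HasDerivAt Φ (e s) s) (h : ∀ s ∈ Icc (-L) 0, Φ s ^ 2 ≤ C * e s) :
    ∃ s ∈ Icc (-L) 0, e s ≤ 18 * C / L ^ 2 := by
  by_contra! hcon
  have key : ∀ {a b : ℝ}, -L ≤ a → b ≤ 0 → a ≤ b → (∀ s ∈ Icc a b, Φ s ≠ 0) →
      (b - a) / C ≤ (Φ a)⁻¹ - (Φ b)⁻¹ := by
    intro a b ha hb hab hne
    have hd' : ∀ s ∈ Icc a b, HasDerivAt (fun s => -(Φ s)⁻¹ - s / C) (e s / Φ s ^ 2 - 1 / C) s := by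
      intro s hs
      have := ((hd s ⟨ha.trans hs.1, hs.2.trans hb⟩).inv (hne s hs)).neg.sub
        ((hasDerivAt_id s).div_const C)
      refine this.congr_deriv ?_
      ring
    have hm : MonotoneOn (fun s => -(Φ s)⁻¹ - s / C) (Icc a b) := by
      refine monotoneOn_of_deriv_nonneg (convex_Icc a b)
        (fun s hs => (hd' s hs).continuousAt.continuousWithinAt)
        (fun s hs => (hd' s (interior_subset hs)).differentiableAt.differentiableWithinAt)
        fun s hs => ?_
      have hs' := interior_subset hs
      rw [(hd' s hs').deriv, sub_nonneg]
      have hp : 0 < Φ s ^ 2 := by have := hne s hs'; positivity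
      rw [div_le_div_iff₀ hC hp]
      have := h s ⟨ha.trans hs'.1, hs'.2.trans hb⟩
      linarith
    have := hm (left_mem_Icc.2 hab) (right_mem_Icc.2 hab) hab
    simp only at this
    rw [sub_div]; linarith
  have hmono : StrictMonoOn Φ (Icc (-L) 0) := by
    refine strictMonoOn_of_deriv_pos (convex_Icc _ _)
      (fun s hs => (hd s hs).continuousAt.continuousWithinAt) fun s hs => ?_
    rw [(hd s (interior_subset hs)).deriv]
    exact lt_trans (by positivity) (hcon s (interior_subset hs))
  have hmid : 6 * C / L ≤ Φ (-(L / 3)) - Φ (-(2 * L / 3)) := by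
    have hm : MonotoneOn (fun s => Φ s - 18 * C / L ^ 2 * s) (Icc (-L) 0) := by
      have hd' : ∀ s ∈ Icc (-L) 0, HasDerivAt (fun s => Φ s - 18 * C / L ^ 2 * s)
          (e s - 18 * C / L ^ 2 * 1) s := fun s hs =>
        (hd s hs).sub ((hasDerivAt_id s).const_mul _)
      refine monotoneOn_of_deriv_nonneg (convex_Icc _ _)
        (fun s hs => (hd' s hs).continuousAt.continuousWithinAt)
        (fun s hs => (hd' s (interior_subset hs)).differentiableAt.differentiableWithinAt)
        fun s hs => ?_
      rw [(hd' s (interior_subset hs)).deriv]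
      have := hcon s (interior_subset hs)
      linarith
    have := hm (a := -(2 * L / 3)) ⟨by linarith, by linarith⟩ (b := -(L / 3))
      ⟨by linarith, by linarith⟩ (by linarith)
    simp only at this
    have e1 : 6 * C / L = 18 * C / L ^ 2 * (L / 3) := by field_simp; norm_num
    rw [e1]; linarith
  have h3 : 0 < 3 * C / L := by positivity
  have e2 : 6 * C / L = 2 * (3 * C / L) := by ring
  have e3 : L / 3 / C = (3 * C / L)⁻¹ := by field_simp
  rcases le_or_gt (3 * C / L) (Φ (-(L / 3))) with h1 | h1
  · have hpos : ∀ s ∈ Icc (-(L / 3)) 0, 0 < Φ s := fun s hs =>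
      lt_of_lt_of_le (lt_of_lt_of_le h3 h1)
        (hmono.monotoneOn ⟨by linarith, by linarith⟩ ⟨by linarith [hs.1], hs.2⟩ hs.1)
    have := key (by linarith) le_rfl (by linarith) fun s hs => (hpos s hs).ne'
    rw [show (0 - -(L / 3)) / C = L / 3 / C by ring, e3] at this
    have h5 : 0 < (Φ 0)⁻¹ := inv_pos.2 (hpos 0 ⟨by linarith, le_rfl⟩)
    have h6 : (Φ (-(L / 3)))⁻¹ ≤ (3 * C / L)⁻¹ := inv_anti₀ h3 h1
    linarith
  · have h2 : Φ (-(2 * L / 3)) < -(3 * C / L) := by linarith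
    have hneg : ∀ s ∈ Icc (-L) (-(2 * L / 3)), Φ s < 0 := fun s hs =>
      lt_of_le_of_lt (hmono.monotoneOn ⟨hs.1, by linarith [hs.2]⟩ ⟨by linarith, by linarith⟩ hs.2)
        (by linarith)
    have := key le_rfl (by linarith) (by linarith) fun s hs => (hneg s hs).ne
    rw [show (-(2 * L / 3) - -L) / C = L / 3 / C by ring, e3] at this
    have h5 : (Φ (-L))⁻¹ < 0 := inv_lt_zero.2 (hneg _ ⟨le_rfl, by linarith⟩)
    have h6 : (-Φ (-(2 * L / 3)))⁻¹ ≤ (3 * C / L)⁻¹ := inv_anti₀ h3 (by linarith)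
    rw [inv_neg] at h6
    linarith

/-! ### A good circle, and logarithmic polar coordinates -/

/-- The area element `√(1 + f₁² + f₂²)` of a pair standing for the two components of a gradient. -/
def Wf (f₁ f₂ : ℝ × ℝ → ℝ) (z : ℝ × ℝ) : ℝ := √(1 + f₁ z ^ 2 + f₂ z ^ 2)

lemma sqrt_lip (a b c d : ℝ) :
    √(1 + a ^ 2 + b ^ 2) ≤ √(1 + c ^ 2 + d ^ 2) + |a - c| + |b - d| := by
  set w := √(1 + c ^ 2 + d ^ 2) with hw
  have hw0 : 0 ≤ w := Real.sqrt_nonneg _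
  have hw2 : w ^ 2 = 1 + c ^ 2 + d ^ 2 := Real.sq_sqrt (by positivity)
  have hc : |c| ≤ w := abs_le_of_sq_le_sq (by nlinarith [sq_nonneg d]) hw0
  have hd : |d| ≤ w := abs_le_of_sq_le_sq (by nlinarith [sq_nonneg c]) hw0
  refine Real.sqrt_le_iff.2 ⟨by positivity, ?_⟩
  have e1 : c * (a - c) ≤ w * |a - c| :=
    (le_abs_self _).trans (by rw [abs_mul]; gcongr)
  have e2 : d * (b - d) ≤ w * |b - d| :=
    (le_abs_self _).trans (by rw [abs_mul]; gcongr)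
  have e3 : 0 ≤ |a - c| * |b - d| := by positivity
  have e4 := sq_abs (a - c)
  have e5 := sq_abs (b - d)
  nlinarith

lemma Wf_sq (f₁ f₂ : ℝ × ℝ → ℝ) (z : ℝ × ℝ) : Wf f₁ f₂ z ^ 2 = 1 + f₁ z ^ 2 + f₂ z ^ 2 :=
  Real.sq_sqrt (by positivity)

lemma one_le_Wf (f₁ f₂ : ℝ × ℝ → ℝ) (z : ℝ × ℝ) : 1 ≤ Wf f₁ f₂ z :=
  Real.one_le_sqrt.2 (by nlinarith [sq_nonneg (f₁ z), sq_nonneg (f₂ z)])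

lemma PairAt.pd {f G : ℝ × ℝ → ℝ} {W : ℝ} {z : ℝ × ℝ} (h : PairAt f G W z) :
    pdx f z ^ 2 + pdy f z ^ 2 ≤ 9 * W ^ 2 * jac f G z ∧
      W ^ 4 * (pdx G z ^ 2 + pdy G z ^ 2) ≤ 60 * (pdx f z ^ 2 + pdy f z ^ 2) := by
  obtain ⟨a, b, c, d, hf, hG, h1, h2⟩ := h
  rw [jac, pdx_of hf, pdy_of hf, pdx_of hG, pdy_of hG]
  exact ⟨h1, h2⟩

/-- The Dirichlet density `|∇F₁|² + |∇F₂|²`. -/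
def Dsq (F₁ F₂ : ℝ × ℝ → ℝ) (z : ℝ × ℝ) : ℝ :=
  pdx F₁ z ^ 2 + pdy F₁ z ^ 2 + (pdx F₂ z ^ 2 + pdy F₂ z ^ 2)

/-- A Courant–Lebesgue lemma. With `Φ = ∮ F₁ dG₁ + ∮ F₂ dG₂`, the pair conditions bound both `Φ` and
the left-hand side by Cauchy–Schwarz in terms of `Φ' = ∮ ({F₁, G₁} + {F₂, G₂})`, and
`exists_small_deriv` finds a circle where `Φ'` is of order `1 / L²`. -/
lemma exists_good_circle {F₁ F₂ G₁ G₂ : ℝ × ℝ → ℝ} (hF₁ : ContDiff ℝ 1 F₁) (hF₂ : ContDiff ℝ 1 F₂)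
    (hG₁ : ContDiff ℝ 1 G₁) (hG₂ : ContDiff ℝ 1 G₂)
    (pF₁ : ∀ s θ, F₁ (s, θ + 2 * π) = F₁ (s, θ)) (pF₂ : ∀ s θ, F₂ (s, θ + 2 * π) = F₂ (s, θ))
    (pG₁ : ∀ s θ, G₁ (s, θ + 2 * π) = G₁ (s, θ)) (pG₂ : ∀ s θ, G₂ (s, θ + 2 * π) = G₂ (s, θ))
    {L : ℝ} (hL : 0 < L)
    (hp : ∀ s ≤ 0, ∀ θ, PairAt F₁ G₁ (Wf F₁ F₂ (s, θ)) (s, θ) ∧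
      PairAt F₂ G₂ (Wf F₁ F₂ (s, θ)) (s, θ)) :
    ∃ s ∈ Icc (-L) 0, ∫ θ in (0)..(2 * π), √(Dsq F₁ F₂ (s, θ)) / Wf F₁ F₂ (s, θ) ≤ 2000 / L := by
  have pi0 := Real.pi_pos
  obtain ⟨cx1, cy1, -⟩ := cd_pd hF₁
  obtain ⟨cx2, cy2, -⟩ := cd_pd hF₂
  obtain ⟨cGx1, cGy1, -⟩ := cd_pd hG₁
  obtain ⟨cGx2, cGy2, -⟩ := cd_pd hG₂
  have c1 := hF₁.continuous
  have c2 := hF₂.continuous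
  have cD : Continuous (Dsq F₁ F₂) := by unfold Dsq; fun_prop
  have cW : Continuous (Wf F₁ F₂) := by unfold Wf; fun_prop
  have hW0 : ∀ z, Wf F₁ F₂ z ≠ 0 := fun z => by linarith [one_le_Wf F₁ F₂ z]
  have cq : Continuous fun z => √(Dsq F₁ F₂ z) / Wf F₁ F₂ z := by
    exact cD.sqrt.div cW hW0
  set Φ : ℝ → ℝ := fun s => (∫ θ in (0)..(2 * π), F₁ (s, θ) * pdy G₁ (s, θ)) +
    ∫ θ in (0)..(2 * π), F₂ (s, θ) * pdy G₂ (s, θ) with hΦ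
  set e : ℝ → ℝ := fun s => ∫ θ in (0)..(2 * π), (jac F₁ G₁ (s, θ) + jac F₂ G₂ (s, θ)) with he
  have cj1 : Continuous (jac F₁ G₁) := by unfold jac; fun_prop
  have cj2 : Continuous (jac F₂ G₂) := by unfold jac; fun_prop
  have hd : ∀ s, HasDerivAt Φ (e s) s := by
    intro s
    refine ((null_lagrangian hF₁ hG₁ pF₁ pG₁ s).add
      (null_lagrangian hF₂ hG₂ pF₂ pG₂ s)).congr_deriv ?_
    rw [he]
    simp only
    rw [intervalIntegral.integral_add]
    · rfl
    all_goals exact Continuous.intervalIntegrable (by fun_prop) _ _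
  have hDj : ∀ s ≤ 0, ∀ θ, (√(Dsq F₁ F₂ (s, θ)) / Wf F₁ F₂ (s, θ)) ^ 2
      ≤ 9 * (jac F₁ G₁ (s, θ) + jac F₂ G₂ (s, θ)) := by
    intro s hs θ
    obtain ⟨h1, h2⟩ := hp s hs θ
    have hW := one_le_Wf F₁ F₂ (s, θ)
    rw [div_pow, Real.sq_sqrt (by unfold Dsq; positivity), div_le_iff₀ (by positivity), Dsq]
    have := h1.pd.1
    have := h2.pd.1
    linarith
  have hkj : ∀ s ≤ 0, ∀ θ, (F₁ (s, θ) * pdy G₁ (s, θ) + F₂ (s, θ) * pdy G₂ (s, θ)) ^ 2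
      ≤ 540 * (jac F₁ G₁ (s, θ) + jac F₂ G₂ (s, θ)) := by
    intro s hs θ
    obtain ⟨h1, h2⟩ := hp s hs θ
    have hW := one_le_Wf F₁ F₂ (s, θ)
    have hWs := Wf_sq F₁ F₂ (s, θ)
    have a1 := h1.pd
    have a2 := h2.pd
    set W := Wf F₁ F₂ (s, θ)
    have b1 : (F₁ (s, θ) * pdy G₁ (s, θ) + F₂ (s, θ) * pdy G₂ (s, θ)) ^ 2
        ≤ W ^ 2 * (pdy G₁ (s, θ) ^ 2 + pdy G₂ (s, θ) ^ 2) := by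
      rw [hWs]
      nlinarith [sq_nonneg (F₁ (s, θ) * pdy G₂ (s, θ) - F₂ (s, θ) * pdy G₁ (s, θ)),
        sq_nonneg (pdy G₁ (s, θ)), sq_nonneg (pdy G₂ (s, θ))]
    have b2 : W ^ 4 * (pdy G₁ (s, θ) ^ 2 + pdy G₂ (s, θ) ^ 2) ≤
        W ^ 2 * (540 * (jac F₁ G₁ (s, θ) + jac F₂ G₂ (s, θ))) := by
      have : 0 ≤ W ^ 4 * (pdx G₁ (s, θ) ^ 2 + pdx G₂ (s, θ) ^ 2) := by positivity
      linarith [a1.1, a1.2, a2.1, a2.2]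
    refine b1.trans (le_of_mul_le_mul_left ?_ (by positivity : 0 < W ^ 2))
    linarith
  obtain ⟨s, hs, hes⟩ := exists_small_deriv (C := 1080 * π) (L := L) (by positivity) hL
    (fun s _ => hd s) (fun s hs => by
      have h1 : Φ s = ∫ θ in (0)..(2 * π),
          (F₁ (s, θ) * pdy G₁ (s, θ) + F₂ (s, θ) * pdy G₂ (s, θ)) := by
        rw [intervalIntegral.integral_add]
        all_goals exact Continuous.intervalIntegrable (by fun_prop) _ _
      rw [h1]
      refine (cauchy_schwarz_circle (by fun_prop)).trans ?_
      rw [show 1080 * π * e s = 2 * π * (540 * e s) by ring]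
      refine mul_le_mul_of_nonneg_left ?_ (by positivity : (0 : ℝ) ≤ 2 * π)
      rw [he, ← intervalIntegral.integral_const_mul]
      refine intervalIntegral.integral_mono_on (by positivity : (0 : ℝ) ≤ 2 * π)
        (Continuous.intervalIntegrable (by fun_prop) _ _)
        (Continuous.intervalIntegrable (by fun_prop) _ _) fun θ _ => hkj s hs.2 θ)
  refine ⟨s, hs, ?_⟩
  refine (le_abs_self _).trans (abs_le_of_sq_le_sq ?_ (by positivity))
  refine (cauchy_schwarz_circle (k := fun θ => √(Dsq F₁ F₂ (s, θ)) / Wf F₁ F₂ (s, θ))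
    (cq.comp (by fun_prop : Continuous fun θ : ℝ => (s, θ)))).trans ?_
  have h2 : ∫ θ in (0)..(2 * π), (√(Dsq F₁ F₂ (s, θ)) / Wf F₁ F₂ (s, θ)) ^ 2 ≤ 9 * e s := by
    rw [he, ← intervalIntegral.integral_const_mul]
    refine intervalIntegral.integral_mono_on (by positivity : (0 : ℝ) ≤ 2 * π)
        (Continuous.intervalIntegrable ?_ _ _)
        (Continuous.intervalIntegrable (by fun_prop) _ _) fun θ _ => hDj s hs.2 θ
    exact (cq.comp (by fun_prop : Continuous fun θ : ℝ => (s, θ))).pow 2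
  have hpi : π ^ 2 ≤ 10 := by nlinarith [Real.pi_lt_d2]
  calc 2 * π * ∫ θ in (0)..(2 * π), (√(Dsq F₁ F₂ (s, θ)) / Wf F₁ F₂ (s, θ)) ^ 2
      ≤ 2 * π * (9 * (18 * (1080 * π) / L ^ 2)) := by
        refine mul_le_mul_of_nonneg_left ?_ (by positivity)
        linarith
    _ = 349920 * π ^ 2 / L ^ 2 := by ring
    _ ≤ 349920 * 10 / L ^ 2 := by gcongr
    _ ≤ (2000 / L) ^ 2 := by rw [div_pow]; gcongr; norm_num

/-- Logarithmic polar coordinates. -/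
def polarE (z : ℝ × ℝ) : ℝ × ℝ := (exp z.1 * cos z.2, exp z.1 * sin z.2)

lemma polarE_contDiff : ContDiff ℝ 1 polarE := by unfold polarE; fun_prop

lemma polarE_periodic (s θ : ℝ) : polarE (s, θ + 2 * π) = polarE (s, θ) := by
  simp [polarE]

lemma polarE_sq (z : ℝ × ℝ) : (polarE z).1 ^ 2 + (polarE z).2 ^ 2 = exp z.1 ^ 2 := by
  simp only [polarE]
  linear_combination exp z.1 ^ 2 * Real.sin_sq_add_cos_sq z.2

lemma hl_polar {f : ℝ × ℝ → ℝ} {a b : ℝ} {z : ℝ × ℝ} (hf : HasFDerivAt f (lin1 a b) (polarE z)) :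
    HasFDerivAt (fun z => f (polarE z)) (lin1 (exp z.1 * (a * cos z.2 + b * sin z.2))
      (exp z.1 * (-a * sin z.2 + b * cos z.2))) z := by
  have h1 := hl_scomp (Real.hasDerivAt_exp z.1) (hl_fst z)
  have h2 := hl_scomp (Real.hasDerivAt_cos z.2) (hl_snd z)
  have h3 := hl_scomp (Real.hasDerivAt_sin z.2) (hl_snd z)
  exact (hl_comp hf ((hl_mul h1 h2).prodMk (hl_mul h1 h3))).lin1_congr (by ring) (by ring)

lemma PairAt.polar {f G : ℝ × ℝ → ℝ} {W : ℝ} {z : ℝ × ℝ} (h : PairAt f G W (polarE z)) :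
    PairAt (fun z => f (polarE z)) (fun z => G (polarE z)) W z := by
  obtain ⟨a, b, c, d, hf, hG, h1, h2⟩ := h
  refine ⟨_, _, _, _, hl_polar hf, hl_polar hG, ?_, ?_⟩
  · have e1 : (exp z.1 * (a * cos z.2 + b * sin z.2)) ^ 2 +
        (exp z.1 * (-a * sin z.2 + b * cos z.2)) ^ 2 = exp z.1 ^ 2 * (a ^ 2 + b ^ 2) := by
      linear_combination exp z.1 ^ 2 * (a ^ 2 + b ^ 2) * Real.sin_sq_add_cos_sq z.2
    have e2 : exp z.1 * (a * cos z.2 + b * sin z.2) * (exp z.1 * (-c * sin z.2 + d * cos z.2)) -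
        exp z.1 * (-a * sin z.2 + b * cos z.2) * (exp z.1 * (c * cos z.2 + d * sin z.2))
        = exp z.1 ^ 2 * (a * d - b * c) := by
      linear_combination exp z.1 ^ 2 * (a * d - b * c) * Real.sin_sq_add_cos_sq z.2
    rw [e1, e2]
    have := mul_le_mul_of_nonneg_left h1 (sq_nonneg (exp z.1))
    linarith
  · have e1 : (exp z.1 * (a * cos z.2 + b * sin z.2)) ^ 2 +
        (exp z.1 * (-a * sin z.2 + b * cos z.2)) ^ 2 = exp z.1 ^ 2 * (a ^ 2 + b ^ 2) := by
      linear_combination exp z.1 ^ 2 * (a ^ 2 + b ^ 2) * Real.sin_sq_add_cos_sq z.2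
    have e2 : (exp z.1 * (c * cos z.2 + d * sin z.2)) ^ 2 +
        (exp z.1 * (-c * sin z.2 + d * cos z.2)) ^ 2 = exp z.1 ^ 2 * (c ^ 2 + d ^ 2) := by
      linear_combination exp z.1 ^ 2 * (c ^ 2 + d ^ 2) * Real.sin_sq_add_cos_sq z.2
    rw [e1, e2]
    have := mul_le_mul_of_nonneg_left h2 (sq_nonneg (exp z.1))
    linarith

lemma exists_polarE {ζ : ℝ × ℝ} (h : 0 < ζ.1 ^ 2 + ζ.2 ^ 2) :
    ∃ s, ∃ θ ∈ Icc 0 (2 * π), polarE (s, θ) = ζ := by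
  have pi0 := Real.pi_pos
  set c : ℂ := ⟨ζ.1, ζ.2⟩ with hc
  have hc0 : c ≠ 0 := by
    intro h0
    have h1 : ζ.1 = 0 := congrArg Complex.re h0
    have h2 : ζ.2 = 0 := congrArg Complex.im h0
    rw [h1, h2] at h; simp at h
  have hn : 0 < ‖c‖ := norm_pos_iff.2 hc0
  have e1 : ‖c‖ * cos c.arg = ζ.1 := Complex.norm_mul_cos_arg c
  have e2 : ‖c‖ * sin c.arg = ζ.2 := Complex.norm_mul_sin_arg c
  have hb := Complex.arg_mem_Ioc c
  rcases le_or_gt 0 c.arg with h0 | h0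
  · refine ⟨Real.log ‖c‖, c.arg, ⟨h0, by linarith [hb.2]⟩, ?_⟩
    simp [polarE, Real.exp_log hn, e1, e2]
  · refine ⟨Real.log ‖c‖, c.arg + 2 * π, ⟨by linarith [hb.1], by linarith⟩, ?_⟩
    simp [polarE, Real.exp_log hn, e1, e2]

/-- Bounds needed at the centre of the disc, which corresponds to `s = -∞`. -/
lemma polar_bounds {f : ℝ × ℝ → ℝ} (hf : ContDiff ℝ 1 f) : ∃ C, ∀ s ≤ 0, ∀ θ,
    |f (polarE (s, θ))| ≤ C ∧ |pdy (fun z => f (polarE z)) (s, θ)| ≤ C * exp s := by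
  obtain ⟨cx, cy, df⟩ := cd_pd hf
  have hK := isCompact_closedBall (0 : ℝ × ℝ) 1
  obtain ⟨C0, h0⟩ := hK.exists_bound_of_continuousOn hf.continuous.continuousOn
  obtain ⟨C1, h1⟩ := hK.exists_bound_of_continuousOn cx.continuousOn
  obtain ⟨C2, h2⟩ := hK.exists_bound_of_continuousOn cy.continuousOn
  have hmem : ∀ s ≤ 0, ∀ θ, polarE (s, θ) ∈ Metric.closedBall (0 : ℝ × ℝ) 1 := by
    intro s hs θ
    rw [mem_closedBall_zero_iff]
    apply norm_le_of_sq zero_le_one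
    rw [polarE_sq]
    have := Real.exp_le_one_iff.2 hs
    exact pow_le_pow_left₀ (Real.exp_pos s).le this 2
  have hz : (0 : ℝ × ℝ) ∈ Metric.closedBall (0 : ℝ × ℝ) 1 := by simp
  have p0 := (norm_nonneg _).trans (h0 0 hz)
  have p1 := (norm_nonneg _).trans (h1 0 hz)
  have p2 := (norm_nonneg _).trans (h2 0 hz)
  refine ⟨C0 + C1 + C2, fun s hs θ => ⟨?_, ?_⟩⟩
  · have := h0 _ (hmem s hs θ)
    rw [Real.norm_eq_abs] at this
    linarith
  · rw [pdy_of (hl_polar (df _)), abs_mul, abs_of_pos (Real.exp_pos _), mul_comm]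
    have a1 := h1 _ (hmem s hs θ)
    have a2 := h2 _ (hmem s hs θ)
    rw [Real.norm_eq_abs] at a1 a2
    have b1 := Real.abs_sin_le_one θ
    have b2 := Real.abs_cos_le_one θ
    refine mul_le_mul_of_nonneg_right ?_ (Real.exp_pos _).le
    refine (abs_add_le _ _).trans ?_
    rw [abs_mul, abs_mul, abs_neg]
    have : |pdx f (polarE (s, θ))| * |sin θ| ≤ C1 * 1 := by gcongr
    have : |pdy f (polarE (s, θ))| * |cos θ| ≤ C2 * 1 := by gcongr
    linarith

/-! ### From circles to discs -/

/-- Two-sided maximum principle. -/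
lemma max_abs {f G : ℝ × ℝ → ℝ} (hf : ContDiff ℝ 1 f) (hG : ContDiff ℝ 1 G) {s₀ m₀ M : ℝ}
    (hs₀ : s₀ ≤ 0)
    (hJ : ∀ s ≤ s₀, ∀ θ, 0 ≤ jac (fun z => f (polarE z)) (fun z => G (polarE z)) (s, θ))
    (hJ0 : ∀ s ≤ s₀, ∀ θ, jac (fun z => f (polarE z)) (fun z => G (polarE z)) (s, θ) = 0 →
      pdx (fun z => f (polarE z)) (s, θ) = 0)
    (hM : ∀ θ ∈ Icc 0 (2 * π), |f (polarE (s₀, θ)) - m₀| ≤ M) :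
    ∀ s ≤ s₀, ∀ θ ∈ Icc 0 (2 * π), |f (polarE (s, θ)) - m₀| ≤ M := by
  obtain ⟨C1, h1⟩ := polar_bounds hf
  obtain ⟨C2, h2⟩ := polar_bounds hG
  have cF : ContDiff ℝ 1 fun z => f (polarE z) := hf.comp polarE_contDiff
  have cG : ContDiff ℝ 1 fun z => G (polarE z) := hG.comp polarE_contDiff
  have pF : ∀ s θ, f (polarE (s, θ + 2 * π)) = f (polarE (s, θ)) := fun s θ => by
    rw [polarE_periodic]
  have pG : ∀ s θ, G (polarE (s, θ + 2 * π)) = G (polarE (s, θ)) := fun s θ => by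
    rw [polarE_periodic]
  have nF : ∀ z, pdx (fun z => -f (polarE z)) z = -pdx (fun z => f (polarE z)) z ∧
      pdy (fun z => -f (polarE z)) z = -pdy (fun z => f (polarE z)) z := fun z => by
    have := ((cd_pd cF).2.2 z).neg
    have h : HasFDerivAt (fun z => -f (polarE z)) (lin1 (-pdx (fun z => f (polarE z)) z)
      (-pdy (fun z => f (polarE z)) z)) z := this.congr_fderiv (by ext <;> simp)
    exact ⟨pdx_of h, pdy_of h⟩
  have nG : ∀ z, pdx (fun z => -G (polarE z)) z = -pdx (fun z => G (polarE z)) z ∧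
      pdy (fun z => -G (polarE z)) z = -pdy (fun z => G (polarE z)) z := fun z => by
    have := ((cd_pd cG).2.2 z).neg
    have h : HasFDerivAt (fun z => -G (polarE z)) (lin1 (-pdx (fun z => G (polarE z)) z)
      (-pdy (fun z => G (polarE z)) z)) z := this.congr_fderiv (by ext <;> simp)
    exact ⟨pdx_of h, pdy_of h⟩
  have jn : ∀ z, jac (fun z => -f (polarE z)) (fun z => -G (polarE z)) z =
      jac (fun z => f (polarE z)) (fun z => G (polarE z)) z := fun z => by
    simp only [jac, (nF z).1, (nF z).2, (nG z).1, (nG z).2]; ring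
  have u1 := max_polar (F := fun z => f (polarE z)) (G := fun z => G (polarE z)) (s₀ := s₀)
    (C := max C1 C2) (M := m₀ + M) cF cG pF pG hJ hJ0
    (fun s hs θ => ((h1 s (hs.trans hs₀) θ).1).trans (le_max_left _ _))
    (fun s hs θ => ((h2 s (hs.trans hs₀) θ).2).trans
      (mul_le_mul_of_nonneg_right (le_max_right _ _) (Real.exp_pos _).le))
    (fun θ hθ => by linarith [(abs_le.1 (hM θ hθ)).2])
  have u2 := max_polar (F := fun z => -f (polarE z)) (G := fun z => -G (polarE z)) (s₀ := s₀)
    (C := max C1 C2) (M := -m₀ + M) cF.neg cG.neg (fun s θ => by rw [pF]) (fun s θ => by rw [pG])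
    (fun s hs θ => by rw [jn]; exact hJ s hs θ)
    (fun s hs θ h => by rw [jn] at h; rw [(nF _).1, hJ0 s hs θ h, neg_zero])
    (fun s hs θ => by rw [abs_neg]; exact ((h1 s (hs.trans hs₀) θ).1).trans (le_max_left _ _))
    (fun s hs θ => by
      rw [(nG _).2, abs_neg]
      exact ((h2 s (hs.trans hs₀) θ).2).trans
        (mul_le_mul_of_nonneg_right (le_max_right _ _) (Real.exp_pos _).le))
    (fun θ hθ => by linarith [(abs_le.1 (hM θ hθ)).1])
  intro s hs θ hθ
  have := u1 s hs θ hθ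
  have := u2 s hs θ hθ
  exact abs_le.2 ⟨by linarith, by linarith⟩

lemma tendsto_polarE_zero : Tendsto (fun s : ℝ => polarE (s, 0)) atBot (nhds 0) := by
  have : Tendsto (fun s : ℝ => (exp s * cos 0, exp s * sin 0)) atBot (nhds (0 * cos 0, 0 * sin 0)) :=
    (Real.tendsto_exp_atBot.mul_const _).prodMk_nhds (Real.tendsto_exp_atBot.mul_const _)
  have h0 : ((0 : ℝ) * cos 0, (0 : ℝ) * sin 0) = (0 : ℝ × ℝ) := by simp
  rw [h0] at this
  exact this

/-- From a bound on log-polar circles to a bound on the disc (the value at the centre by continuity). -/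
lemma disc_of_polar {f : ℝ × ℝ → ℝ} (hf : Continuous f) {s₀ m₀ M : ℝ}
    (h : ∀ s ≤ s₀, ∀ θ ∈ Icc 0 (2 * π), |f (polarE (s, θ)) - m₀| ≤ M) :
    ∀ ζ : ℝ × ℝ, ζ.1 ^ 2 + ζ.2 ^ 2 ≤ exp s₀ ^ 2 → |f ζ - m₀| ≤ M := by
  intro ζ hζ
  rcases (by positivity : 0 ≤ ζ.1 ^ 2 + ζ.2 ^ 2).eq_or_lt with h0 | h0
  · have hz : ζ = 0 := by
      have a1 : ζ.1 ^ 2 = 0 := by nlinarith [sq_nonneg ζ.1, sq_nonneg ζ.2]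
      have a2 : ζ.2 ^ 2 = 0 := by nlinarith [sq_nonneg ζ.1, sq_nonneg ζ.2]
      exact Prod.ext (by simpa using a1) (by simpa using a2)
    subst hz
    have t := ((hf.tendsto 0).comp tendsto_polarE_zero).sub_const m₀ |>.abs
    refine le_of_tendsto t ?_
    filter_upwards [eventually_le_atBot s₀] with s hs
    exact h s hs 0 ⟨le_rfl, by positivity⟩
  · obtain ⟨s, θ, hθ, he⟩ := exists_polarE h0
    have hs : s ≤ s₀ := by
      have := polarE_sq (s, θ)
      rw [he] at this
      rw [this] at hζ
      exact Real.exp_le_exp.1 (abs_le_of_sq_le_sq hζ (Real.exp_pos _).le |> (le_abs_self _).trans)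
    rw [← he]
    exact h s hs θ hθ

/-- Oscillation of a function of the angle, via the fundamental theorem of calculus. -/
lemma osc_circle {F : ℝ × ℝ → ℝ} (hF : ContDiff ℝ 1 F) {s I : ℝ} {k : ℝ → ℝ} (hk : Continuous k)
    (hb : ∀ θ ∈ Icc 0 (2 * π), |pdy F (s, θ)| ≤ k θ) (hI : ∫ θ in (0)..(2 * π), k θ ≤ I)
    {θ₁ θ₂ : ℝ} (h₁ : θ₁ ∈ Icc 0 (2 * π)) (h₂ : θ₂ ∈ Icc 0 (2 * π)) :
    |F (s, θ₁) - F (s, θ₂)| ≤ I := by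
  wlog hle : θ₂ ≤ θ₁ generalizing θ₁ θ₂
  · rw [abs_sub_comm]; exact this h₂ h₁ (le_of_not_ge hle)
  obtain ⟨cx, cy, dF⟩ := cd_pd hF
  have cy' : Continuous fun θ => pdy F (s, θ) := by fun_prop
  have ftc : ∫ θ in θ₂..θ₁, pdy F (s, θ) = F (s, θ₁) - F (s, θ₂) :=
    intervalIntegral.integral_eq_sub_of_hasDerivAt (fun θ _ => hd_snd (dF _))
      (cy'.intervalIntegrable _ _)
  rw [← ftc]
  refine (intervalIntegral.abs_integral_le_integral_abs hle).trans (le_trans ?_ hI)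
  calc ∫ θ in θ₂..θ₁, |pdy F (s, θ)| ≤ ∫ θ in θ₂..θ₁, k θ :=
        intervalIntegral.integral_mono_on hle (cy'.abs.intervalIntegrable _ _)
          (hk.intervalIntegrable _ _) fun θ hθ => hb θ ⟨h₂.1.trans hθ.1, hθ.2.trans h₁.2⟩
    _ ≤ ∫ θ in (0)..(2 * π), k θ := by
        refine intervalIntegral.integral_mono_interval h₂.1 hle h₁.2 ?_ (hk.intervalIntegrable _ _)
        filter_upwards [ae_restrict_mem measurableSet_Ioc] with θ hθ
        exact (abs_nonneg _).trans (hb θ ⟨hθ.1.le, hθ.2⟩)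

/-! ### Estimates inside a good circle -/

lemma PairAt.jac_nonneg {f G : ℝ × ℝ → ℝ} {W : ℝ} {z : ℝ × ℝ} (hW : 1 ≤ W) (h : PairAt f G W z) :
    0 ≤ jac f G z ∧ (jac f G z = 0 → pdx f z = 0 ∧ pdx G z = 0) := by
  obtain ⟨h1, h2⟩ := h.pd
  have hW2 : 0 < 9 * W ^ 2 := by positivity
  have h3 : 0 ≤ 9 * W ^ 2 * jac f G z := le_trans (by positivity) h1
  refine ⟨nonneg_of_mul_nonneg_right h3 hW2, fun h0 => ?_⟩
  rw [h0, mul_zero] at h1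
  have a1 : pdx f z ^ 2 + pdy f z ^ 2 = 0 := le_antisymm h1 (by positivity)
  rw [a1, mul_zero] at h2
  have h4 : pdx G z ^ 2 + pdy G z ^ 2 ≤ 0 :=
    le_of_mul_le_mul_left (by rw [mul_zero]; exact h2) (by positivity : 0 < W ^ 4)
  constructor
  · have : pdx f z ^ 2 = 0 := by linarith [sq_nonneg (pdx f z), sq_nonneg (pdy f z)]
    simpa using this
  · have : pdx G z ^ 2 = 0 := by linarith [sq_nonneg (pdx G z), sq_nonneg (pdy G z)]
    simpa using this

lemma osc_G_aux {W W₀ g D : ℝ} (hW : 1 ≤ W) (hWW : W₀ ≤ 2 * W) (hW₀ : 1 ≤ W₀)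
    (h : W ^ 4 * g ^ 2 ≤ 60 * D) (hD : 0 ≤ D) : |g| ≤ 16 / W₀ * (√D / W) := by
  have e : 16 / W₀ * (√D / W) = (16 * √D) / (W₀ * W) := by field_simp
  rw [e, le_div_iff₀ (by positivity)]
  have h1 : W ^ 2 * |g| ≤ 8 * √D := by
    refine le_trans (le_abs_self _) (abs_le_of_sq_le_sq ?_ (by positivity))
    rw [mul_pow, mul_pow, sq_abs, Real.sq_sqrt hD]
    nlinarith
  have : |g| * (W₀ * W) ≤ |g| * (2 * W * W) := by gcongr
  nlinarith

/-- The estimates obtained on one good circle and inside it. -/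
lemma disc_est {f₁ f₂ G₁ G₂ : ℝ × ℝ → ℝ} (hf₁ : ContDiff ℝ 1 f₁) (hf₂ : ContDiff ℝ 1 f₂)
    (hG₁ : ContDiff ℝ 1 G₁) (hG₂ : ContDiff ℝ 1 G₂)
    (hp : ∀ ζ : ℝ × ℝ, ζ.1 ^ 2 + ζ.2 ^ 2 ≤ 1 → PairAt f₁ G₁ (Wf f₁ f₂ ζ) ζ ∧
      PairAt f₂ G₂ (Wf f₁ f₂ ζ) ζ) {L σ : ℝ} (hL : 0 < L) (hσ : 2000 / L ≤ σ) (hσ' : σ ≤ 1 / 8) :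
    ∃ W₀ ≥ 1, ∃ ζ₀ : ℝ × ℝ, Wf f₁ f₂ ζ₀ = W₀ ∧
      ∀ ζ : ℝ × ℝ, ζ.1 ^ 2 + ζ.2 ^ 2 ≤ exp (-L) ^ 2 →
      (|f₁ ζ - f₁ ζ₀| ≤ W₀ * σ ∧ |f₂ ζ - f₂ ζ₀| ≤ W₀ * σ) ∧
      (|G₁ ζ - G₁ ζ₀| ≤ 16 / W₀ * σ ∧ |G₂ ζ - G₂ ζ₀| ≤ 16 / W₀ * σ) := by
  have pi0 := Real.pi_pos
  have hσ0 : 0 < σ := lt_of_lt_of_le (by positivity) hσ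
  have cF₁ : ContDiff ℝ 1 fun z => f₁ (polarE z) := hf₁.comp polarE_contDiff
  have cF₂ : ContDiff ℝ 1 fun z => f₂ (polarE z) := hf₂.comp polarE_contDiff
  have cG₁ : ContDiff ℝ 1 fun z => G₁ (polarE z) := hG₁.comp polarE_contDiff
  have cG₂ : ContDiff ℝ 1 fun z => G₂ (polarE z) := hG₂.comp polarE_contDiff
  have hdisc : ∀ s ≤ 0, ∀ θ, (polarE (s, θ)).1 ^ 2 + (polarE (s, θ)).2 ^ 2 ≤ 1 := by
    intro s hs θ
    rw [polarE_sq]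
    have := Real.exp_le_one_iff.2 hs
    have := pow_le_pow_left₀ (Real.exp_pos s).le this 2
    simpa using this
  set F₁ : ℝ × ℝ → ℝ := fun z => f₁ (polarE z) with hF₁
  set F₂ : ℝ × ℝ → ℝ := fun z => f₂ (polarE z) with hF₂
  set K₁ : ℝ × ℝ → ℝ := fun z => G₁ (polarE z) with hK₁
  set K₂ : ℝ × ℝ → ℝ := fun z => G₂ (polarE z) with hK₂
  have hp' : ∀ s ≤ 0, ∀ θ, PairAt F₁ K₁ (Wf F₁ F₂ (s, θ)) (s, θ) ∧
      PairAt F₂ K₂ (Wf F₁ F₂ (s, θ)) (s, θ) := fun s hs θ =>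
    ⟨(hp _ (hdisc s hs θ)).1.polar, (hp _ (hdisc s hs θ)).2.polar⟩
  obtain ⟨s, hs, h_circle⟩ := exists_good_circle cF₁ cF₂ cG₁ cG₂
    (fun s θ => by simp only [hF₁]; rw [polarE_periodic])
    (fun s θ => by simp only [hF₂]; rw [polarE_periodic])
    (fun s θ => by simp only [hK₁]; rw [polarE_periodic])
    (fun s θ => by simp only [hK₂]; rw [polarE_periodic]) hL hp'
  have cW : Continuous (Wf F₁ F₂) := by
    have := cF₁.continuous
    have := cF₂.continuous
    unfold Wf; fun_prop
  have cD : Continuous (Dsq F₁ F₂) := by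
    obtain ⟨_, _, -⟩ := cd_pd cF₁
    obtain ⟨_, _, -⟩ := cd_pd cF₂
    unfold Dsq; fun_prop
  have hD0 : ∀ z, 0 ≤ Dsq F₁ F₂ z := fun z => by unfold Dsq; positivity
  have cq : Continuous fun θ => √(Dsq F₁ F₂ (s, θ)) / Wf F₁ F₂ (s, θ) := by
    have h1 : Continuous fun θ : ℝ => (s, θ) := by fun_prop
    exact (cD.comp h1).sqrt.div (cW.comp h1) fun θ => by
      exact (zero_lt_one.trans_le (one_le_Wf F₁ F₂ (s, θ))).ne'
  obtain ⟨θm, hθm, hmax⟩ := (isCompact_Icc (a := (0 : ℝ)) (b := 2 * π)).exists_isMaxOn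
    ⟨0, le_rfl, by positivity⟩ (cW.comp (by fun_prop : Continuous fun θ : ℝ => (s, θ))).continuousOn
  set W₀ := Wf F₁ F₂ (s, θm) with hW₀
  have hW₀1 : 1 ≤ W₀ := one_le_Wf _ _ _
  have hle : ∀ θ ∈ Icc 0 (2 * π), Wf F₁ F₂ (s, θ) ≤ W₀ := fun θ hθ => hmax hθ
  have hIF : ∫ θ in (0)..(2 * π), W₀ * (√(Dsq F₁ F₂ (s, θ)) / Wf F₁ F₂ (s, θ)) ≤ W₀ * σ := by
    rw [intervalIntegral.integral_const_mul]
    exact mul_le_mul_of_nonneg_left (h_circle.trans hσ) (by positivity)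
  have hIG : ∫ θ in (0)..(2 * π), 16 / W₀ * (√(Dsq F₁ F₂ (s, θ)) / Wf F₁ F₂ (s, θ))
      ≤ 16 / W₀ * σ := by
    rw [intervalIntegral.integral_const_mul]
    exact mul_le_mul_of_nonneg_left (h_circle.trans hσ) (by positivity)
  have hsq : ∀ θ ∈ Icc 0 (2 * π), √(Dsq F₁ F₂ (s, θ)) ≤
      W₀ * (√(Dsq F₁ F₂ (s, θ)) / Wf F₁ F₂ (s, θ)) := by
    intro θ hθ
    have h1 := one_le_Wf F₁ F₂ (s, θ)
    rw [← mul_div_assoc, le_div_iff₀ (by positivity), mul_comm]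
    exact mul_le_mul_of_nonneg_right (hle θ hθ) (Real.sqrt_nonneg _)
  have cqF : Continuous fun θ => W₀ * (√(Dsq F₁ F₂ (s, θ)) / Wf F₁ F₂ (s, θ)) :=
    continuous_const.mul cq
  have cqG : Continuous fun θ => 16 / W₀ * (√(Dsq F₁ F₂ (s, θ)) / Wf F₁ F₂ (s, θ)) :=
    continuous_const.mul cq
  have hD1 : ∀ z, |pdy F₁ z| ≤ √(Dsq F₁ F₂ z) := fun z => by
    refine Real.abs_le_sqrt ?_
    unfold Dsq
    nlinarith [sq_nonneg (pdx F₁ z), sq_nonneg (pdx F₂ z), sq_nonneg (pdy F₂ z)]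
  have hD2 : ∀ z, |pdy F₂ z| ≤ √(Dsq F₁ F₂ z) := fun z => by
    refine Real.abs_le_sqrt ?_
    unfold Dsq
    nlinarith [sq_nonneg (pdx F₁ z), sq_nonneg (pdx F₂ z), sq_nonneg (pdy F₁ z)]
  have o1 : ∀ θ ∈ Icc 0 (2 * π), |F₁ (s, θ) - F₁ (s, θm)| ≤ W₀ * σ := fun θ hθ =>
    osc_circle cF₁ cqF (fun θ hθ => (hD1 _).trans (hsq θ hθ)) hIF hθ hθm
  have o2 : ∀ θ ∈ Icc 0 (2 * π), |F₂ (s, θ) - F₂ (s, θm)| ≤ W₀ * σ := fun θ hθ =>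
    osc_circle cF₂ cqF (fun θ hθ => (hD2 _).trans (hsq θ hθ)) hIF hθ hθm
  have hWlow : ∀ θ ∈ Icc 0 (2 * π), W₀ ≤ 2 * Wf F₁ F₂ (s, θ) := by
    intro θ hθ
    have h1 := sqrt_lip (F₁ (s, θm)) (F₂ (s, θm)) (F₁ (s, θ)) (F₂ (s, θ))
    have h2 := o1 θ hθ
    have h3 := o2 θ hθ
    rw [abs_sub_comm] at h2 h3
    have h4 : W₀ ≤ Wf F₁ F₂ (s, θ) + |F₁ (s, θm) - F₁ (s, θ)| + |F₂ (s, θm) - F₂ (s, θ)| := h1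
    have h5 : W₀ * σ ≤ W₀ * (1 / 8) := mul_le_mul_of_nonneg_left hσ' (by positivity)
    linarith
  have o3 : ∀ θ ∈ Icc 0 (2 * π), |K₁ (s, θ) - K₁ (s, θm)| ≤ 16 / W₀ * σ := fun θ hθ =>
    osc_circle cG₁ cqG (fun θ hθ => by
      refine osc_G_aux (one_le_Wf _ _ _) (hWlow θ hθ) hW₀1 ?_ (hD0 _)
      have h1 := (hp' s hs.2 θ).1.pd.2
      have h2 : 0 ≤ Wf F₁ F₂ (s, θ) ^ 4 * pdx K₁ (s, θ) ^ 2 := by positivity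
      unfold Dsq
      linarith [sq_nonneg (pdx F₂ (s, θ)), sq_nonneg (pdy F₂ (s, θ))]) hIG hθ hθm
  have o4 : ∀ θ ∈ Icc 0 (2 * π), |K₂ (s, θ) - K₂ (s, θm)| ≤ 16 / W₀ * σ := fun θ hθ =>
    osc_circle cG₂ cqG (fun θ hθ => by
      refine osc_G_aux (one_le_Wf _ _ _) (hWlow θ hθ) hW₀1 ?_ (hD0 _)
      have h1 := (hp' s hs.2 θ).2.pd.2
      have h2 : 0 ≤ Wf F₁ F₂ (s, θ) ^ 4 * pdx K₂ (s, θ) ^ 2 := by positivity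
      unfold Dsq
      linarith [sq_nonneg (pdx F₁ (s, θ)), sq_nonneg (pdy F₁ (s, θ))]) hIG hθ hθm
  have nF : ∀ {f : ℝ × ℝ → ℝ}, ContDiff ℝ 1 f → ∀ z, pdx (fun z => -f z) z = -pdx f z ∧
      pdy (fun z => -f z) z = -pdy f z := fun {f} cf z => by
    have := ((cd_pd cf).2.2 z).neg
    have h : HasFDerivAt (fun z => -f z) (lin1 (-pdx f z) (-pdy f z)) z :=
      this.congr_fderiv (by ext <;> simp)
    exact ⟨pdx_of h, pdy_of h⟩
  have jsw : ∀ {f g : ℝ × ℝ → ℝ}, ContDiff ℝ 1 f → ∀ z, jac g (fun z => -f z) z = jac f g z :=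
    fun cf z => by simp only [jac, (nF cf z).1, (nF cf z).2]; ring
  have hexp : ∀ ζ : ℝ × ℝ, ζ.1 ^ 2 + ζ.2 ^ 2 ≤ exp (-L) ^ 2 → ζ.1 ^ 2 + ζ.2 ^ 2 ≤ exp s ^ 2 := by
    intro ζ h
    exact h.trans (pow_le_pow_left₀ (Real.exp_pos _).le (Real.exp_le_exp.2 hs.1) 2)
  have J1 := fun s' (h : s' ≤ s) θ => (hp' s' (h.trans hs.2) θ).1.jac_nonneg (one_le_Wf _ _ _)
  have J2 := fun s' (h : s' ≤ s) θ => (hp' s' (h.trans hs.2) θ).2.jac_nonneg (one_le_Wf _ _ _)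
  have m1 := max_abs hf₁ hG₁ hs.2 (fun s' h θ => (J1 s' h θ).1)
    (fun s' h θ h0 => ((J1 s' h θ).2 h0).1) o1
  have m2 := max_abs hf₂ hG₂ hs.2 (fun s' h θ => (J2 s' h θ).1)
    (fun s' h θ h0 => ((J2 s' h θ).2 h0).1) o2
  have m3 := max_abs hG₁ hf₁.neg hs.2 (fun s' h θ => le_of_le_of_eq (J1 s' h θ).1 (jsw cF₁ _).symm)
    (fun s' h θ h0 => ((J1 s' h θ).2 ((jsw cF₁ _).symm.trans h0)).2) o3
  have m4 := max_abs hG₂ hf₂.neg hs.2 (fun s' h θ => le_of_le_of_eq (J2 s' h θ).1 (jsw cF₂ _).symm)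
    (fun s' h θ h0 => ((J2 s' h θ).2 ((jsw cF₂ _).symm.trans h0)).2) o4
  refine ⟨W₀, hW₀1, polarE (s, θm), rfl, fun ζ hζ => ⟨⟨?_, ?_⟩, ?_, ?_⟩⟩
  · exact disc_of_polar hf₁.continuous m1 ζ (hexp ζ hζ)
  · exact disc_of_polar hf₂.continuous m2 ζ (hexp ζ hζ)
  · exact disc_of_polar hG₁.continuous m3 ζ (hexp ζ hζ)
  · exact disc_of_polar hG₂.continuous m4 ζ (hexp ζ hζ)

/-! ### Uniform modulus of continuity in a chart -/

/-- Quantitative continuity at the centre of the unit disc, with a modulus independent of the size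
of `Wf`. -/
lemma disc_osc {ε : ℝ} (hε : 0 < ε) : ∃ t > 0, t ≤ 1 ∧ ∀ f₁ f₂ G₁ G₂ : ℝ × ℝ → ℝ,
    ContDiff ℝ 1 f₁ → ContDiff ℝ 1 f₂ → ContDiff ℝ 1 G₁ → ContDiff ℝ 1 G₂ →
    (∀ ζ : ℝ × ℝ, ζ.1 ^ 2 + ζ.2 ^ 2 ≤ 1 → PairAt f₁ G₁ (Wf f₁ f₂ ζ) ζ ∧
      PairAt f₂ G₂ (Wf f₁ f₂ ζ) ζ) →
    ∀ ζ : ℝ × ℝ, ζ.1 ^ 2 + ζ.2 ^ 2 ≤ t ^ 2 →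
      (|f₁ ζ - f₁ 0| ≤ ε * Wf f₁ f₂ 0 ∧ |f₂ ζ - f₂ 0| ≤ ε * Wf f₁ f₂ 0) ∧
      (|G₁ ζ - G₁ 0| ≤ ε / Wf f₁ f₂ 0 ∧ |G₂ ζ - G₂ 0| ≤ ε / Wf f₁ f₂ 0) := by
  set σ := min (1 / 8) (ε / 64) with hσ
  have hσ0 : 0 < σ := by positivity
  have hσ8 : σ ≤ 1 / 8 := min_le_left _ _
  have hσε : 64 * σ ≤ ε := by have : σ ≤ ε / 64 := min_le_right _ _
                              linarith
  refine ⟨exp (-(2000 / σ)), Real.exp_pos _, Real.exp_le_one_iff.2 (by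
    have : 0 < 2000 / σ := by positivity
    linarith), ?_⟩
  intro f₁ f₂ G₁ G₂ hf₁ hf₂ hG₁ hG₂ hp ζ hζ
  obtain ⟨W₀, hW₀, ζ₀, hζ₀, hall⟩ := disc_est hf₁ hf₂ hG₁ hG₂ hp (L := 2000 / σ) (σ := σ)
    (by positivity) (by rw [div_div_eq_mul_div]; linarith) hσ8
  obtain ⟨⟨a1, a2⟩, a3, a4⟩ := hall ζ hζ
  obtain ⟨⟨b1, b2⟩, b3, b4⟩ := hall 0 (by
    have := sq_nonneg (exp (-(2000 / σ)))
    simpa using this)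
  have hm : W₀ * σ ≤ W₀ * (1 / 8) := mul_le_mul_of_nonneg_left hσ8 (by positivity)
  have l1 : W₀ ≤ Wf f₁ f₂ 0 + |f₁ ζ₀ - f₁ 0| + |f₂ ζ₀ - f₂ 0| := by
    rw [← hζ₀]; exact sqrt_lip _ _ _ _
  have l2 : Wf f₁ f₂ 0 ≤ W₀ + |f₁ 0 - f₁ ζ₀| + |f₂ 0 - f₂ ζ₀| := by
    rw [← hζ₀]; exact sqrt_lip _ _ _ _
  rw [abs_sub_comm (f₁ ζ₀), abs_sub_comm (f₂ ζ₀)] at l1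
  have l1' : W₀ ≤ 2 * Wf f₁ f₂ 0 := by linarith
  have l2' : Wf f₁ f₂ 0 ≤ 2 * W₀ := by linarith
  have hW := one_le_Wf f₁ f₂ 0
  set W := Wf f₁ f₂ 0
  have e1 : 2 * (W₀ * σ) ≤ ε * W := by nlinarith
  have e2 : 2 * (16 / W₀ * σ) ≤ ε / W := by
    rw [show 2 * (16 / W₀ * σ) = 32 * σ / W₀ by ring, div_le_div_iff₀ (by positivity) (by positivity)]
    nlinarith
  have tri : ∀ {x y z k : ℝ}, |x - z| ≤ k → |y - z| ≤ k → |x - y| ≤ 2 * k := fun {x y z k} h h' => by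
    have := abs_sub_le x z y
    rw [abs_sub_comm z y] at this
    linarith
  exact ⟨⟨(tri a1 b1).trans e1, (tri a2 b2).trans e1⟩, (tri a3 b3).trans e2, (tri a4 b4).trans e2⟩

/-- A `C¹` function on a disc, rescaled and cut off to a global one. -/
lemma exists_ext {f : ℝ × ℝ → ℝ} {ρ : ℝ} (hρ : 0 < ρ)
    (hf : ContDiffOn ℝ 1 f (Metric.ball 0 ρ)) :
    ∃ F : ℝ × ℝ → ℝ, ContDiff ℝ 1 F ∧ ∀ ζ : ℝ × ℝ, ‖ζ‖ ≤ 1 →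
      F =ᶠ[nhds ζ] fun ζ => f ((ρ / 4) • ζ) := by
  let χ : ContDiffBump (0 : ℝ × ℝ) := ⟨ρ / 2, 3 * ρ / 4, by positivity, by linarith⟩
  have h1 : ContDiff ℝ 1 fun z => χ z * f z := by
    rw [contDiff_iff_contDiffAt]
    intro z
    by_cases hz : ‖z‖ < ρ
    · exact χ.contDiff.contDiffAt.mul
        (hf.contDiffAt (Metric.isOpen_ball.mem_nhds (by simpa using hz)))
    · have : (fun z => χ z * f z) =ᶠ[nhds z] fun _ => 0 := by
        have ho : IsOpen {w : ℝ × ℝ | 3 * ρ / 4 < ‖w‖} := isOpen_lt continuous_const continuous_norm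
        filter_upwards [ho.mem_nhds (by show 3 * ρ / 4 < ‖z‖; linarith)] with w hw
        have : χ w = 0 := χ.zero_of_le_dist (by
          rw [dist_zero_right]; exact le_of_lt hw)
        rw [this, zero_mul]
      exact contDiffAt_const.congr_of_eventuallyEq this
  refine ⟨fun ζ => χ ((ρ / 4) • ζ) * f ((ρ / 4) • ζ), h1.comp (contDiff_const_smul _), ?_⟩
  intro ζ hζ
  have ho : IsOpen {w : ℝ × ℝ | ‖w‖ < 2} := isOpen_lt continuous_norm continuous_const
  filter_upwards [ho.mem_nhds (by show ‖ζ‖ < 2; linarith)] with w hw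
  have : χ ((ρ / 4) • w) = 1 := χ.one_of_mem_closedBall (by
    rw [mem_closedBall_zero_iff, norm_smul, Real.norm_of_nonneg (by positivity)]
    show ρ / 4 * ‖w‖ ≤ ρ / 2
    have hw' : ‖w‖ < 2 := hw
    nlinarith)
  rw [this, one_mul]

lemma PairAt.scale {f G F K : ℝ × ℝ → ℝ} {W k : ℝ} {ζ : ℝ × ℝ} (h : PairAt f G W (k • ζ))
    (hF : F =ᶠ[nhds ζ] fun ζ => f (k • ζ)) (hK : K =ᶠ[nhds ζ] fun ζ => G (k • ζ)) :
    PairAt F K W ζ := by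
  obtain ⟨a, b, c, d, hf, hG, h1, h2⟩ := h
  have hs : HasFDerivAt (fun ζ : ℝ × ℝ => k • ζ) (k • ContinuousLinearMap.id ℝ (ℝ × ℝ)) ζ :=
    (hasFDerivAt_id ζ).const_smul k
  have e1 : HasFDerivAt (fun ζ => f (k • ζ)) (lin1 (k * a) (k * b)) ζ :=
    (HasFDerivAt.comp ζ hf hs).congr_fderiv (by ext <;> simp)
  have e2 : HasFDerivAt (fun ζ => G (k • ζ)) (lin1 (k * c) (k * d)) ζ :=
    (HasFDerivAt.comp ζ hG hs).congr_fderiv (by ext <;> simp)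
  refine ⟨_, _, _, _, e1.congr_of_eventuallyEq hF, e2.congr_of_eventuallyEq hK, ?_, ?_⟩
  · have := mul_le_mul_of_nonneg_left h1 (sq_nonneg k)
    nlinarith
  · have := mul_le_mul_of_nonneg_left h2 (sq_nonneg k)
    nlinarith

/-- Oscillation of the gradient and of the rescaled normal along a chart. -/
lemma chart_osc {ε : ℝ} (hε : 0 < ε) : ∃ t > 0, t < 1 ∧ ∀ {H : ℝ} {Ω : Set (ℝ × ℝ)} {u : ℝ × ℝ → ℝ}
    {P : ℝ × ℝ} {ρ : ℝ} {S : ℝ × ℝ → ℝ × ℝ}, 0 < ρ → IsOpen Ω → IsCMCSolution H Ω u →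
    Chart H Ω u P ρ S → ∀ ζ : ℝ × ℝ, ζ.1 ^ 2 + ζ.2 ^ 2 ≤ (t * ρ) ^ 2 →
      (|pdx u (S ζ) - pdx u P| ≤ ε * Wgraph u P ∧ |pdy u (S ζ) - pdy u P| ≤ ε * Wgraph u P) ∧
      (|Yx H u P (S ζ) - pdx u P / Wgraph u P| ≤ ε / Wgraph u P ∧
        |Yy H u P (S ζ) - pdy u P / Wgraph u P| ≤ ε / Wgraph u P) := by
  obtain ⟨t, ht, ht1, hM⟩ := disc_osc hε
  refine ⟨t / 4, by positivity, by linarith, ?_⟩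
  intro H Ω u P ρ S hρ hΩ hu hS ζ hζ
  obtain ⟨c1, c2⟩ := hu.contDiffOn_pd hΩ
  have cW := contDiffOn_Wgraph hΩ hu
  have hmaps : MapsTo S (Metric.ball 0 ρ) Ω := hS.mem
  have cYx : ContDiffOn ℝ 1 (Yx H u P) Ω := by
    unfold Yx
    exact (c1.div cW fun x _ => (Wgraph_pos u x).ne').sub (by fun_prop)
  have cYy : ContDiffOn ℝ 1 (Yy H u P) Ω := by
    unfold Yy
    exact (c2.div cW fun x _ => (Wgraph_pos u x).ne').sub (by fun_prop)
  obtain ⟨f₁, hf₁, ef₁⟩ := exists_ext hρ (c2.comp hS.contDiffOn hmaps)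
  obtain ⟨f₂, hf₂, ef₂⟩ := exists_ext hρ (c1.comp hS.contDiffOn hmaps)
  obtain ⟨G₁, hG₁, eG₁⟩ := exists_ext hρ (cYx.comp hS.contDiffOn hmaps)
  obtain ⟨G₂, hG₂, eG₂⟩ := exists_ext hρ (cYy.neg.comp hS.contDiffOn hmaps)
  have hWW : ∀ ζ : ℝ × ℝ, ‖ζ‖ ≤ 1 → Wf f₁ f₂ ζ = Wgraph u (S ((ρ / 4) • ζ)) := fun ζ h => by
    rw [Wf, Wgraph, (ef₁ ζ h).eq_of_nhds, (ef₂ ζ h).eq_of_nhds]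
    simp only [Function.comp]
    rw [add_right_comm]
  have hball : ∀ ζ : ℝ × ℝ, ‖ζ‖ ≤ 1 → (ρ / 4) • ζ ∈ Metric.ball (0 : ℝ × ℝ) ρ := fun ζ h => by
    rw [mem_ball_zero_iff, norm_smul, Real.norm_of_nonneg (by positivity)]
    nlinarith
  have key := hM f₁ f₂ G₁ G₂ hf₁ hf₂ hG₁ hG₂ (fun ζ h => by
    have hn : ‖ζ‖ ≤ 1 := norm_le_of_sq zero_le_one (by simpa using h)
    have hp := hS.pairs hΩ hu (hball ζ hn)
    rw [hWW ζ hn]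
    exact ⟨hp.1.scale (ef₁ ζ hn) (eG₁ ζ hn), hp.2.scale (ef₂ ζ hn) (eG₂ ζ hn)⟩)
    ((4 / ρ) • ζ) (by
      have : (((4 / ρ) • ζ).1) ^ 2 + (((4 / ρ) • ζ).2) ^ 2 = (4 / ρ) ^ 2 * (ζ.1 ^ 2 + ζ.2 ^ 2) := by
        simp only [Prod.smul_fst, Prod.smul_snd, smul_eq_mul]; ring
      rw [this]
      calc (4 / ρ) ^ 2 * (ζ.1 ^ 2 + ζ.2 ^ 2) ≤ (4 / ρ) ^ 2 * (t / 4 * ρ) ^ 2 := by gcongr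
        _ = t ^ 2 := by field_simp)
  have hn : ‖(4 / ρ) • ζ‖ ≤ 1 := by
    have : ‖ζ‖ ≤ t / 4 * ρ := norm_le_of_sq (by positivity) hζ
    rw [norm_smul, Real.norm_of_nonneg (by positivity)]
    calc 4 / ρ * ‖ζ‖ ≤ 4 / ρ * (t / 4 * ρ) := by gcongr
      _ = t := by field_simp
      _ ≤ 1 := ht1
  have hn0 : ‖(0 : ℝ × ℝ)‖ ≤ 1 := by simp
  have hsc : (ρ / 4) • (4 / ρ) • ζ = ζ := by
    rw [smul_smul, show ρ / 4 * (4 / ρ) = 1 by field_simp, one_smul]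
  rw [hWW 0 hn0, (ef₁ _ hn).eq_of_nhds, (ef₂ _ hn).eq_of_nhds, (eG₁ _ hn).eq_of_nhds,
    (eG₂ _ hn).eq_of_nhds, (ef₁ 0 hn0).eq_of_nhds, (ef₂ 0 hn0).eq_of_nhds,
    (eG₁ 0 hn0).eq_of_nhds, (eG₂ 0 hn0).eq_of_nhds] at key
  simp only [Function.comp, hsc, smul_zero, hS.zero] at key
  obtain ⟨⟨k1, k2⟩, k3, k4⟩ := key
  have y1 : Yx H u P P = pdx u P / Wgraph u P := by simp [Yx]
  have y2 : Yy H u P P = pdy u P / Wgraph u P := by simp [Yy]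
  rw [y1] at k3
  refine ⟨⟨k2, k1⟩, k3, ?_⟩
  have e : |(-Yy H u P) (S ζ) - (-Yy H u P) P| = |Yy H u P (S ζ) - pdy u P / Wgraph u P| := by
    rw [← y2, ← abs_neg]
    congr 1
    simp only [Pi.neg_apply]
    ring
  exact e ▸ k4

/-! ### Sheets -/

/-- Size of the correction term in `invField` for a direction almost orthogonal to the gradient. -/
lemma sheet_alg {a p q W d k e₁ e₂ : ℝ} (hW : W ^ 2 = 1 + p ^ 2 + q ^ 2) (hW1 : 1 ≤ W)
    (ha : |a - 1| ≤ 1 / 4) (he : e₁ ^ 2 + e₂ ^ 2 = 1)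
    (hd : d = -p * e₂ + q * e₁) (hdW : |d| ≤ 1 / 20 * W)
    (hk : k = p * e₁ + q * e₂) :
    2 / 5 ≤ (1 - d * (d / (W * (a + W)))) / (a + 1 / W) ∧
    |-(k * (d / (W * (a + W)))) / (a + 1 / W)| ≤
      (1 - d * (d / (W * (a + W)))) / (a + 1 / W) / 4 := by
  obtain ⟨ha1, ha2⟩ := abs_le.1 ha
  have hα : 0 < a + 1 / W := by have : 0 < 1 / W := by positivity
                                linarith
  have hα2 : a + 1 / W ≤ 9 / 4 := by
    have : 1 / W ≤ 1 := by rw [div_le_one (by positivity)]; exact hW1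
    linarith
  have hD : W * W ≤ W * (a + W) := by nlinarith
  have hD0 : 0 < W * (a + W) := by nlinarith
  have hkd : k ^ 2 + d ^ 2 = p ^ 2 + q ^ 2 := by
    rw [hk, hd]; linear_combination (p ^ 2 + q ^ 2) * he
  have hkW : |k| ≤ W := abs_le_of_sq_le_sq (by nlinarith [sq_nonneg d]) (by positivity)
  have e1 : |d / (W * (a + W))| ≤ 1 / 20 / W := by
    rw [abs_div, abs_of_pos hD0, div_le_div_iff₀ hD0 (by positivity)]
    calc |d| * W ≤ (1 / 20 * W) * W := by gcongr
      _ ≤ 1 / 20 * (W * (a + W)) := by linarith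
  have e2 : |k * (d / (W * (a + W)))| ≤ 1 / 20 := by
    rw [abs_mul]
    calc |k| * |d / (W * (a + W))| ≤ W * (1 / 20 / W) := by gcongr
      _ = 1 / 20 := by field_simp
  have e3 : |d * (d / (W * (a + W)))| ≤ 1 / 400 := by
    rw [abs_mul]
    calc |d| * |d / (W * (a + W))| ≤ (1 / 20 * W) * (1 / 20 / W) := by gcongr
      _ = 1 / 400 := by field_simp; norm_num
  have e4 := (abs_le.1 e3).2
  constructor
  · rw [le_div_iff₀ hα]; linarith
  · rw [abs_div, abs_neg, abs_of_pos hα, div_right_comm]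
    gcongr
    linarith

/-- Along the direction orthogonal to the gradient, the graph contains a long thin sheet which
stays almost vertical. -/
lemma sheet {H r : ℝ} (hH : 0 < H) (hr : 0 < r) : ∃ b > 0, ∀ {Ω : Set (ℝ × ℝ)} {u : ℝ × ℝ → ℝ}
    {P : ℝ × ℝ} {e₁ e₂ : ℝ}, IsOpen Ω → IsCMCSolution H Ω u → Metric.ball P r ⊆ Ω →
    e₁ ^ 2 + e₂ ^ 2 = 1 → pdy u P * e₁ = pdx u P * e₂ →
    ∃ g : ℝ → ℝ, g 0 = 0 ∧
      (∀ y ∈ Icc (-b) b, ∀ y' ∈ Icc (-b) b, |g y - g y'| ≤ |y - y'| / 4) ∧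
      ∀ y ∈ Icc (-b) b, ∀ x : ℝ × ℝ, x = (P.1 + g y * e₁ - y * e₂, P.2 + g y * e₂ + y * e₁) →
        x ∈ Ω ∧ Wgraph u P / 2 ≤ Wgraph u x ∧
        |Yx H u P x - pdx u P / Wgraph u P| ≤ 1 / Wgraph u P ∧
        |Yy H u P x - pdy u P / Wgraph u P| ≤ 1 / Wgraph u P := by
  obtain ⟨t, ht, ht1, hosc⟩ := chart_osc (ε := 1 / 100) (by norm_num)
  set ρ := min (r / 4) (1 / (16 * H)) with hρdef
  have hρ : 0 < ρ := by positivity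
  have hρr : 4 * ρ ≤ r := by have : ρ ≤ r / 4 := min_le_left _ _
                             linarith
  have hρH : 16 * H * ρ ≤ 1 := by
    have : ρ ≤ 1 / (16 * H) := min_le_right _ _
    calc 16 * H * ρ ≤ 16 * H * (1 / (16 * H)) := by gcongr
      _ = 1 := by field_simp
  refine ⟨2 / 5 * (t * ρ), by positivity, ?_⟩
  intro Ω u P e₁ e₂ hΩ hu hball he hperp
  obtain ⟨S, hS⟩ := exists_chart hH hΩ hu hρ hρr hρH hball
  set B := t * ρ with hB
  have hB0 : 0 < B := by positivity
  have hBρ : B < ρ := by nlinarith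
  have hosc' := hosc hρ hΩ hu hS
  set γ : ℝ → ℝ × ℝ := fun s => S (-s * e₂, s * e₁) with hγ
  have hsq : ∀ s ∈ Icc (-B) B, (-s * e₂) ^ 2 + (s * e₁) ^ 2 ≤ B ^ 2 := by
    intro s hs
    have : (-s * e₂) ^ 2 + (s * e₁) ^ 2 = s ^ 2 := by linear_combination s ^ 2 * he
    rw [this]
    exact sq_le_sq' hs.1 hs.2
  have hmem : ∀ s ∈ Icc (-B) B, (-s * e₂, s * e₁) ∈ Metric.ball (0 : ℝ × ℝ) ρ := by
    intro s hs
    rw [mem_ball_zero_iff]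
    exact (norm_le_of_sq hB0.le (hsq s hs)).trans_lt hBρ
  have hWP := one_le_Wgraph u P
  have he1 : |e₁| ≤ 1 := abs_le_of_sq_le_sq (by nlinarith [sq_nonneg e₂]) zero_le_one
  have he2 : |e₂| ≤ 1 := abs_le_of_sq_le_sq (by nlinarith [sq_nonneg e₁]) zero_le_one
  have hWlow : ∀ s ∈ Icc (-B) B, 49 / 50 * Wgraph u P ≤ Wgraph u (γ s) := by
    intro s hs
    obtain ⟨⟨h1, h2⟩, -⟩ := hosc' (-s * e₂, s * e₁) (hsq s hs)
    have h3 := sqrt_lip (pdx u P) (pdy u P) (pdx u (γ s)) (pdy u (γ s))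
    rw [abs_sub_comm (pdx u P), abs_sub_comm (pdy u P)] at h3
    have h4 : Wgraph u P ≤ Wgraph u (γ s) + |pdx u (γ s) - pdx u P| + |pdy u (γ s) - pdy u P| := h3
    simp only [hγ] at h4 ⊢
    linarith
  -- the two coordinates of the curve and the bounds on their derivatives
  have hder : ∀ s ∈ Icc (-B) B, ∃ x' y', 2 / 5 ≤ y' ∧ |x'| ≤ y' / 4 ∧
      HasDerivAt (fun s => e₁ * (γ s).1 + e₂ * (γ s).2) x' s ∧
      HasDerivAt (fun s => -e₂ * (γ s).1 + e₁ * (γ s).2) y' s := by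
    intro s hs
    obtain ⟨L, hL, hL'⟩ := hS.deriv _ (hmem s hs)
    have hline : HasDerivAt (fun s : ℝ => (-s * e₂, s * e₁)) (-e₂, e₁) s := by
      have h1 : HasDerivAt (fun s : ℝ => -s * e₂) (-e₂) s :=
        ((hasDerivAt_id s).neg.mul_const e₂).congr_deriv (by ring)
      have h2 : HasDerivAt (fun s : ℝ => s * e₁) e₁ s :=
        ((hasDerivAt_id s).mul_const e₁).congr_deriv (by ring)
      exact h1.prodMk h2
    have hγd : HasDerivAt γ (L (-e₂, e₁)) s := hL.comp_hasDerivAt s hline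
    have hγ1 : HasDerivAt (fun s => (γ s).1) (L (-e₂, e₁)).1 s := hγd.fst
    have hγ2 : HasDerivAt (fun s => (γ s).2) (L (-e₂, e₁)).2 s := hγd.snd
    have hx := (hγ1.const_mul e₁).add (hγ2.const_mul e₂)
    have hy := (hγ1.const_mul (-e₂)).add (hγ2.const_mul e₁)
    have ha := hS.abs_le _ (hmem s hs)
    have hW := Wgraph_sq u (γ s)
    have hW1 := one_le_Wgraph u (γ s)
    have hlow := hWlow s hs
    obtain ⟨⟨h1, h2⟩, -⟩ := hosc' (-s * e₂, s * e₁) (hsq s hs)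
    rw [hL'] at hx hy
    change |aux H u P (γ s) - 1| ≤ 1 / 4 at ha
    change |pdx u (γ s) - pdx u P| ≤ 1 / 100 * Wgraph u P at h1
    change |pdy u (γ s) - pdy u P| ≤ 1 / 100 * Wgraph u P at h2
    have ha0 : 0 < aux H u P (γ s) := by linarith [(abs_le.1 ha).1]
    change HasDerivAt _ (e₁ * (invField (aux H u P (γ s)) (pdx u (γ s)) (pdy u (γ s))
      (Wgraph u (γ s)) (-e₂, e₁)).1 + e₂ * (invField (aux H u P (γ s)) (pdx u (γ s)) (pdy u (γ s))
      (Wgraph u (γ s)) (-e₂, e₁)).2) _ at hx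
    change HasDerivAt _ (-e₂ * (invField (aux H u P (γ s)) (pdx u (γ s)) (pdy u (γ s))
      (Wgraph u (γ s)) (-e₂, e₁)).1 + e₁ * (invField (aux H u P (γ s)) (pdx u (γ s)) (pdy u (γ s))
      (Wgraph u (γ s)) (-e₂, e₁)).2) _ at hy
    rw [invField_eq hW hW1 ha0] at hx hy
    generalize pdx u (γ s) = p at *
    generalize pdy u (γ s) = q at *
    generalize Wgraph u (γ s) = W at *
    generalize aux H u P (γ s) = a at *
    have hd : |-p * e₂ + q * e₁| ≤ 1 / 20 * W := by
      have : -p * e₂ + q * e₁ = -(p - pdx u P) * e₂ + (q - pdy u P) * e₁ := by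
        linear_combination hperp
      rw [this]
      refine (abs_add_le _ _).trans ?_
      rw [abs_mul, abs_mul, abs_neg]
      have : |p - pdx u P| * |e₂| ≤ 1 / 100 * Wgraph u P * 1 := by gcongr
      have : |q - pdy u P| * |e₁| ≤ 1 / 100 * Wgraph u P * 1 := by gcongr
      linarith
    obtain ⟨r1, r2⟩ := sheet_alg hW hW1 ha he rfl hd rfl
    refine ⟨_, _, r1, r2, hx.congr_deriv ?_, hy.congr_deriv ?_⟩
    · simp only
      ring
    · simp only
      rw [← sub_eq_zero]
      linear_combination (1 / (a + 1 / W)) * he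
  choose! x' y' hy' hxy hdx hdy using hder
  set X : ℝ → ℝ := fun s => e₁ * (γ s).1 + e₂ * (γ s).2 with hX
  set Y : ℝ → ℝ := fun s => -e₂ * (γ s).1 + e₁ * (γ s).2 with hY
  have cX : ContinuousOn X (Icc (-B) B) := fun s hs => (hdx s hs).continuousAt.continuousWithinAt
  have cY : ContinuousOn Y (Icc (-B) B) := fun s hs => (hdy s hs).continuousAt.continuousWithinAt
  have mono : ∀ c d k : ℝ, (∀ s ∈ Icc (-B) B, 0 ≤ c * y' s + d * x' s + k) →
      MonotoneOn (fun s => c * Y s + d * X s + k * s) (Icc (-B) B) := by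
    intro c d k h
    refine monotoneOn_of_hasDerivWithinAt_nonneg (f' := fun s => c * y' s + d * x' s + k)
      (convex_Icc _ _) (by fun_prop) (fun s hs => ?_) (fun s hs => h s (interior_subset hs))
    have hs' := interior_subset hs
    exact (((((hdy s hs').const_mul c).add ((hdx s hs').const_mul d)).add
      ((hasDerivAt_id s).const_mul k)).congr_deriv (by simp)).hasDerivWithinAt
  have m1 := mono 1 0 (-(2 / 5)) fun s hs => by linarith [hy' s hs]
  have m2 := mono (1 / 4) 1 0 fun s hs => by linarith [(abs_le.1 (hxy s hs)).1]
  have m3 := mono (1 / 4) (-1) 0 fun s hs => by linarith [(abs_le.1 (hxy s hs)).2]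
  have hlip : ∀ s ∈ Icc (-B) B, ∀ s' ∈ Icc (-B) B, |X s - X s'| ≤ |Y s - Y s'| / 4 := by
    have main : ∀ s ∈ Icc (-B) B, ∀ s' ∈ Icc (-B) B, s' ≤ s → |X s - X s'| ≤ |Y s - Y s'| / 4 := by
      intro s hs s' hs' hle
      have k2 := m2 hs' hs hle
      have k3 := m3 hs' hs hle
      simp only at k2 k3
      have := le_abs_self (Y s - Y s')
      exact abs_le.2 ⟨by linarith, by linarith⟩
    intro s hs s' hs'
    rcases le_total s' s with h | h
    · exact main s hs s' hs' h
    · rw [abs_sub_comm, abs_sub_comm (Y s)]; exact main s' hs' s hs h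
  have h0mem : (0 : ℝ) ∈ Icc (-B) B := ⟨by linarith, hB0.le⟩
  have hγ0 : γ 0 = P := by
    simp only [hγ]
    rw [show ((-0 * e₂, 0 * e₁) : ℝ × ℝ) = 0 by simp, hS.zero]
  have hsurj : ∀ y ∈ Icc (-(2 / 5 * B)) (2 / 5 * B), ∃ s ∈ Icc (-B) B, Y s = Y 0 + y := by
    intro y hy
    have k1 := m1 ⟨le_rfl, by linarith⟩ h0mem (by linarith : -B ≤ 0)
    have k2 := m1 h0mem ⟨by linarith, le_rfl⟩ hB0.le
    simp only at k1 k2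
    exact intermediate_value_Icc (by linarith) cY ⟨by linarith [hy.1], by linarith [hy.2]⟩
  choose! σ hσ hσY using hsurj
  refine ⟨fun y => X (σ y) - X 0, ?_, ?_, ?_⟩
  · have hm : (0 : ℝ) ∈ Icc (-(2 / 5 * B)) (2 / 5 * B) := ⟨by linarith, by positivity⟩
    have := hlip _ (hσ 0 hm) 0 h0mem
    rw [hσY 0 hm] at this
    simpa using this
  · intro y hy y2 hy2
    have := hlip _ (hσ y hy) _ (hσ y2 hy2)
    rw [hσY y hy, hσY y2 hy2] at this
    convert this using 2 <;> ring_nf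
  · intro y hy x hx
    have hxγ : x = γ (σ y) := by
      have h1 := hσY y hy
      simp only [hX, hY] at h1 hx
      rw [hx]
      rw [hγ0] at h1 ⊢
      ext
      · simp only
        linear_combination ((γ (σ y)).1 - P.1) * he + e₂ * h1
      · simp only
        linear_combination ((γ (σ y)).2 - P.2) * he - e₁ * h1
    have hs := hσ y hy
    obtain ⟨-, h3, h4⟩ := hosc' (-σ y * e₂, σ y * e₁) (hsq _ hs)
    have hle : (1 : ℝ) / 100 / Wgraph u P ≤ 1 / Wgraph u P := by gcongr; norm_num
    rw [hxγ]
    refine ⟨hS.mem _ (hmem _ hs), ?_, h3.trans hle, h4.trans hle⟩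
    linarith [hWlow _ hs]

/-! ### Local boundedness of the gradient -/

lemma m_norm_le {a p q W m v₁ v₂ d : ℝ} (hW : W ^ 2 = 1 + p ^ 2 + q ^ 2) (hW1 : 1 ≤ W)
    (ha : |a - 1| ≤ 1 / 4) (hWm : W ≤ 2 * m) (h1 : |v₁| ≤ d) (h2 : |v₂| ≤ d) :
    ‖((a + (1 + p ^ 2) / W) * v₁ + p * q / W * v₂,
      p * q / W * v₁ + (a + (1 + q ^ 2) / W) * v₂)‖ ≤ (2 + 4 * m) * d := by
  obtain ⟨ha1, ha2⟩ := abs_le.1 ha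
  have hd : 0 ≤ d := (abs_nonneg _).trans h1
  have e1 : |a + (1 + p ^ 2) / W| ≤ 2 + W := by
    have h3 : (1 + p ^ 2) / W ≤ W := by rw [div_le_iff₀ (by positivity)]; nlinarith [sq_nonneg q]
    have h4 : 0 ≤ (1 + p ^ 2) / W := by positivity
    exact abs_le.2 ⟨by linarith, by linarith⟩
  have e2 : |a + (1 + q ^ 2) / W| ≤ 2 + W := by
    have h3 : (1 + q ^ 2) / W ≤ W := by rw [div_le_iff₀ (by positivity)]; nlinarith [sq_nonneg p]
    have h4 : 0 ≤ (1 + q ^ 2) / W := by positivity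
    exact abs_le.2 ⟨by linarith, by linarith⟩
  have e3 : |p * q / W| ≤ W := by
    rw [abs_div, abs_of_pos (by positivity : 0 < W), div_le_iff₀ (by positivity)]
    refine abs_le.2 ⟨?_, ?_⟩ <;> nlinarith [sq_nonneg (p + q), sq_nonneg (p - q)]
  have hm : 2 + W + W ≤ 2 + 4 * m := by linarith
  refine (Prod.norm_def _).trans_le (max_le ?_ ?_)
  · simp only [Real.norm_eq_abs]
    refine (abs_add_le _ _).trans ?_
    rw [abs_mul, abs_mul]
    calc |a + (1 + p ^ 2) / W| * |v₁| + |p * q / W| * |v₂| ≤ (2 + W) * d + W * d := by gcongr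
      _ = (2 + W + W) * d := by ring
      _ ≤ _ := by gcongr
  · simp only [Real.norm_eq_abs]
    refine (abs_add_le _ _).trans ?_
    rw [abs_mul, abs_mul]
    calc |p * q / W| * |v₁| + |a + (1 + q ^ 2) / W| * |v₂| ≤ W * d + (2 + W) * d := by gcongr
      _ = (2 + W + W) * d := by ring
      _ ≤ _ := by gcongr

/-- Where the gradient is bounded at a point, it is bounded on a ball of controlled radius. -/
lemma bounded_near {H r m : ℝ} (hH : 0 < H) (hr : 0 < r) (hm : 1 ≤ m) : ∃ r' > 0,
    ∀ {Ω : Set (ℝ × ℝ)} {u : ℝ × ℝ → ℝ} {Q : ℝ × ℝ}, IsOpen Ω → IsCMCSolution H Ω u →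
    Metric.ball Q r ⊆ Ω → Wgraph u Q ≤ m → ∀ x : ℝ × ℝ, ‖x - Q‖ ≤ r' → Wgraph u x ≤ 2 * m := by
  obtain ⟨t, ht, ht1, hosc⟩ := chart_osc (ε := 1 / 2) (by norm_num)
  set ρ := min (r / 4) (1 / (16 * H)) with hρdef
  have hρ : 0 < ρ := by positivity
  have hρr : 4 * ρ ≤ r := by have : ρ ≤ r / 4 := min_le_left _ _
                             linarith
  have hρH : 16 * H * ρ ≤ 1 := by
    have : ρ ≤ 1 / (16 * H) := min_le_right _ _
    calc 16 * H * ρ ≤ 16 * H * (1 / (16 * H)) := by gcongr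
      _ = 1 := by field_simp
  set R := t * ρ / 2 with hRdef
  have hR : 0 < R := by positivity
  have hRρ : R < ρ := by nlinarith
  refine ⟨R / (2 + 4 * m), by positivity, ?_⟩
  intro Ω u Q hΩ hu hball hWQ x hx
  obtain ⟨S, hS⟩ := exists_chart hH hΩ hu hρ hρr hρH hball
  have hosc' := hosc hρ hΩ hu hS
  have hsub : Metric.closedBall (0 : ℝ × ℝ) R ⊆ Metric.ball 0 ρ :=
    Metric.closedBall_subset_ball hRρ
  have hWb : ∀ ζ ∈ Metric.closedBall (0 : ℝ × ℝ) R, Wgraph u (S ζ) ≤ 2 * m := by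
    intro ζ hζ
    rw [mem_closedBall_zero_iff] at hζ
    obtain ⟨⟨h1, h2⟩, -⟩ := hosc' ζ ((sq_le_of_norm hζ).trans (by rw [hRdef]; nlinarith [sq_nonneg (t * ρ)]))
    have h3 : Wgraph u (S ζ) ≤ Wgraph u Q + |pdx u (S ζ) - pdx u Q| + |pdy u (S ζ) - pdy u Q| :=
      sqrt_lip _ _ _ _
    linarith
  obtain ⟨c1, c2⟩ := hu.contDiffOn_pd hΩ
  have cW := contDiffOn_Wgraph hΩ hu
  have ca := contDiffOn_aux hu Q
  have hmaps : MapsTo S (Metric.ball 0 ρ) Ω := hS.mem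
  have d1 : ContDiffOn ℝ 1 (fun ζ => pdx u (S ζ)) (Metric.ball 0 ρ) := c1.comp hS.contDiffOn hmaps
  have d2 : ContDiffOn ℝ 1 (fun ζ => pdy u (S ζ)) (Metric.ball 0 ρ) := c2.comp hS.contDiffOn hmaps
  have d3 : ContDiffOn ℝ 1 (fun ζ => Wgraph u (S ζ)) (Metric.ball 0 ρ) :=
    cW.comp hS.contDiffOn hmaps
  have d4 : ContDiffOn ℝ 1 (fun ζ => aux H u Q (S ζ)) (Metric.ball 0 ρ) :=
    ca.comp hS.contDiffOn hmaps
  have hne : ∀ ζ ∈ Metric.ball (0 : ℝ × ℝ) ρ, Wgraph u (S ζ) ≠ 0 := fun ζ _ => (Wgraph_pos u _).ne'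
  set v := x - Q with hv
  have f1 : ContDiffOn ℝ 1 (fun ζ => (1 + pdx u (S ζ) ^ 2) / Wgraph u (S ζ)) (Metric.ball 0 ρ) :=
    (contDiffOn_const.add (d1.pow 2)).div d3 hne
  have f2 : ContDiffOn ℝ 1 (fun ζ => (1 + pdy u (S ζ) ^ 2) / Wgraph u (S ζ)) (Metric.ball 0 ρ) :=
    (contDiffOn_const.add (d2.pow 2)).div d3 hne
  have f3 : ContDiffOn ℝ 1 (fun ζ => pdx u (S ζ) * pdy u (S ζ) / Wgraph u (S ζ))
      (Metric.ball 0 ρ) := (d1.mul d2).div d3 hne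
  set V : ℝ × ℝ → ℝ × ℝ := fun ζ =>
    ((aux H u Q (S ζ) + (1 + pdx u (S ζ) ^ 2) / Wgraph u (S ζ)) * v.1 +
      pdx u (S ζ) * pdy u (S ζ) / Wgraph u (S ζ) * v.2,
     pdx u (S ζ) * pdy u (S ζ) / Wgraph u (S ζ) * v.1 +
      (aux H u Q (S ζ) + (1 + pdy u (S ζ) ^ 2) / Wgraph u (S ζ)) * v.2) with hV
  have cV : ContDiffOn ℝ 1 V (Metric.ball 0 ρ) :=
    (((d4.add f1).mul contDiffOn_const).add (f3.mul contDiffOn_const)).prodMk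
      ((f3.mul contDiffOn_const).add ((d4.add f2).mul contDiffOn_const))
  obtain ⟨K, hK⟩ := lipschitzOn_of_contDiffOn Metric.isOpen_ball cV hsub
    (isCompact_closedBall 0 R) (convex_closedBall 0 R)
  obtain ⟨γ, hγ0, hγ⟩ := exists_flow hR.le hK (fun ζ hζ => by
    have h := m_norm_le (Wgraph_sq u (S ζ)) (one_le_Wgraph u _) (hS.abs_le ζ (hsub hζ)) (hWb ζ hζ)
      ((norm_fst_le v).trans hx) ((norm_snd_le v).trans hx)
    refine h.trans (le_of_eq ?_)
    field_simp)
  -- the flow is the lift through the chart of the straight segment from `Q` to `x`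
  have hconst : ∀ τ ∈ Icc (0 : ℝ) 1,
      HasDerivWithinAt (fun τ => S (γ τ) - τ • v) 0 (Icc 0 1) τ := by
    intro τ hτ
    obtain ⟨hm1, hd⟩ := hγ τ hτ
    obtain ⟨L, hL, hL'⟩ := hS.deriv _ (hsub hm1)
    have h1 : HasDerivWithinAt (fun τ => S (γ τ)) (L (V (γ τ))) (Icc 0 1) τ :=
      hL.comp_hasDerivWithinAt τ hd
    have h2 : HasDerivWithinAt (fun τ : ℝ => τ • v) ((1 : ℝ) • v) (Icc 0 1) τ :=
      (hasDerivWithinAt_id τ _).smul_const v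
    refine (h1.sub h2).congr_deriv ?_
    have ha := hS.abs_le _ (hsub hm1)
    rw [hL', hV]
    simp only
    rw [invField_m (Wgraph_sq u _) (one_le_Wgraph u _) (by linarith [(abs_le.1 ha).1]), one_smul,
      sub_self]
  have hend := Convex.norm_image_sub_le_of_norm_hasDerivWithin_le (C := 0) hconst
    (fun τ _ => by simp) (convex_Icc 0 1) (⟨le_rfl, zero_le_one⟩ : (0 : ℝ) ∈ Icc (0 : ℝ) 1)
    (⟨zero_le_one, le_rfl⟩ : (1 : ℝ) ∈ Icc (0 : ℝ) 1)
  rw [zero_mul, norm_le_zero_iff, hγ0, hS.zero] at hend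
  have hx1 : x = S (γ 1) := by
    have : S (γ 1) - x = S (γ 1) - (1 : ℝ) • v - (Q - (0 : ℝ) • v) := by
      rw [hv, one_smul, zero_smul]; abel
    rw [hend] at this
    exact (sub_eq_zero.1 this).symm
  rw [hx1]
  exact hWb _ (hγ 1 ⟨zero_le_one, le_rfl⟩).1

/-! ### Sheets in an adapted frame -/

/-- First component of the horizontal part `∇u / W` of the (downward) unit normal. -/
def Xx (u : ℝ × ℝ → ℝ) (x : ℝ × ℝ) : ℝ := pdx u x / Wgraph u x

/-- Second component of the horizontal part `∇u / W` of the (downward) unit normal. -/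
def Xy (u : ℝ × ℝ → ℝ) (x : ℝ × ℝ) : ℝ := pdy u x / Wgraph u x

lemma X_sq (u : ℝ × ℝ → ℝ) (x : ℝ × ℝ) : Xx u x ^ 2 + Xy u x ^ 2 = 1 - (1 / Wgraph u x) ^ 2 := by
  have h := Wgraph_sq u x
  have h0 := Wgraph_pos u x
  rw [Xx, Xy]
  field_simp
  linarith

/-- The unit vector `e` in the direction of the gradient. -/
lemma exists_frame {u : ℝ × ℝ → ℝ} {P : ℝ × ℝ} (hP : 1 < Wgraph u P) : ∃ e₁ e₂ : ℝ,
    e₁ ^ 2 + e₂ ^ 2 = 1 ∧ pdy u P * e₁ = pdx u P * e₂ ∧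
    |Xx u P - e₁| ≤ 1 / Wgraph u P ∧ |Xy u P - e₂| ≤ 1 / Wgraph u P := by
  have h := Wgraph_sq u P
  unfold Xx Xy
  generalize Wgraph u P = W at *
  generalize pdx u P = p at *
  generalize pdy u P = q at *
  set G := √(p ^ 2 + q ^ 2) with hG
  have hG2 : G ^ 2 = p ^ 2 + q ^ 2 := Real.sq_sqrt (by positivity)
  have hpos : 0 < p ^ 2 + q ^ 2 := by nlinarith
  have hG0 : 0 < G := Real.sqrt_pos.2 hpos
  have hGW : G ≤ W := (le_abs_self _).trans (abs_le_of_sq_le_sq (by linarith) (by linarith))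
  have hGW' : W - G ≤ 1 := by nlinarith
  have key : ∀ s, s ^ 2 ≤ G ^ 2 → |s / W - s / G| ≤ 1 / W := by
    intro s hs
    have h1 : |s| ≤ G := abs_le_of_sq_le_sq hs hG0.le
    have h2 : s / W - s / G = -(s * (W - G)) / (G * W) := by field_simp; ring
    rw [h2, abs_div, abs_neg, abs_mul, abs_of_nonneg (by linarith : 0 ≤ W - G),
      abs_of_pos (by positivity : 0 < G * W), div_le_div_iff₀ (by positivity) (by positivity)]
    have : |s| * (W - G) ≤ G * 1 := by gcongr
    nlinarith
  refine ⟨p / G, q / G, ?_, ?_, key p (by nlinarith [sq_nonneg q]), key q (by nlinarith [sq_nonneg p])⟩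
  · field_simp; linarith
  · field_simp

lemma almost_unit {A₁ A₂ X₁ X₂ ω η : ℝ} (hη : 0 < η) (hη1 : η ≤ 1 / 4) (h1 : |A₁ - X₁| ≤ 2 * η)
    (h2 : |A₂ - X₂| ≤ 2 * η) (hX : X₁ ^ 2 + X₂ ^ 2 = 1 - ω ^ 2) (hω0 : 0 ≤ ω) (hω : ω ≤ 2 * η) :
    |A₁ ^ 2 + A₂ ^ 2 - 1| ≤ 16 * η := by
  have hx1 : |X₁| ≤ 1 := abs_le_of_sq_le_sq (by nlinarith [sq_nonneg X₂, sq_nonneg ω]) zero_le_one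
  have hx2 : |X₂| ≤ 1 := abs_le_of_sq_le_sq (by nlinarith [sq_nonneg X₁, sq_nonneg ω]) zero_le_one
  have key : ∀ A X, |X| ≤ 1 → |A - X| ≤ 2 * η → |A ^ 2 - X ^ 2| ≤ 5 * η := by
    intro A X hX h
    rw [show A ^ 2 - X ^ 2 = (A - X) * (2 * X + (A - X)) by ring, abs_mul]
    have : |2 * X + (A - X)| ≤ 5 / 2 := by
      refine (abs_add_le _ _).trans ?_
      rw [abs_mul, abs_two]; linarith
    calc |A - X| * |2 * X + (A - X)| ≤ (2 * η) * (5 / 2) := by gcongr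
      _ = 5 * η := by ring
  have k1 := abs_le.1 (key A₁ X₁ hx1 h1)
  have k2 := abs_le.1 (key A₂ X₂ hx2 h2)
  have k3 : ω ^ 2 ≤ η := by nlinarith
  have k4 := sq_nonneg ω
  exact abs_le.2 ⟨by linarith [k1.1, k2.1], by linarith [k1.2, k2.2]⟩

/-- The sheet through a point of large gradient, in an adapted orthonormal frame. -/
lemma sheet_frame {H r : ℝ} (hH : 0 < H) (hr : 0 < r) : ∃ b > 0, b ≤ 1 / (16 * H) ∧
    ∀ {Ω : Set (ℝ × ℝ)} {u : ℝ × ℝ → ℝ} {P : ℝ × ℝ} {η : ℝ}, IsOpen Ω → IsCMCSolution H Ω u →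
    Metric.ball P r ⊆ Ω → 0 < η → η ≤ 1 / 4 → 1 / η ≤ Wgraph u P →
    ∃ e₁ e₂ : ℝ, ∃ g : ℝ → ℝ, e₁ ^ 2 + e₂ ^ 2 = 1 ∧ |Xx u P - e₁| ≤ η ∧ |Xy u P - e₂| ≤ η ∧
      ContinuousOn g (Icc (-b) b) ∧ (∀ y ∈ Icc (-b) b, |g y| ≤ |y| / 4) ∧
      ∀ y ∈ Icc (-b) b, ∀ x : ℝ × ℝ, x = (P.1 + g y * e₁ - y * e₂, P.2 + g y * e₂ + y * e₁) →
        1 / (2 * η) ≤ Wgraph u x ∧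
        |Xx u x - Xx u P - 2 * H * (x.1 - P.1)| ≤ η ∧
        |Xy u x - Xy u P - 2 * H * (x.2 - P.2)| ≤ η ∧
        ∀ E₁ E₂ : ℝ, |Xx u P - E₁| ≤ η → |Xy u P - E₂| ≤ η →
          |(E₁ + 2 * H * (x.1 - P.1)) ^ 2 + (E₂ + 2 * H * (x.2 - P.2)) ^ 2 - 1| ≤ 16 * η := by
  obtain ⟨b, hb, hs⟩ := sheet hH hr
  refine ⟨min b (1 / (16 * H)), by positivity, min_le_right _ _, ?_⟩
  intro Ω u P η hΩ hu hball hη hη1 hW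
  have hWη : 1 / Wgraph u P ≤ η := by
    rw [div_le_iff₀ hη] at hW
    rw [div_le_iff₀ (Wgraph_pos u P)]; linarith
  have hW1 : 1 < Wgraph u P := lt_of_lt_of_le (by rw [lt_div_iff₀ hη]; linarith) hW
  obtain ⟨e₁, e₂, he, hperp, h1, h2⟩ := exists_frame hW1
  obtain ⟨g, hg0, hg, hx⟩ := hs hΩ hu hball he hperp
  have hsub : Icc (-min b (1 / (16 * H))) (min b (1 / (16 * H))) ⊆ Icc (-b) b :=
    Icc_subset_Icc (neg_le_neg (min_le_left _ _)) (min_le_left _ _)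
  refine ⟨e₁, e₂, g, he, h1.trans hWη, h2.trans hWη, ?_, ?_, ?_⟩
  · have hl : LipschitzOnWith (1 / 4) g (Icc (-b) b) := by
      refine LipschitzOnWith.of_dist_le_mul fun y hy y' hy' => ?_
      rw [Real.dist_eq, Real.dist_eq]
      refine (hg y hy y' hy').trans (le_of_eq ?_)
      push_cast
      ring
    exact hl.continuousOn.mono hsub
  · intro y hy
    have := hg y (hsub hy) 0 ⟨by linarith, hb.le⟩
    simpa [hg0] using this
  · intro y hy x hxe
    obtain ⟨-, a2, a3, a4⟩ := hx y (hsub hy) x hxe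
    have hWx : 1 / (2 * η) ≤ Wgraph u x := by
      refine le_trans ?_ a2
      rw [one_div, mul_inv, ← one_div η]
      linarith
    have r1 : |Xx u x - Xx u P - 2 * H * (x.1 - P.1)| ≤ η := by
      refine le_trans (le_of_eq ?_) (a3.trans hWη)
      simp only [Yx, Xx]; congr 1; ring
    have r2 : |Xy u x - Xy u P - 2 * H * (x.2 - P.2)| ≤ η := by
      refine le_trans (le_of_eq ?_) (a4.trans hWη)
      simp only [Yy, Xy]; congr 1; ring
    refine ⟨hWx, r1, r2, fun E₁ E₂ q1 q2 => ?_⟩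
    have hω : 1 / Wgraph u x ≤ 2 * η := by
      rw [div_le_iff₀ (by positivity)] at hWx
      rw [div_le_iff₀ (Wgraph_pos u x)]; linarith
    have hW0 := Wgraph_pos u x
    rw [abs_le] at r1 r2 q1 q2
    refine almost_unit hη hη1 (abs_le.2 ⟨?_, ?_⟩) (abs_le.2 ⟨?_, ?_⟩) (X_sq u x) (by positivity) hω <;>
      linarith [r1.1, r1.2, r2.1, r2.2, q1.1, q1.2, q2.1, q2.2]

/-- Compare a point `x` with the sheet point having the same tangential coordinate: up to `O(η)`, the
defect of `x` from the circle is a factor at least `2H` times the height of `x` above the sheet. -/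
lemma sheet_compare {H b η E₁ E₂ e₁ e₂ gy : ℝ} {P x : ℝ × ℝ} (hH : 0 < H) (hb : b ≤ 1 / (16 * H))
    (hη : 0 < η) (hη1 : η ≤ 1 / 8) (hE : E₁ ^ 2 + E₂ ^ 2 = 1) (he : e₁ ^ 2 + e₂ ^ 2 = 1)
    (d1 : |E₁ - e₁| ≤ 2 * η) (d2 : |E₂ - e₂| ≤ 2 * η)
    (hx : |e₁ * (x.1 - P.1) + e₂ * (x.2 - P.2)| ≤ b)
    (hgy : |gy| ≤ b)
    (hq : ∀ q : ℝ × ℝ, q = (P.1 + gy * e₁ - (-e₂ * (x.1 - P.1) + e₁ * (x.2 - P.2)) * e₂,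
      P.2 + gy * e₂ + (-e₂ * (x.1 - P.1) + e₁ * (x.2 - P.2)) * e₁) →
      |(E₁ + 2 * H * (q.1 - P.1)) ^ 2 + (E₂ + 2 * H * (q.2 - P.2)) ^ 2 - 1| ≤ 16 * η) :
    ∃ κ ≥ 2 * H, |(E₁ + 2 * H * (x.1 - P.1)) ^ 2 + (E₂ + 2 * H * (x.2 - P.2)) ^ 2 - 1 -
      κ * (e₁ * (x.1 - P.1) + e₂ * (x.2 - P.2) - gy)| ≤ 16 * η := by
  have hHb : H * b ≤ 1 / 16 := by
    calc H * b ≤ H * (1 / (16 * H)) := by gcongr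
      _ = 1 / 16 := by field_simp
  refine ⟨4 * H * (e₁ * E₁ + e₂ * E₂ + H * (e₁ * (x.1 - P.1) + e₂ * (x.2 - P.2)) + H * gy), ?_, ?_⟩
  · have h1 : (E₁ - e₁) ^ 2 ≤ (2 * η) ^ 2 := sq_le_sq' (abs_le.1 d1).1 (abs_le.1 d1).2
    have h2 : (E₂ - e₂) ^ 2 ≤ (2 * η) ^ 2 := sq_le_sq' (abs_le.1 d2).1 (abs_le.1 d2).2
    have h3 : 3 / 4 ≤ e₁ * E₁ + e₂ * E₂ := by nlinarith
    have h4 : H * -b ≤ H * (e₁ * (x.1 - P.1) + e₂ * (x.2 - P.2)) := by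
      gcongr; exact (abs_le.1 hx).1
    have h5 : H * -b ≤ H * gy := by gcongr; exact (abs_le.1 hgy).1
    have : 1 / 2 ≤ e₁ * E₁ + e₂ * E₂ + H * (e₁ * (x.1 - P.1) + e₂ * (x.2 - P.2)) + H * gy := by
      linarith
    nlinarith
  · refine le_trans (le_of_eq ?_) (hq _ rfl)
    congr 1
    simp only
    generalize x.1 - P.1 = v
    generalize x.2 - P.2 = w
    have a1 : P.1 + gy * e₁ - (-e₂ * v + e₁ * w) * e₂ - P.1 = v - (e₁ * v + e₂ * w - gy) * e₁ := by
      linear_combination v * he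
    have a2 : P.2 + gy * e₂ + (-e₂ * v + e₁ * w) * e₁ - P.2 = w - (e₁ * v + e₂ * w - gy) * e₂ := by
      linear_combination w * he
    rw [a1, a2]
    linear_combination (-4 * H ^ 2 * (e₁ * v + e₂ * w - gy) ^ 2) * he

/-! ### Crossing sheets -/

lemma abs_comb_le {a b s t A B : ℝ} (h : a ^ 2 + b ^ 2 = 1) (hs : |s| ≤ A) (ht : |t| ≤ B) :
    |a * s + b * t| ≤ A + B := by
  have ha : |a| ≤ 1 := abs_le_of_sq_le_sq (by nlinarith [sq_nonneg b]) zero_le_one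
  have hb : |b| ≤ 1 := abs_le_of_sq_le_sq (by nlinarith [sq_nonneg a]) zero_le_one
  calc |a * s + b * t| ≤ |a * s| + |b * t| := abs_add_le _ _
    _ = |a| * |s| + |b| * |t| := by rw [abs_mul, abs_mul]
    _ ≤ 1 * A + 1 * B := by gcongr
    _ = A + B := by ring

/-- Two unit vectors `E`, `e` at distance comparable to `δ`: along a curve leaving in a direction
close to `Je`, the linear function `(E - e) · v` is dominated by its tangential part. -/
lemma cross_alg {δ η E₁ E₂ e₁ e₂ X₁ X₂ : ℝ} (hδ : 0 < δ) (hδ1 : δ ≤ 1 / 10) (hη : η ≤ δ / 8)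
    (hE : E₁ ^ 2 + E₂ ^ 2 = 1) (he : e₁ ^ 2 + e₂ ^ 2 = 1)
    (h1 : |X₁ - e₁| ≤ η) (h2 : |X₂ - e₂| ≤ η) (hX : (X₁ - E₁) ^ 2 + (X₂ - E₂) ^ 2 = δ ^ 2) :
    2 / 5 * δ ≤ |E₂ * e₁ - E₁ * e₂| ∧
    ∀ s y τ, |s| ≤ τ / 4 →
      |((E₁ - e₁) * (s * e₁ - y * e₂) + (E₂ - e₂) * (s * e₂ + y * e₁)) -
        y * (E₂ * e₁ - E₁ * e₂)| ≤ δ * τ / 20 := by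
  have c1 : |X₁ - E₁| ≤ δ := abs_le_of_sq_le_sq (by nlinarith [sq_nonneg (X₂ - E₂)]) hδ.le
  have c2 : |X₂ - E₂| ≤ δ := abs_le_of_sq_le_sq (by nlinarith [sq_nonneg (X₁ - E₁)]) hδ.le
  have m1 : |(X₁ - E₁) * (X₁ - e₁)| ≤ δ * (δ / 8) := by
    rw [abs_mul]; exact mul_le_mul c1 (h1.trans hη) (abs_nonneg _) hδ.le
  have m2 : |(X₂ - E₂) * (X₂ - e₂)| ≤ δ * (δ / 8) := by
    rw [abs_mul]; exact mul_le_mul c2 (h2.trans hη) (abs_nonneg _) hδ.le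
  have q1 : (X₁ - e₁) ^ 2 ≤ (δ / 8) ^ 2 :=
    sq_le_sq' (by linarith [(abs_le.1 h1).1]) (by linarith [(abs_le.1 h1).2])
  have q2 : (X₂ - e₂) ^ 2 ≤ (δ / 8) ^ 2 :=
    sq_le_sq' (by linarith [(abs_le.1 h2).1]) (by linarith [(abs_le.1 h2).2])
  obtain ⟨m1l, m1u⟩ := abs_le.1 m1
  obtain ⟨m2l, m2u⟩ := abs_le.1 m2
  set l := 1 - (E₁ * e₁ + E₂ * e₂) with hl
  have hS : (E₁ - e₁) ^ 2 + (E₂ - e₂) ^ 2 = 2 * l := by rw [hl]; linear_combination hE + he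
  have hS' : 2 * l = δ ^ 2 - 2 * ((X₁ - E₁) * (X₁ - e₁)) - 2 * ((X₂ - E₂) * (X₂ - e₂)) +
      (X₁ - e₁) ^ 2 + (X₂ - e₂) ^ 2 := by rw [← hS]; linear_combination hX
  have n1 := sq_nonneg (X₁ - e₁)
  have n2 := sq_nonneg (X₂ - e₂)
  have hδ2 : 0 < δ ^ 2 := by positivity
  have e8 : (δ / 8) ^ 2 = δ ^ 2 / 64 := by ring
  have e9 : δ * (δ / 8) = δ ^ 2 / 8 := by ring
  have hδ3 : δ ^ 2 ≤ δ * (1 / 10) := by rw [sq]; gcongr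
  rw [e8] at q1 q2
  rw [e9] at m1l m1u m2l m2u
  have l1 : δ ^ 2 / 8 ≤ l := by linarith
  have l2 : l ≤ 2 * δ ^ 2 := by linarith
  have l3 : l ≤ δ / 5 := by linarith
  have l0 : 0 ≤ l := by linarith
  have hk : (E₂ * e₁ - E₁ * e₂) ^ 2 = l * (2 - l) := by
    rw [hl]; linear_combination hE + (E₁ ^ 2 + E₂ ^ 2) * he - hE + hE
  refine ⟨?_, fun s y τ hs => ?_⟩
  · refine le_trans (le_abs_self _) (sq_le_sq.1 ?_)
    rw [hk]
    calc (2 / 5 * δ) ^ 2 ≤ δ ^ 2 / 8 * (19 / 10) := by linarith [show (2 / 5 * δ) ^ 2 = 4 / 25 * δ ^ 2 by ring]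
      _ ≤ l * (2 - l) := by gcongr; linarith
  · have : ((E₁ - e₁) * (s * e₁ - y * e₂) + (E₂ - e₂) * (s * e₂ + y * e₁)) -
        y * (E₂ * e₁ - E₁ * e₂) = -(l * s) := by rw [hl]; linear_combination (-s) * he
    rw [this, abs_neg, abs_mul, abs_of_nonneg l0]
    calc l * |s| ≤ (δ / 5) * (τ / 4) := by gcongr
      _ = δ * τ / 20 := by ring

/-- A point `Q` of the limit circle close to `P` has large gradient: some point of the steep sheet
through `P` lies within `r'` of `Q`, so a bound at `Q` would spread to that point. -/
lemma large_grad {H b η η₁ r' E₁ E₂ e₁ e₂ : ℝ} {u : ℝ × ℝ → ℝ} {P Q : ℝ × ℝ} {g : ℝ → ℝ}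
    (hH : 0 < H) (hb : b ≤ 1 / (16 * H)) (hη : 0 < η) (hη1 : η ≤ 1 / 8) (hηη : η ≤ η₁ / 8)
    (hηr : η ≤ H * r' / 8)
    (hE : E₁ ^ 2 + E₂ ^ 2 = 1) (he : e₁ ^ 2 + e₂ ^ 2 = 1)
    (d1 : |E₁ - e₁| ≤ 2 * η) (d2 : |E₂ - e₂| ≤ 2 * η)
    (hEQ : (E₁ + 2 * H * (Q.1 - P.1)) ^ 2 + (E₂ + 2 * H * (Q.2 - P.2)) ^ 2 = 1)
    (hQ1 : |Q.1 - P.1| ≤ b / 8) (hQ2 : |Q.2 - P.2| ≤ b / 8)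
    (hg : ∀ y ∈ Icc (-b) b, |g y| ≤ |y| / 4)
    (hs : ∀ y ∈ Icc (-b) b, ∀ x : ℝ × ℝ,
      x = (P.1 + g y * e₁ - y * e₂, P.2 + g y * e₂ + y * e₁) →
      1 / (2 * η) ≤ Wgraph u x ∧
      |(E₁ + 2 * H * (x.1 - P.1)) ^ 2 + (E₂ + 2 * H * (x.2 - P.2)) ^ 2 - 1| ≤ 16 * η)
    (hnear : Wgraph u Q ≤ 1 / η₁ → ∀ x, ‖x - Q‖ ≤ r' → Wgraph u x ≤ 2 * (1 / η₁)) :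
    1 / η₁ ≤ Wgraph u Q := by
  by_contra hcon
  have hnear := hnear (not_le.1 hcon).le
  have hb0 : 0 ≤ b := by linarith [abs_nonneg (Q.1 - P.1)]
  set y := -e₂ * (Q.1 - P.1) + e₁ * (Q.2 - P.2) with hy
  have hy1 : |y| ≤ b / 8 + b / 8 := abs_comb_le (by linarith [neg_sq e₂]) hQ1 hQ2
  have hyb : y ∈ Icc (-b) b := abs_le.1 (by linarith)
  have hx1 : |e₁ * (Q.1 - P.1) + e₂ * (Q.2 - P.2)| ≤ b / 8 + b / 8 := abs_comb_le he hQ1 hQ2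
  obtain ⟨κ, hκ, hk⟩ := sheet_compare (gy := g y) hH hb hη hη1 hE he d1 d2 (by linarith)
    (by linarith [hg y hyb]) (fun q hq => (hs y hyb q hq).2)
  set Φ := e₁ * (Q.1 - P.1) + e₂ * (Q.2 - P.2) - g y with hΦ
  rw [hEQ, sub_self, zero_sub, abs_neg, abs_mul, abs_of_nonneg (by linarith : 0 ≤ κ)] at hk
  have hΦr : |Φ| ≤ r' := by
    have h1 : 2 * H * |Φ| ≤ 2 * H * r' := by
      have := mul_le_mul_of_nonneg_right hκ (abs_nonneg Φ)
      linarith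
    exact le_of_mul_le_mul_left h1 (by positivity)
  obtain ⟨hW, -⟩ := hs y hyb _ rfl
  have he1 : |e₁| ≤ 1 := abs_le_of_sq_le_sq (by nlinarith [sq_nonneg e₂]) zero_le_one
  have he2 : |e₂| ≤ 1 := abs_le_of_sq_le_sq (by nlinarith [sq_nonneg e₁]) zero_le_one
  have hle := hnear (P.1 + g y * e₁ - y * e₂, P.2 + g y * e₂ + y * e₁) (by
    have a1 : P.1 + g y * e₁ - y * e₂ - Q.1 = -(Φ * e₁) := by
      rw [hΦ, hy]; linear_combination (Q.1 - P.1) * he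
    have a2 : P.2 + g y * e₂ + y * e₁ - Q.2 = -(Φ * e₂) := by
      rw [hΦ, hy]; linear_combination (Q.2 - P.2) * he
    refine norm_prod_le_iff.2 ⟨?_, ?_⟩
    · show |P.1 + g y * e₁ - y * e₂ - Q.1| ≤ r'
      rw [a1, abs_neg, abs_mul]
      exact (mul_le_of_le_one_right (abs_nonneg _) he1).trans hΦr
    · show |P.2 + g y * e₂ + y * e₁ - Q.2| ≤ r'
      rw [a2, abs_neg, abs_mul]
      exact (mul_le_of_le_one_right (abs_nonneg _) he2).trans hΦr)
  have hη₁ : 0 < η₁ := by linarith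
  have h4 : 4 * (1 / η₁) ≤ 1 / (2 * η) := by
    rw [mul_one_div, div_le_div_iff₀ hη₁ (by positivity)]; linarith
  have : 0 < 1 / η₁ := by positivity
  linarith

/-- The sheets through `P` and `Q` intersect when the normal `X` at `Q` is at distance `δ` from the
normal of the limit circle: moving along the sheet through `Q`, the height above the sheet through
`P` changes sign. -/
lemma sheets_cross {H b δ η η₁ E₁ E₂ e₁ e₂ e₁' e₂' X₁ X₂ : ℝ} {P Q : ℝ × ℝ} {g g' : ℝ → ℝ}
    (hH : 0 < H) (hb0 : 0 < b) (hb : b ≤ 1 / (16 * H)) (hη : 0 < η) (hη1 : η ≤ 1 / 8)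
    (hηη : η ≤ η₁) (hδ : 0 < δ) (hδ1 : δ ≤ 1 / 10) (hη₁ : η₁ ≤ δ / 8)
    (hη₁' : η₁ ≤ H * δ * (b / 8) / 32)
    (hE : E₁ ^ 2 + E₂ ^ 2 = 1) (he : e₁ ^ 2 + e₂ ^ 2 = 1) (he' : e₁' ^ 2 + e₂' ^ 2 = 1)
    (d1 : |E₁ - e₁| ≤ 2 * η) (d2 : |E₂ - e₂| ≤ 2 * η)
    (hEQ : (E₁ + 2 * H * (Q.1 - P.1)) ^ 2 + (E₂ + 2 * H * (Q.2 - P.2)) ^ 2 = 1)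
    (hQ1 : |Q.1 - P.1| ≤ b / 8) (hQ2 : |Q.2 - P.2| ≤ b / 8)
    (h1 : |X₁ - e₁'| ≤ η₁) (h2 : |X₂ - e₂'| ≤ η₁)
    (hX : (X₁ - (E₁ + 2 * H * (Q.1 - P.1))) ^ 2 + (X₂ - (E₂ + 2 * H * (Q.2 - P.2))) ^ 2 = δ ^ 2)
    (hgc : ContinuousOn g (Icc (-b) b)) (hg'c : ContinuousOn g' (Icc (-b) b))
    (hg : ∀ y ∈ Icc (-b) b, |g y| ≤ |y| / 4) (hg' : ∀ y ∈ Icc (-b) b, |g' y| ≤ |y| / 4)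
    (hs : ∀ y ∈ Icc (-b) b, ∀ x : ℝ × ℝ,
      x = (P.1 + g y * e₁ - y * e₂, P.2 + g y * e₂ + y * e₁) →
      |(E₁ + 2 * H * (x.1 - P.1)) ^ 2 + (E₂ + 2 * H * (x.2 - P.2)) ^ 2 - 1| ≤ 16 * η)
    (hs' : ∀ y ∈ Icc (-b) b, ∀ x : ℝ × ℝ,
      x = (Q.1 + g' y * e₁' - y * e₂', Q.2 + g' y * e₂' + y * e₁') →
      |(e₁' + 2 * H * (x.1 - Q.1)) ^ 2 + (e₂' + 2 * H * (x.2 - Q.2)) ^ 2 - 1| ≤ 16 * η₁) :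
    ∃ y ∈ Icc (-b) b, ∃ y' ∈ Icc (-b) b, ∃ x : ℝ × ℝ,
      x = (P.1 + g y * e₁ - y * e₂, P.2 + g y * e₂ + y * e₁) ∧
      x = (Q.1 + g' y' * e₁' - y' * e₂', Q.2 + g' y' * e₂' + y' * e₁') := by
  obtain ⟨hκ, hlin⟩ := cross_alg hδ hδ1 hη₁ hEQ he' h1 h2 hX
  set τ := b / 8 with hτ
  have hτ0 : 0 < τ := by positivity
  set K := (E₂ + 2 * H * (Q.2 - P.2)) * e₁' - (E₁ + 2 * H * (Q.1 - P.1)) * e₂' with hK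
  have hsub : Icc (-τ) τ ⊆ Icc (-b) b := Icc_subset_Icc (by linarith) (by linarith)
  -- `x` runs along the sheet through `Q`; `v` and `w` are its normal and tangential coordinates in
  -- the frame at `P`, so `v - g ∘ w` is the height above the sheet through `P`; by `hF` it has the
  -- sign of `y * K` at the endpoints
  set x : ℝ → ℝ × ℝ := fun y => (Q.1 + g' y * e₁' - y * e₂', Q.2 + g' y * e₂' + y * e₁') with hx
  set v : ℝ → ℝ := fun y => e₁ * ((x y).1 - P.1) + e₂ * ((x y).2 - P.2) with hv
  set w : ℝ → ℝ := fun y => -e₂ * ((x y).1 - P.1) + e₁ * ((x y).2 - P.2) with hw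
  have hgτ : ∀ y ∈ Icc (-τ) τ, |g' y| ≤ τ / 4 := fun y hy => by
    have := hg' y (hsub hy); have := abs_le.2 hy; linarith
  have hc1 : ∀ y ∈ Icc (-τ) τ, |(x y).1 - P.1| ≤ 3 * τ := by
    intro y hy
    have h := abs_comb_le he' (hgτ y hy) ((abs_neg y).le.trans (abs_le.2 hy))
    have : (x y).1 - P.1 = (Q.1 - P.1) + (e₁' * g' y + e₂' * -y) := by simp only [hx]; ring
    rw [this]
    exact (abs_add_le _ _).trans (by linarith)
  have hc2 : ∀ y ∈ Icc (-τ) τ, |(x y).2 - P.2| ≤ 3 * τ := by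
    intro y hy
    have h := abs_comb_le (by linarith : e₂' ^ 2 + e₁' ^ 2 = 1) (hgτ y hy) (abs_le.2 hy)
    have : (x y).2 - P.2 = (Q.2 - P.2) + (e₂' * g' y + e₁' * y) := by simp only [hx]; ring
    rw [this]
    exact (abs_add_le _ _).trans (by linarith)
  have hwb : ∀ y ∈ Icc (-τ) τ, w y ∈ Icc (-b) b := fun y hy => abs_le.1 <| by
    have := abs_comb_le (by linarith [neg_sq e₂] : (-e₂) ^ 2 + e₁ ^ 2 = 1) (hc1 y hy) (hc2 y hy)
    linarith
  have hvb : ∀ y ∈ Icc (-τ) τ, |v y| ≤ b := fun y hy => by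
    have := abs_comb_le he (hc1 y hy) (hc2 y hy)
    linarith
  have hgb : ∀ y ∈ Icc (-τ) τ, |g (w y)| ≤ b := fun y hy => by
    have := hg _ (hwb y hy); have := abs_le.2 (hwb y hy); linarith
  have hF : ∀ y ∈ Icc (-τ) τ, ∃ κ ≥ 2 * H,
      |4 * H * (y * K) - κ * (v y - g (w y))| ≤ 32 * η₁ + 4 * H * (δ * τ / 20) := by
    intro y hy
    obtain ⟨κ, hκ, hk⟩ := sheet_compare (gy := g (w y)) (x := x y) hH hb hη hη1 hE he d1 d2
      (hvb y hy) (hgb y hy) (fun q hq => hs _ (hwb y hy) q hq)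
    refine ⟨κ, hκ, ?_⟩
    have k1 := hs' y (hsub hy) (x y) rfl
    have k2 := hlin (g' y) y τ (hgτ y hy)
    have k3 : (E₁ + 2 * H * ((x y).1 - P.1)) ^ 2 + (E₂ + 2 * H * ((x y).2 - P.2)) ^ 2 - 1 =
        ((e₁' + 2 * H * ((x y).1 - Q.1)) ^ 2 + (e₂' + 2 * H * ((x y).2 - Q.2)) ^ 2 - 1) +
        4 * H * ((E₁ + 2 * H * (Q.1 - P.1) - e₁') * (g' y * e₁' - y * e₂') +
          (E₂ + 2 * H * (Q.2 - P.2) - e₂') * (g' y * e₂' + y * e₁')) := by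
      simp only [hx]
      linear_combination hEQ - he'
    rw [k3] at hk
    have k4 : |4 * H * (((E₁ + 2 * H * (Q.1 - P.1) - e₁') * (g' y * e₁' - y * e₂') +
          (E₂ + 2 * H * (Q.2 - P.2) - e₂') * (g' y * e₂' + y * e₁')) - y * K)| ≤
        4 * H * (δ * τ / 20) := by
      rw [abs_mul, abs_of_nonneg (by positivity : 0 ≤ 4 * H)]
      gcongr
    change |_ - κ * (v y - g (w y))| ≤ _ at hk
    rw [abs_le] at hk k1 k4 ⊢
    constructor <;> linarith [hk.1, hk.2, k1.1, k1.2, k4.1, k4.2]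
  have hbig : 32 * η₁ + 4 * H * (δ * τ / 20) < 4 * H * (τ * |K|) := by
    have : 4 * H * (τ * (2 / 5 * δ)) ≤ 4 * H * (τ * |K|) := by gcongr
    have : 0 < H * δ * τ := by positivity
    linarith
  have hpos : ∀ y ∈ Icc (-τ) τ, y * K = τ * |K| → 0 ≤ v y - g (w y) := by
    intro y hy h
    obtain ⟨κ, hκ, hk⟩ := hF y hy
    rw [h] at hk
    by_contra hn
    have := mul_nonneg_of_nonpos_of_nonpos (a := -κ) (by linarith) (not_le.1 hn).le
    linarith [(abs_le.1 hk).2]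
  have hneg : ∀ y ∈ Icc (-τ) τ, y * K = -(τ * |K|) → v y - g (w y) ≤ 0 := by
    intro y hy h
    obtain ⟨κ, hκ, hk⟩ := hF y hy
    rw [h] at hk
    by_contra hn
    have := mul_nonneg (a := κ) (by linarith) (not_le.1 hn).le
    linarith [(abs_le.1 hk).1]
  have hg'c' := hg'c.mono hsub
  have hx1c : ContinuousOn (fun y => (x y).1) (Icc (-τ) τ) := by
    simp only [hx]; fun_prop
  have hx2c : ContinuousOn (fun y => (x y).2) (Icc (-τ) τ) := by
    simp only [hx]; fun_prop
  have hvc : ContinuousOn v (Icc (-τ) τ) := by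
    simp only [hv]; fun_prop
  have hwc : ContinuousOn w (Icc (-τ) τ) := by
    simp only [hw]; fun_prop
  have hgwc : ContinuousOn (fun y => g (w y)) (Icc (-τ) τ) := hgc.comp hwc hwb
  have hmem1 : τ ∈ Icc (-τ) τ := ⟨by linarith, le_rfl⟩
  have hmem2 : -τ ∈ Icc (-τ) τ := ⟨le_rfl, by linarith⟩
  obtain ⟨y, hy, hyeq⟩ : ∃ y ∈ Icc (-τ) τ, v y = g (w y) := by
    rcases abs_cases K with ⟨hK1, -⟩ | ⟨hK1, -⟩
    · refine isPreconnected_Icc.intermediate_value₂ hmem2 hmem1 hvc hgwc ?_ ?_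
      · exact sub_nonpos.1 (hneg _ hmem2 (by rw [hK1]; ring))
      · exact sub_nonneg.1 (hpos _ hmem1 (by rw [hK1]))
    · refine isPreconnected_Icc.intermediate_value₂ hmem1 hmem2 hvc hgwc ?_ ?_
      · exact sub_nonpos.1 (hneg _ hmem1 (by rw [hK1]; ring))
      · exact sub_nonneg.1 (hpos _ hmem2 (by rw [hK1]; ring))
  refine ⟨w y, hwb y hy, y, hsub hy, x y, ?_, rfl⟩
  rw [← hyeq]
  refine Prod.ext ?_ ?_
  · simp only [hv, hw]; linear_combination (-((x y).1 - P.1)) * he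
  · simp only [hv, hw]; linear_combination (-((x y).2 - P.2)) * he

/-- Along the limit circle the horizontal normal never sits at distance exactly `δ` from its
expected value. -/
lemma local_prop {H r : ℝ} (hH : 0 < H) (hr : 0 < r) : ∃ d > 0, ∀ δ, 0 < δ → δ ≤ 1 / 10 → ∃ η > 0,
    ∀ {Ω : Set (ℝ × ℝ)} {u : ℝ × ℝ → ℝ} {P Q : ℝ × ℝ} {E₁ E₂ : ℝ}, IsOpen Ω →
    IsCMCSolution H Ω u → Metric.ball P r ⊆ Ω → Metric.ball Q r ⊆ Ω → E₁ ^ 2 + E₂ ^ 2 = 1 →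
    (E₁ + 2 * H * (Q.1 - P.1)) ^ 2 + (E₂ + 2 * H * (Q.2 - P.2)) ^ 2 = 1 → ‖Q - P‖ ≤ d →
    1 / η ≤ Wgraph u P → |Xx u P - E₁| ≤ η → |Xy u P - E₂| ≤ η →
    (Xx u Q - (E₁ + 2 * H * (Q.1 - P.1))) ^ 2 + (Xy u Q - (E₂ + 2 * H * (Q.2 - P.2))) ^ 2
      ≠ δ ^ 2 := by
  obtain ⟨b, hb0, hb, hsh⟩ := sheet_frame hH hr
  refine ⟨b / 8, by positivity, fun δ hδ hδ1 => ?_⟩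
  set η₁ := min (δ / 8) (H * δ * (b / 8) / 32) with hη₁def
  have hη₁0 : 0 < η₁ := lt_min (by positivity) (by positivity)
  have hη₁a : η₁ ≤ δ / 8 := min_le_left _ _
  have hη₁b : η₁ ≤ H * δ * (b / 8) / 32 := min_le_right _ _
  obtain ⟨r', hr', hnear⟩ := bounded_near hH hr (m := 1 / η₁) (by
    rw [le_div_iff₀ hη₁0]; linarith)
  set η := min (η₁ / 8) (H * r' / 8) with hηdef
  have hη0 : 0 < η := lt_min (by positivity) (by positivity)
  have hηa : η ≤ η₁ / 8 := min_le_left _ _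
  have hηb : η ≤ H * r' / 8 := min_le_right _ _
  refine ⟨η, hη0, ?_⟩
  intro Ω u P Q E₁ E₂ hΩ hu hBP hBQ hE hEQ hPQ hWP hX1 hX2 hcon
  obtain ⟨e₁, e₂, g, he, k1, k2, hgc, hg, hs⟩ := hsh hΩ hu hBP hη0 (by linarith) hWP
  have hQ1 : |Q.1 - P.1| ≤ b / 8 := (norm_fst_le (Q - P)).trans hPQ
  have hQ2 : |Q.2 - P.2| ≤ b / 8 := (norm_snd_le (Q - P)).trans hPQ
  have d1 : |E₁ - e₁| ≤ 2 * η := by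
    rw [abs_le] at *; constructor <;> linarith [hX1.1, hX1.2, k1.1, k1.2]
  have d2 : |E₂ - e₂| ≤ 2 * η := by
    rw [abs_le] at *; constructor <;> linarith [hX2.1, hX2.2, k2.1, k2.2]
  have hWQ : 1 / η₁ ≤ Wgraph u Q :=
    large_grad hH hb hη0 (by linarith) hηa hηb hE he d1 d2 hEQ hQ1 hQ2 hg
      (fun y hy x hx => ⟨(hs y hy x hx).1, (hs y hy x hx).2.2.2 E₁ E₂ hX1 hX2⟩)
      (fun h x hx => hnear hΩ hu hBQ h x hx)
  obtain ⟨e₁', e₂', g', he', k1', k2', hgc', hg', hs'⟩ := hsh hΩ hu hBQ hη₁0 (by linarith) hWQ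
  obtain ⟨y, hy, y', hy', x, hx, hx'⟩ := sheets_cross hH hb0 hb hη0 (by linarith)
    (by linarith) hδ hδ1 hη₁a hη₁b hE he he' d1 d2 hEQ hQ1 hQ2 k1' k2' hcon hgc hgc' hg hg'
    (fun y hy x hx => (hs y hy x hx).2.2.2 E₁ E₂ hX1 hX2)
    (fun y hy x hx => (hs' y hy x hx).2.2.2 e₁' e₂' k1' k2')
  obtain ⟨-, p1, p2, -⟩ := hs y hy x hx
  obtain ⟨-, p1', p2', -⟩ := hs' y' hy' x hx'
  have f1 : |Xx u Q - (E₁ + 2 * H * (Q.1 - P.1))| ≤ 3 * η₁ := by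
    rw [abs_le] at *
    constructor <;> linarith [hX1.1, hX1.2, p1.1, p1.2, p1'.1, p1'.2]
  have f2 : |Xy u Q - (E₂ + 2 * H * (Q.2 - P.2))| ≤ 3 * η₁ := by
    rw [abs_le] at *
    constructor <;> linarith [hX2.1, hX2.2, p2.1, p2.2, p2'.1, p2'.2]
  have g1 := sq_le_sq' (abs_le.1 f1).1 (abs_le.1 f1).2
  have g2 := sq_le_sq' (abs_le.1 f2).1 (abs_le.1 f2).2
  have g3 : (3 * η₁) ^ 2 ≤ (3 / 8 * δ) ^ 2 :=
    pow_le_pow_left₀ (by positivity) (by linarith) 2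
  have : 0 < δ ^ 2 := by positivity
  linarith [show (3 / 8 * δ) ^ 2 = 9 / 64 * δ ^ 2 by ring]

/-! ### Propagation along arcs and the conclusion -/

/-- The circle of radius `1 / (2H)` through `P` with outward unit normal `(E₁, E₂)` at `P`,
parametrized by the rotation angle from `P`. -/
def arcPt (H : ℝ) (P : ℝ × ℝ) (E₁ E₂ θ : ℝ) : ℝ × ℝ :=
  (P.1 + (E₁ * cos θ - E₂ * sin θ - E₁) / (2 * H), P.2 + (E₂ * cos θ + E₁ * sin θ - E₂) / (2 * H))

section arc
variable {H E₁ E₂ : ℝ} {P : ℝ × ℝ}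

lemma arcPt_zero : arcPt H P E₁ E₂ 0 = P := by simp [arcPt]

lemma continuous_arcPt : Continuous (arcPt H P E₁ E₂) := by
  unfold arcPt; fun_prop

lemma arcPt_fst (hH : 0 < H) (θ : ℝ) :
    E₁ + 2 * H * ((arcPt H P E₁ E₂ θ).1 - P.1) = E₁ * cos θ - E₂ * sin θ := by
  simp only [arcPt]; field_simp; ring

lemma arcPt_snd (hH : 0 < H) (θ : ℝ) :
    E₂ + 2 * H * ((arcPt H P E₁ E₂ θ).2 - P.2) = E₂ * cos θ + E₁ * sin θ := by
  simp only [arcPt]; field_simp; ring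

lemma arcPt_circle (hH : 0 < H) (hE : E₁ ^ 2 + E₂ ^ 2 = 1) (θ : ℝ) :
    (E₁ + 2 * H * ((arcPt H P E₁ E₂ θ).1 - P.1)) ^ 2 +
      (E₂ + 2 * H * ((arcPt H P E₁ E₂ θ).2 - P.2)) ^ 2 = 1 := by
  rw [arcPt_fst hH, arcPt_snd hH]
  linear_combination (cos θ ^ 2 + sin θ ^ 2) * hE + sin_sq_add_cos_sq θ

lemma arcPt_dist (hH : 0 < H) (hE : E₁ ^ 2 + E₂ ^ 2 = 1) (θ : ℝ) :
    (2 * H) ^ 2 * (((arcPt H P E₁ E₂ θ).1 - P.1) ^ 2 + ((arcPt H P E₁ E₂ θ).2 - P.2) ^ 2) =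
      2 - 2 * cos θ := by
  have h1 := arcPt_fst (P := P) (E₁ := E₁) (E₂ := E₂) hH θ
  have h2 := arcPt_snd (P := P) (E₁ := E₁) (E₂ := E₂) hH θ
  have h3 : 2 * H * ((arcPt H P E₁ E₂ θ).1 - P.1) = E₁ * cos θ - E₂ * sin θ - E₁ := by linarith
  have h4 : 2 * H * ((arcPt H P E₁ E₂ θ).2 - P.2) = E₂ * cos θ + E₁ * sin θ - E₂ := by linarith
  rw [mul_add, ← mul_pow, ← mul_pow, h3, h4]
  linear_combination (cos θ ^ 2 + sin θ ^ 2 + 1 - 2 * cos θ) * hE + sin_sq_add_cos_sq θ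

lemma exists_arcPt (hH : 0 < H) (hE : E₁ ^ 2 + E₂ ^ 2 = 1) {Q : ℝ × ℝ}
    (hQ : (E₁ + 2 * H * (Q.1 - P.1)) ^ 2 + (E₂ + 2 * H * (Q.2 - P.2)) ^ 2 = 1) :
    ∃ θ, |θ| ≤ π ∧ arcPt H P E₁ E₂ θ = Q := by
  set A := E₁ + 2 * H * (Q.1 - P.1) with hA
  set B := E₂ + 2 * H * (Q.2 - P.2) with hB
  set z : ℂ := ⟨A * E₁ + B * E₂, B * E₁ - A * E₂⟩ with hz
  have hn : ‖z‖ = 1 := by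
    have h : ‖z‖ ^ 2 = 1 := by
      rw [← Complex.normSq_eq_norm_sq, Complex.normSq_apply]
      simp only [hz]
      linear_combination (E₁ ^ 2 + E₂ ^ 2) * hQ + hE
    nlinarith [norm_nonneg z]
  have hz0 : z ≠ 0 := by rw [← norm_pos_iff, hn]; exact one_pos
  have hc : cos z.arg = A * E₁ + B * E₂ := by rw [Complex.cos_arg hz0, hn, div_one]
  have hs : sin z.arg = B * E₁ - A * E₂ := by rw [Complex.sin_arg, hn, div_one]
  refine ⟨z.arg, Complex.abs_arg_le_pi z, ?_⟩
  have h1 := arcPt_fst (P := P) (E₁ := E₁) (E₂ := E₂) hH z.arg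
  have h2 := arcPt_snd (P := P) (E₁ := E₁) (E₂ := E₂) hH z.arg
  rw [hc, hs] at h1 h2
  have hH2 : 2 * H ≠ 0 := by positivity
  refine Prod.ext ?_ ?_
  · refine mul_left_cancel₀ hH2 ?_
    linear_combination h1 + A * hE + hA
  · refine mul_left_cancel₀ hH2 ?_
    linear_combination h2 + B * hE + hB

lemma arcPt_norm_le (hH : 0 < H) (hE : E₁ ^ 2 + E₂ ^ 2 = 1) {θ θ' : ℝ} (h : |θ| ≤ |θ'|)
    (h' : |θ'| ≤ π) : ‖arcPt H P E₁ E₂ θ - P‖ ≤ 2 * ‖arcPt H P E₁ E₂ θ' - P‖ := by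
  have hcos : cos θ' ≤ cos θ := by
    rw [← cos_abs θ, ← cos_abs θ']
    exact cos_le_cos_of_nonneg_of_le_pi (abs_nonneg _) h' h
  have k1 := arcPt_dist (P := P) hH hE θ
  have k2 := arcPt_dist (P := P) hH hE θ'
  set x := arcPt H P E₁ E₂ θ
  set x' := arcPt H P E₁ E₂ θ'
  have a1 : |x'.1 - P.1| ≤ ‖x' - P‖ := norm_fst_le (x' - P)
  have a2 : |x'.2 - P.2| ≤ ‖x' - P‖ := norm_snd_le (x' - P)
  have b1 := sq_le_sq' (abs_le.1 a1).1 (abs_le.1 a1).2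
  have b2 := sq_le_sq' (abs_le.1 a2).1 (abs_le.1 a2).2
  have hle : (x.1 - P.1) ^ 2 + (x.2 - P.2) ^ 2 ≤ (x'.1 - P.1) ^ 2 + (x'.2 - P.2) ^ 2 :=
    le_of_mul_le_mul_left (a := (2 * H) ^ 2) (by linarith) (by positivity)
  have c1 := sq_nonneg (x.1 - P.1)
  have c2 := sq_nonneg (x.2 - P.2)
  have c3 : (2 * ‖x' - P‖) ^ 2 = 4 * ‖x' - P‖ ^ 2 := by ring
  have c4 := sq_nonneg ‖x' - P‖
  refine norm_prod_le_iff.2 ⟨?_, ?_⟩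
  · exact abs_le_of_sq_le_sq (by linarith : (x.1 - P.1) ^ 2 ≤ _) (by positivity)
  · exact abs_le_of_sq_le_sq (by linarith : (x.2 - P.2) ^ 2 ≤ _) (by positivity)

end arc

lemma continuousOn_X {H : ℝ} {Ω : Set (ℝ × ℝ)} {u : ℝ × ℝ → ℝ} (hΩ : IsOpen Ω)
    (hu : IsCMCSolution H Ω u) : ContinuousOn (Xx u) Ω ∧ ContinuousOn (Xy u) Ω := by
  obtain ⟨h1, h2⟩ := hu.contDiffOn_pd hΩ
  have h3 := (contDiffOn_Wgraph hΩ hu).continuousOn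
  exact ⟨h1.continuousOn.div h3 fun x _ => (Wgraph_pos u x).ne',
    h2.continuousOn.div h3 fun x _ => (Wgraph_pos u x).ne'⟩

/-- The horizontal normals converge to a unit vector only when the gradients blow up. -/
lemma tendsto_inv_W {u : ℕ → ℝ × ℝ → ℝ} {P : ℝ × ℝ} {E₁ E₂ : ℝ} (hE : E₁ ^ 2 + E₂ ^ 2 = 1)
    (h1 : Tendsto (fun n => Xx (u n) P) atTop (nhds E₁))
    (h2 : Tendsto (fun n => Xy (u n) P) atTop (nhds E₂)) :
    Tendsto (fun n => 1 / Wgraph (u n) P) atTop (nhds 0) := by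
  have h3 : Tendsto (fun n => √(1 - (Xx (u n) P ^ 2 + Xy (u n) P ^ 2))) atTop
      (nhds (√(1 - (E₁ ^ 2 + E₂ ^ 2)))) :=
    (tendsto_const_nhds.sub ((h1.pow 2).add (h2.pow 2))).sqrt
  rw [hE, sub_self, sqrt_zero] at h3
  refine h3.congr fun n => ?_
  rw [X_sq, sub_sub_cancel, Real.sqrt_sq]
  exact (one_div_pos.2 (Wgraph_pos _ _)).le

/-- Convergence of the horizontal normals at `P` to the unit vector `E` propagates along the
circle through `P` with outward normal `E`, over a distance depending only on `H` and the
distance to the boundary. -/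
lemma propagate {H r : ℝ} (hH : 0 < H) (hr : 0 < r) : ∃ d > 0,
    ∀ {Ω : Set (ℝ × ℝ)} {u : ℕ → ℝ × ℝ → ℝ} {P Q : ℝ × ℝ} {E₁ E₂ : ℝ}, IsOpen Ω →
    (∀ n, IsCMCSolution H Ω (u n)) → Metric.ball P (2 * r) ⊆ Ω → E₁ ^ 2 + E₂ ^ 2 = 1 →
    (E₁ + 2 * H * (Q.1 - P.1)) ^ 2 + (E₂ + 2 * H * (Q.2 - P.2)) ^ 2 = 1 → ‖Q - P‖ ≤ d →
    Tendsto (fun n => Xx (u n) P) atTop (nhds E₁) →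
    Tendsto (fun n => Xy (u n) P) atTop (nhds E₂) →
    Tendsto (fun n => Xx (u n) Q) atTop (nhds (E₁ + 2 * H * (Q.1 - P.1))) ∧
    Tendsto (fun n => Xy (u n) Q) atTop (nhds (E₂ + 2 * H * (Q.2 - P.2))) := by
  obtain ⟨d, hd, hloc⟩ := local_prop hH hr
  have hdr : 0 < min d r := lt_min hd hr
  have hd1 : min d r ≤ d := min_le_left _ _
  have hd2 : min d r ≤ r := min_le_right _ _
  refine ⟨min d r / 4, by positivity, ?_⟩
  intro Ω u P Q E₁ E₂ hΩ hu hball hE hQ hPQ h1 h2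
  obtain ⟨θ', hθ', rfl⟩ := exists_arcPt hH hE hQ
  set A := arcPt H P E₁ E₂ with hA
  have hdist : ∀ θ ∈ Icc (-|θ'|) |θ'|, ‖A θ - P‖ ≤ min d r / 2 := by
    intro θ hθ
    have := arcPt_norm_le (P := P) hH hE (abs_le.2 hθ) hθ'
    rw [← hA] at this
    linarith
  have hballA : ∀ θ ∈ Icc (-|θ'|) |θ'|, Metric.ball (A θ) r ⊆ Ω := by
    intro θ hθ
    refine (Metric.ball_subset_ball' ?_).trans hball
    rw [dist_eq_norm]
    linarith [hdist θ hθ]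
  have hAc : Continuous A := continuous_arcPt
  have hθ'm : θ' ∈ Icc (-|θ'|) |θ'| := abs_le.1 le_rfl
  have h0m : (0 : ℝ) ∈ Icc (-|θ'|) |θ'| := ⟨by linarith [abs_nonneg θ'], abs_nonneg _⟩
  have hmain : ∀ δ, 0 < δ → δ ≤ 1 / 10 → ∀ᶠ n in atTop,
      (Xx (u n) (A θ') - (E₁ + 2 * H * ((A θ').1 - P.1))) ^ 2 +
        (Xy (u n) (A θ') - (E₂ + 2 * H * ((A θ').2 - P.2))) ^ 2 < δ ^ 2 := by
    intro δ hδ hδ1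
    obtain ⟨η, hη, hne⟩ := hloc δ hδ hδ1
    have hε : 0 < min η (δ / 2) := lt_min hη (by positivity)
    filter_upwards [Metric.tendsto_nhds.1 h1 _ hε, Metric.tendsto_nhds.1 h2 _ hε,
      (tendsto_inv_W hE h1 h2).eventually_le_const hη] with n k1 k2 k3
    rw [Real.dist_eq] at k1 k2
    have hW : 1 / η ≤ Wgraph (u n) P := by
      rw [div_le_iff₀ (Wgraph_pos _ _)] at k3
      rw [div_le_iff₀ hη]; linarith
    have m1 := min_le_left η (δ / 2)
    have m2 := min_le_right η (δ / 2)
    obtain ⟨c1, c2⟩ := continuousOn_X hΩ (hu n)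
    have hmaps : MapsTo A (Icc (-|θ'|) |θ'|) Ω := fun θ hθ =>
      hballA θ hθ (Metric.mem_ball_self hr)
    have c3 := c1.comp hAc.continuousOn hmaps
    have c4 := c2.comp hAc.continuousOn hmaps
    set F : ℝ → ℝ := fun θ => (Xx (u n) (A θ) - (E₁ + 2 * H * ((A θ).1 - P.1))) ^ 2 +
        (Xy (u n) (A θ) - (E₂ + 2 * H * ((A θ).2 - P.2))) ^ 2 with hF
    have hFc : ContinuousOn F (Icc (-|θ'|) |θ'|) := by
      have e1 : Continuous fun θ => E₁ + 2 * H * ((A θ).1 - P.1) := by fun_prop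
      have e2 : Continuous fun θ => E₂ + 2 * H * ((A θ).2 - P.2) := by fun_prop
      exact ((c3.sub e1.continuousOn).pow 2).add ((c4.sub e2.continuousOn).pow 2)
    have hF0 : F 0 < δ ^ 2 := by
      have hA0 : A 0 = P := arcPt_zero
      simp only [hF, hA0, sub_self, mul_zero, add_zero]
      have q1 : |Xx (u n) P - E₁| ≤ δ / 2 := by linarith
      have q2 : |Xy (u n) P - E₂| ≤ δ / 2 := by linarith
      have s1 := sq_le_sq' (abs_le.1 q1).1 (abs_le.1 q1).2
      have s2 := sq_le_sq' (abs_le.1 q2).1 (abs_le.1 q2).2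
      have : 0 < δ ^ 2 := by positivity
      linarith [show (δ / 2) ^ 2 = δ ^ 2 / 4 by ring]
    -- otherwise the distance to the expected normal equals `δ` somewhere on the arc
    by_contra hcon
    obtain ⟨θ, hθ, hθF⟩ := isPreconnected_Icc.intermediate_value₂ h0m hθ'm hFc
      continuousOn_const hF0.le (not_lt.1 hcon)
    refine hne hΩ (hu n) ((Metric.ball_subset_ball (by linarith)).trans hball) (hballA θ hθ) hE
      (arcPt_circle hH hE θ) ?_ hW (by linarith) (by linarith) hθF
    have := hdist θ hθ
    rw [hA] at this
    linarith
  constructor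
  · refine Metric.tendsto_nhds.2 fun ε hε => ?_
    filter_upwards [hmain (min ε (1 / 10)) (lt_min hε (by norm_num)) (min_le_right _ _)] with n hn
    rw [Real.dist_eq]
    refine lt_of_lt_of_le (abs_lt_of_sq_lt_sq (lt_of_le_of_lt ?_ hn) ?_) (min_le_left ε (1 / 10))
    · linarith [sq_nonneg (Xy (u n) (A θ') - (E₂ + 2 * H * ((A θ').2 - P.2)))]
    · exact (lt_min hε (by norm_num)).le
  · refine Metric.tendsto_nhds.2 fun ε hε => ?_
    filter_upwards [hmain (min ε (1 / 10)) (lt_min hε (by norm_num)) (min_le_right _ _)] with n hn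
    rw [Real.dist_eq]
    refine lt_of_lt_of_le (abs_lt_of_sq_lt_sq (lt_of_le_of_lt ?_ hn) ?_) (min_le_left ε (1 / 10))
    · linarith [sq_nonneg (Xx (u n) (A θ') - (E₁ + 2 * H * ((A θ').1 - P.1)))]
    · exact (lt_min hε (by norm_num)).le

/-- An unbounded gradient at `P` has a subsequence along which the horizontal normals at `P`
converge to a unit vector. -/
lemma exists_subseq {u : ℕ → ℝ × ℝ → ℝ} {P : ℝ × ℝ}
    (h : ¬ ∃ M : ℝ, ∀ n, Wgraph (u n) P ≤ M) : ∃ φ : ℕ → ℕ, StrictMono φ ∧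
    ∃ E₁ E₂ : ℝ, E₁ ^ 2 + E₂ ^ 2 = 1 ∧ Tendsto (fun n => Xx (u (φ n)) P) atTop (nhds E₁) ∧
      Tendsto (fun n => Xy (u (φ n)) P) atTop (nhds E₂) := by
  have hfreq : ∀ n : ℕ, ∃ᶠ k in atTop, (n : ℝ) ≤ Wgraph (u k) P := by
    intro n hn
    refine h ?_
    have hb : IsBoundedUnder (· ≤ ·) atTop (fun k => Wgraph (u k) P) :=
      ⟨n, by
        rw [eventually_map]
        filter_upwards [hn] with k hk
        exact (not_le.1 hk).le⟩
    obtain ⟨M, hM⟩ := hb.bddAbove_range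
    exact ⟨M, fun k => hM ⟨k, rfl⟩⟩
  obtain ⟨φ, hφ, hW⟩ := extraction_forall_of_frequently hfreq
  have hWt : Tendsto (fun n => Wgraph (u (φ n)) P) atTop atTop :=
    tendsto_atTop_mono hW tendsto_natCast_atTop_atTop
  have hin : ∀ n, (Xx (u (φ n)) P, Xy (u (φ n)) P) ∈ Metric.closedBall (0 : ℝ × ℝ) 1 := by
    intro n
    have hsq := X_sq (u (φ n)) P
    have h0 := sq_nonneg (1 / Wgraph (u (φ n)) P)
    rw [mem_closedBall_zero_iff]
    refine norm_prod_le_iff.2 ⟨?_, ?_⟩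
    · exact abs_le_of_sq_le_sq (by linarith [sq_nonneg (Xy (u (φ n)) P)] :
        Xx (u (φ n)) P ^ 2 ≤ 1 ^ 2) zero_le_one
    · exact abs_le_of_sq_le_sq (by linarith [sq_nonneg (Xx (u (φ n)) P)] :
        Xy (u (φ n)) P ^ 2 ≤ 1 ^ 2) zero_le_one
  obtain ⟨E, -, ψ, hψ, hlim⟩ := (isCompact_closedBall (0 : ℝ × ℝ) 1).tendsto_subseq hin
  have l1 : Tendsto (fun n => Xx (u (φ (ψ n))) P) atTop (nhds E.1) :=
    (continuous_fst.tendsto E).comp hlim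
  have l2 : Tendsto (fun n => Xy (u (φ (ψ n))) P) atTop (nhds E.2) :=
    (continuous_snd.tendsto E).comp hlim
  refine ⟨φ ∘ ψ, hφ.comp hψ, E.1, E.2, ?_, l1, l2⟩
  have t1 := (l1.pow 2).add (l2.pow 2)
  have t2 : Tendsto (fun n => 1 - (1 / Wgraph (u (φ (ψ n))) P) ^ 2) atTop (nhds (1 - 0 ^ 2)) := by
    have := (tendsto_inv_atTop_zero.comp hWt).comp hψ.tendsto_atTop
    refine tendsto_const_nhds.sub (Tendsto.pow ?_ 2)
    refine this.congr fun n => ?_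
    simp [one_div]
  simp only [X_sq] at t1
  have := tendsto_nhds_unique t1 t2
  rw [this]; norm_num

lemma enorm2_circle {H E₁ E₂ : ℝ} {P q : ℝ × ℝ} (hH : 0 < H) :
    enorm2 (q - (P + (1 / (2 * H)) • ((-E₁, -E₂) : ℝ × ℝ))) = 1 / (2 * H) ↔
      (E₁ + 2 * H * (q.1 - P.1)) ^ 2 + (E₂ + 2 * H * (q.2 - P.2)) ^ 2 = 1 := by
  have h : (0 : ℝ) ≤ 1 / (2 * H) := by positivity
  rw [enorm2, Real.sqrt_eq_iff_eq_sq (by positivity) h]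
  simp only [Prod.fst_sub, Prod.snd_sub, Prod.fst_add, Prod.snd_add, Prod.smul_fst, Prod.smul_snd,
    smul_eq_mul]
  have e : (E₁ + 2 * H * (q.1 - P.1)) ^ 2 + (E₂ + 2 * H * (q.2 - P.2)) ^ 2 = (2 * H) ^ 2 *
      ((q.1 - (P.1 + 1 / (2 * H) * -E₁)) ^ 2 + (q.2 - (P.2 + 1 / (2 * H) * -E₂)) ^ 2) := by
    field_simp; ring
  rw [e, div_pow, one_pow, eq_div_iff (by positivity), mul_comm]

/-- The component of the limit circle in `Ω` through `P` contains a non-degenerate arc. -/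
lemma component_nontrivial {H E₁ E₂ : ℝ} {P : ℝ × ℝ} {Ω K : Set (ℝ × ℝ)} (hH : 0 < H)
    (hE : E₁ ^ 2 + E₂ ^ 2 = 1) (hΩ : IsOpen Ω) (hP : P ∈ Ω)
    (hK : ∀ q, (E₁ + 2 * H * (q.1 - P.1)) ^ 2 + (E₂ + 2 * H * (q.2 - P.2)) ^ 2 = 1 → q ∈ K) :
    (connectedComponentIn (K ∩ Ω) P).Nontrivial := by
  have hopen : IsOpen (arcPt H P E₁ E₂ ⁻¹' Ω) := hΩ.preimage continuous_arcPt
  have h0 : (0 : ℝ) ∈ arcPt H P E₁ E₂ ⁻¹' Ω := by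
    show arcPt H P E₁ E₂ 0 ∈ Ω
    rwa [arcPt_zero]
  obtain ⟨ε, hε, hsub⟩ := Metric.isOpen_iff.1 hopen 0 h0
  set θ := min (ε / 2) 1 with hθ
  have hθ0 : 0 < θ := lt_min (by positivity) one_pos
  have hθ1 : θ ≤ 1 := min_le_right _ _
  have hθε : θ ≤ ε / 2 := min_le_left _ _
  have himg : arcPt H P E₁ E₂ '' Icc 0 θ ⊆ connectedComponentIn (K ∩ Ω) P := by
    refine IsPreconnected.subset_connectedComponentIn
      (isPreconnected_Icc.image _ continuous_arcPt.continuousOn)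
      ⟨0, ⟨le_rfl, hθ0.le⟩, arcPt_zero⟩ ?_
    rintro _ ⟨t, ht, rfl⟩
    refine ⟨hK _ (arcPt_circle hH hE t), hsub ?_⟩
    rw [mem_ball_zero_iff, Real.norm_eq_abs, abs_of_nonneg ht.1]
    linarith [ht.2]
  refine ⟨P, himg ⟨0, ⟨le_rfl, hθ0.le⟩, arcPt_zero⟩, arcPt H P E₁ E₂ θ,
    himg ⟨θ, ⟨hθ0.le, le_rfl⟩, rfl⟩, fun heq => ?_⟩
  have hd := arcPt_dist (P := P) hH hE θ
  rw [← heq, sub_self, sub_self] at hd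
  have hcos : cos θ = 1 := by linarith [show (2 * H) ^ 2 * ((0 : ℝ) ^ 2 + 0 ^ 2) = 0 by ring]
  have := cos_lt_cos_of_nonneg_of_le_pi le_rfl (by linarith [pi_gt_three] : θ ≤ π) hθ0
  rw [hcos, cos_zero] at this
  exact lt_irrefl _ this

/-- every point of `Ω` outside the convergence domain lies on a divergence
line: an arc of circle of radius `1/(2H)` contained in `Ω` through `P`. -/
theorem stmt_7 (H : ℝ) (hH : 0 < H) (Ω : Set (ℝ × ℝ)) (hΩ : IsOpen Ω)
    (hΩconn : IsConnected Ω) (u : ℕ → ℝ × ℝ → ℝ)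
    (hu : ∀ n, IsCMCSolution H Ω (u n))
    (P : ℝ × ℝ) (hP : P ∈ Ω) (hPdiv : ¬ ∃ M : ℝ, ∀ n, Wgraph (u n) P ≤ M) :
    ∃ N : ℝ × ℝ, enorm2 N = 1 ∧
      IsDivergenceLine H Ω u
        (connectedComponentIn
          ({q : ℝ × ℝ | enorm2 (q - (P + (1 / (2 * H)) • N)) = 1 / (2 * H)} ∩ Ω) P) := by
  obtain ⟨φ, hφ, E₁, E₂, hE, h1, h2⟩ := exists_subseq hPdiv
  refine ⟨(-E₁, -E₂), ?_, ?_⟩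
  · rw [enorm2]
    simp only [neg_sq, hE, Real.sqrt_one]
  set K := {q : ℝ × ℝ | enorm2 (q - (P + (1 / (2 * H)) • ((-E₁, -E₂) : ℝ × ℝ))) = 1 / (2 * H)}
    with hKdef
  have hK : ∀ q, q ∈ K ↔
      (E₁ + 2 * H * (q.1 - P.1)) ^ 2 + (E₂ + 2 * H * (q.2 - P.2)) ^ 2 = 1 := fun q =>
    enorm2_circle hH
  have hPK : P ∈ K ∩ Ω := ⟨(hK P).2 (by simpa using hE), hP⟩
  have hCsub : connectedComponentIn (K ∩ Ω) P ⊆ K ∩ Ω := connectedComponentIn_subset _ _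
  have hPC : P ∈ connectedComponentIn (K ∩ Ω) P := mem_connectedComponentIn hPK
  -- `S Q`: the horizontal normals at `Q` converge to the outward normal of the circle
  let S : ℝ × ℝ → Prop := fun Q =>
    Tendsto (fun n => Xx (u (φ n)) Q) atTop (nhds (E₁ + 2 * H * (Q.1 - P.1))) ∧
    Tendsto (fun n => Xy (u (φ n)) Q) atTop (nhds (E₂ + 2 * H * (Q.2 - P.2)))
  have hSP : S P := by
    refine ⟨?_, ?_⟩
    · simpa using h1
    · simpa using h2
  have hloc : ∀ x ∈ connectedComponentIn (K ∩ Ω) P,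
      ∀ᶠ y in nhdsWithin x (connectedComponentIn (K ∩ Ω) P), (S x ↔ S y) := by
    intro x hx
    obtain ⟨ε, hε, hball⟩ := Metric.isOpen_iff.1 hΩ x (hCsub hx).2
    have hr : 0 < ε / 4 := by positivity
    obtain ⟨d, hd, hprop⟩ := propagate hH hr
    have hstep : ∀ p ∈ K, ∀ q ∈ K, Metric.ball p (2 * (ε / 4)) ⊆ Ω → ‖q - p‖ ≤ d → S p → S q := by
      intro p hp q hq hb hpq hSp
      have hq' := (hK q).1 hq
      have a1 : E₁ + 2 * H * (p.1 - P.1) + 2 * H * (q.1 - p.1) = E₁ + 2 * H * (q.1 - P.1) := by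
        ring
      have a2 : E₂ + 2 * H * (p.2 - P.2) + 2 * H * (q.2 - p.2) = E₂ + 2 * H * (q.2 - P.2) := by
        ring
      have := hprop (Q := q) hΩ (fun n => hu (φ n)) hb ((hK p).1 hp) (by rw [a1, a2]; exact hq')
        hpq hSp.1 hSp.2
      rw [a1, a2] at this
      exact this
    filter_upwards [self_mem_nhdsWithin,
      mem_nhdsWithin_of_mem_nhds (Metric.ball_mem_nhds x (lt_min hd hr))] with y hyC hyb
    rw [Metric.mem_ball, dist_eq_norm] at hyb
    have m1 := min_le_left d (ε / 4)
    have m2 := min_le_right d (ε / 4)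
    constructor
    · exact hstep x (hCsub hx).1 y (hCsub hyC).1
        ((Metric.ball_subset_ball (by linarith)).trans hball) (by linarith)
    · refine hstep y (hCsub hyC).1 x (hCsub hx).1
        ((Metric.ball_subset_ball' ?_).trans hball) (by rw [norm_sub_rev]; linarith)
      rw [dist_eq_norm]; linarith
  have hS : ∀ Q ∈ connectedComponentIn (K ∩ Ω) P, S Q := by
    intro Q hQ
    exact (isPreconnected_connectedComponentIn.induction₂ (fun x y => S x ↔ S y) hloc
      (fun _ _ _ _ _ _ => Iff.trans) (fun _ _ _ _ => Iff.symm) hPC hQ).1 hSP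
  refine ⟨P + (1 / (2 * H)) • ((-E₁, -E₂) : ℝ × ℝ), fun q hq => (hCsub hq).2,
    fun q hq => (hCsub hq).1, isConnected_connectedComponentIn_iff.2 hPK,
    component_nontrivial hH hE hΩ hP (fun q hq => (hK q).2 hq), φ, hφ, fun Q hQ => ?_⟩
  obtain ⟨s1, s2⟩ := hS Q hQ
  have s3 := tendsto_inv_W ((hK Q).1 (hCsub hQ).1) s1 s2
  refine (s1.neg.prodMk_nhds (s2.neg.prodMk_nhds s3)).congr' ?_ |>.trans (le_of_eq ?_)
  · filter_upwards with n
    simp only [normalVec, Xx, Xy, neg_div]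
  · congr 1
    simp only [Prod.fst_add, Prod.snd_add, Prod.smul_fst, Prod.smul_snd, smul_eq_mul]
    refine Prod.ext ?_ (Prod.ext ?_ rfl)
    · simp only; field_simp; ring
    · simp only; field_simp; ring
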